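/- For every ε > 0 and ε′ > 0 there exists N such that for all n ≥ N, all k dividing n with k ≥ (2+ε)·log₂ n, and all m with |m/n − 1/3| ≤ (log n)^{−1/3}: Σ_{S ∈ I_{0,m}} N(S)² ≤ (9+ε′)·(m!·2^m)²·|I_{0,m}|. -/

import Mathlib

/-- A ROD (rooted, ordered, directed) `k`-cycle factor on `{1,…,n}`: a sequence of
`n/k` directed cycles, each on exactly `k` vertices and rooted at its first entry, whose
vertex sets partition `{1,…,n}`. -/
def RODFactor (n k : ℕ) : Type :=
  {f : Fin (n / k) → Fin k → Fin n //
    Function.Bijective fun p : Fin (n / k) × Fin k => f p.1 p.2}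

/-- The underlying undirected graph of the ROD factor `F` contains every edge of `S`. -/
def RODContains {n k : ℕ} (F : RODFactor n k) (S : SimpleGraph (Fin n)) : Prop :=
  ∀ u v : Fin n, S.Adj u v → ∃ (c : Fin (n / k)) (i : Fin k),
    (F.1 c i = u ∧ F.1 c ⟨((i : ℕ) + 1) % k, Nat.mod_lt _ i.pos⟩ = v) ∨
    (F.1 c i = v ∧ F.1 c ⟨((i : ℕ) + 1) % k, Nat.mod_lt _ i.pos⟩ = u)

/-- `N(S)`: the number of ROD `k`-cycle factors containing the graph `S`. -/
noncomputable def NS {n : ℕ} (k : ℕ) (S : SimpleGraph (Fin n)) : ℕ :=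
  Nat.card {F : RODFactor n k // RODContains F S}

/-- The connected component `c` of `G` is a path on at least 2 vertices. -/
def IsPathComponent {V : Type*} (G : SimpleGraph V) (c : G.ConnectedComponent) : Prop :=
  ∃ (ℓ : ℕ) (v : Fin ℓ → V), 2 ≤ ℓ ∧ Function.Injective v ∧ Set.range v = c.supp ∧
    ∀ a b : Fin ℓ, G.Adj (v a) (v b) ↔ ((a : ℕ) + 1 = b ∨ (b : ℕ) + 1 = a)

/-- `G ∈ I_{0,m}`: `G` has exactly `m` connected components, each a path on at least 2
vertices. -/
def PathsGraph {n : ℕ} (G : SimpleGraph (Fin n)) (m : ℕ) : Prop :=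
  Nat.card G.ConnectedComponent = m ∧ ∀ c : G.ConnectedComponent, IsPathComponent G c

/-!
Cutting the `n / k` rooted cycles of a factor into directed pieces with `l` vertices, `l ≥ 2`, is
enumerated by the power `cyclePoly k ^ (n / k)`, where `pathPoly a` enumerates the ways to cut a
path on `a` vertices and `cyclePoly k = ∑ l, l * X l * pathPoly (k - l)`. If the paths of `S` have
sizes `s`, then `N(S)` is at most `2 ^ m`, for their directions, times the mixed derivative of this
power along `s`; and each `S` has `m! * 2 ^ m` framings, that is, numberings and directions of its
paths. So it remains to bound a sum of squared mixed derivatives over the words `s`.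

That sum is a squared `ℓ²` norm, and weighting a piece on `l` vertices by `(1 - θ) θ ^ (l - 2)`
changes it by a constant factor only, as all words have the same length and the same sum. Under
these weights drawing one piece at random does not increase the norm, by Jensen's inequality, and
the pieces drawn from a path form a renewal process. The difference
`pathPoly a * pathPoly b - pathPoly (a + 1) * pathPoly (b - 1)` is seen as a charge `1` at `a` and a
charge `-1` at `a + 1`: pieces are drawn until the charges meet and cancel, which shows that moving
a vertex from one path to another costs exponentially little. Hence a cycle can be merged into a
path, and the `n / k` cycles into one long cycle, with negligible loss; this is where
`k ≥ (2 + ε) log₂ n` enters. The polynomial of one long cycle has norm at most about `n / m ≈ 3`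
times the natural scale if `θ` makes `m` the most likely number of pieces, and squaring gives `9`.
-/

namespace PathHosting

open MvPolynomial Finset

section MixedDeriv

variable {σ R : Type*} [CommSemiring R]

/-- The mixed partial derivative of a polynomial along the letters of the word `s`, evaluated at
`0`. It reads the number of ways of placing labelled pieces of types `s 0, …, s (m - 1)` off the
polynomial that enumerates the unlabelled placements. -/
noncomputable def mixedDeriv : {m : ℕ} → (Fin m → σ) → MvPolynomial σ R →ₗ[R] R
  | 0, _ => lcoeff R 0
  | _ + 1, s => mixedDeriv (Fin.tail s) ∘ₗ (pderiv (s 0)).toLinearMap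

lemma mixedDeriv_X_mul_zero (l : σ) (P : MvPolynomial σ R) (s : Fin 0 → σ) :
    mixedDeriv s (X l * P) = 0 := by
  classical
  simp [mixedDeriv, coeff_X_mul']

lemma mixedDeriv_X_mul [DecidableEq σ] (l : σ) (P : MvPolynomial σ R) {m : ℕ}
    (s : Fin (m + 1) → σ) :
    mixedDeriv s (X l * P) = ∑ i, if s i = l then mixedDeriv (i.removeNth s) P else 0 := by
  induction m generalizing P with
  | zero =>
    by_cases h : s 0 = l
    · simp [mixedDeriv, Derivation.leibniz, h, coeff_X_mul']
    · simp [mixedDeriv, Derivation.leibniz, h, pderiv_X_of_ne (Ne.symm h), coeff_X_mul']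
  | succ m ih =>
    have leibniz : mixedDeriv s (X l * P) =
        (if s 0 = l then mixedDeriv (Fin.tail s) P else 0) +
          mixedDeriv (Fin.tail s) (X l * pderiv (s 0) P) := by
      by_cases h : s 0 = l
      · simp [mixedDeriv, Derivation.leibniz, h, add_comm]
      · simp [mixedDeriv, Derivation.leibniz, h, pderiv_X_of_ne (Ne.symm h)]
    have mixedDeriv_removeNth_succ (i : Fin (m + 1)) :
        mixedDeriv (i.succ.removeNth s) P =
          mixedDeriv (i.removeNth (Fin.tail s)) (pderiv (s 0) P) := by
      simp only [mixedDeriv, Fin.removeNth, Fin.tail_def, Fin.succ_succAbove_zero,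
        Fin.succ_succAbove_succ, LinearMap.comp_apply]
      rfl
    rw [leibniz, ih, Fin.sum_univ_succ (n := m + 1)]
    simp only [Fin.removeNth_zero, mixedDeriv_removeNth_succ]
    rfl

lemma mixedDeriv_sum_X_mul (A : Finset σ) (P : σ → MvPolynomial σ R) {m : ℕ}
    (s : Fin (m + 1) → σ) (hs : ∀ i, s i ∈ A) :
    mixedDeriv s (∑ l ∈ A, X l * P l) = ∑ i, mixedDeriv (i.removeNth s) (P (s i)) := by
  classical
  simp only [map_sum, mixedDeriv_X_mul]
  rw [sum_comm]
  exact sum_congr rfl fun i _ => by rw [sum_ite_eq, if_pos (hs i)]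

end MixedDeriv

section NonnegCoeff

variable {σ : Type*}

/-- The semiring of real polynomials with nonnegative coefficients. -/
def nonnegCoeff (σ : Type*) : Subsemiring (MvPolynomial σ ℝ) where
  carrier := {P | ∀ γ, 0 ≤ coeff γ P}
  mul_mem' hP hQ γ := by
    classical
    rw [coeff_mul]
    exact sum_nonneg fun _ _ => mul_nonneg (hP _) (hQ _)
  one_mem' γ := by
    classical
    rw [coeff_one]
    positivity
  add_mem' hP hQ γ := by
    rw [coeff_add]
    exact add_nonneg (hP γ) (hQ γ)
  zero_mem' _ := by simp

lemma X_mem_nonnegCoeff (l : σ) : X l ∈ nonnegCoeff σ := fun γ => by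
  classical
  rw [coeff_X]
  positivity

lemma smul_mem_nonnegCoeff {c : ℝ} (hc : 0 ≤ c) {P : MvPolynomial σ ℝ} (hP : P ∈ nonnegCoeff σ) :
    c • P ∈ nonnegCoeff σ := fun γ => by
  rw [coeff_smul]
  exact mul_nonneg hc (hP γ)

lemma pderiv_mem_nonnegCoeff {P : MvPolynomial σ ℝ} (hP : P ∈ nonnegCoeff σ) (l : σ) :
    pderiv l P ∈ nonnegCoeff σ := fun γ => by
  rw [coeff_pderiv]
  exact mul_nonneg (hP _) (by positivity)

lemma mixedDeriv_nonneg {P : MvPolynomial σ ℝ} (hP : P ∈ nonnegCoeff σ) {m : ℕ} (s : Fin m → σ) :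
    0 ≤ mixedDeriv s P := by
  induction m generalizing P with
  | zero => exact hP 0
  | succ m ih => exact ih (pderiv_mem_nonnegCoeff hP _) _

end NonnegCoeff

section WordNorm

variable {σ : Type*} (A : Finset σ) (w : σ → ℝ) (m : ℕ)

/-- The weighted `ℓ²` seminorm of the normalized mixed derivatives of order `m` along the words in
the alphabet `A`; the letter `l` carries the weight `w l ^ 2` in the square of the seminorm. -/
noncomputable def wordNorm : Seminorm ℝ (MvPolynomial σ ℝ) :=
  (normSeminorm ℝ (EuclideanSpace ℝ (Fin m → A))).comp
    ((WithLp.linearEquiv 2 ℝ ((Fin m → A) → ℝ)).symm.toLinearMap ∘ₗ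
      LinearMap.pi fun s => ((∏ i, w (s i)) / m.factorial) • mixedDeriv fun i => (s i : σ))

lemma wordNorm_sq (P : MvPolynomial σ ℝ) :
    wordNorm A w m P ^ 2 =
      ∑ s : Fin m → A, (∏ i, w (s i) ^ 2) *
        (mixedDeriv (fun i => (s i : σ)) P / m.factorial) ^ 2 := by
  rw [wordNorm, Seminorm.comp_apply, coe_normSeminorm, EuclideanSpace.norm_sq_eq]
  refine sum_congr rfl fun s _ => ?_
  rw [Real.norm_eq_abs, sq_abs, prod_pow, ← mul_pow, mul_div_assoc', ← div_mul_eq_mul_div]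
  rfl

variable {A w m}

lemma wordNorm_mono {P Q : MvPolynomial σ ℝ} (hP : P ∈ nonnegCoeff σ)
    (hPQ : Q - P ∈ nonnegCoeff σ) : wordNorm A w m P ≤ wordNorm A w m Q := by
  rw [← sq_le_sq₀ (apply_nonneg _ _) (apply_nonneg _ _), wordNorm_sq, wordNorm_sq]
  refine sum_le_sum fun s _ => ?_
  have hP0 := mixedDeriv_nonneg hP fun i => (s i : σ)
  have hPQ0 := mixedDeriv_nonneg hPQ fun i => (s i : σ)
  rw [map_sub, sub_nonneg] at hPQ0
  gcongr

lemma wordNorm_zero_sum_X_mul (P : σ → MvPolynomial σ ℝ) :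
    wordNorm A w 0 (∑ l ∈ A, X l * P l) = 0 := by
  rw [← sq_eq_zero_iff, wordNorm_sq]
  simp [mixedDeriv_X_mul_zero]

lemma sum_weight_mul_sq_removeNth (P : σ → MvPolynomial σ ℝ) (i : Fin (m + 1)) :
    ∑ s : Fin (m + 1) → A, (∏ j, w (s j) ^ 2) *
        (mixedDeriv (fun j => (i.removeNth s j : σ)) (P (s i)) / m.factorial) ^ 2 =
      ∑ l ∈ A, w l ^ 2 * wordNorm A w m (P l) ^ 2 := by
  rw [← (Fin.insertNthEquiv (fun _ => A) i).sum_comp, Fintype.sum_prod_type, ← sum_coe_sort A]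
  refine sum_congr rfl fun l _ => ?_
  simp only [wordNorm_sq, mul_sum, Fin.prod_univ_succAbove _ i, Fin.insertNthEquiv_apply,
    Fin.insertNth_apply_same, Fin.insertNth_apply_succAbove, Fin.removeNth, mul_assoc]

/-- Jensen's inequality for the average over the position of the first letter drawn. -/
lemma wordNorm_sum_X_mul_sq_le (P : σ → MvPolynomial σ ℝ) :
    wordNorm A w (m + 1) (∑ l ∈ A, X l * P l) ^ 2 ≤
      ∑ l ∈ A, w l ^ 2 * wordNorm A w m (P l) ^ 2 := by
  set D : (Fin (m + 1) → A) → Fin (m + 1) → ℝ := fun s i =>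
    mixedDeriv (fun j => (i.removeNth s j : σ)) (P (s i)) / m.factorial with hD
  have average (s : Fin (m + 1) → A) :
      mixedDeriv (fun i => (s i : σ)) (∑ l ∈ A, X l * P l) / (m + 1).factorial =
        (∑ i, D s i) / (m + 1 : ℕ) := by
    rw [mixedDeriv_sum_X_mul _ _ _ fun i => (s i).2, ← sum_div, div_div, Nat.factorial_succ,
      Nat.cast_mul, mul_comm (m.factorial : ℝ)]
    rfl
  have jensen (s : Fin (m + 1) → A) :
      ((∑ i, D s i) / (m + 1 : ℕ)) ^ 2 ≤ (∑ i, D s i ^ 2) / (m + 1 : ℕ) := by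
    simpa using sum_div_card_sq_le_sum_sq_div_card (s := univ) (f := D s)
  calc wordNorm A w (m + 1) (∑ l ∈ A, X l * P l) ^ 2
      ≤ ∑ s : Fin (m + 1) → A, (∏ i, w (s i) ^ 2) * ((∑ i, D s i ^ 2) / (m + 1 : ℕ)) := by
        rw [wordNorm_sq]
        refine sum_le_sum fun s _ => ?_
        rw [average s]
        gcongr
        exact jensen s
    _ = (∑ i, ∑ s : Fin (m + 1) → A, (∏ j, w (s j) ^ 2) * D s i ^ 2) / (m + 1 : ℕ) := by
        rw [sum_comm, sum_div]
        simp only [mul_sum, sum_div, mul_div_assoc]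
    _ = ∑ l ∈ A, w l ^ 2 * wordNorm A w m (P l) ^ 2 := by
        simp only [hD, sum_weight_mul_sq_removeNth, sum_const, card_univ, Fintype.card_fin,
          nsmul_eq_mul]
        exact mul_div_cancel_left₀ _ (Nat.cast_ne_zero.2 m.succ_ne_zero)

lemma wordNorm_zero_X_mul {l : σ} (P : MvPolynomial σ ℝ) : wordNorm A w 0 (X l * P) = 0 := by
  rw [← sq_eq_zero_iff, wordNorm_sq]
  simp [mixedDeriv_X_mul_zero]

lemma wordNorm_X_mul_le {l : σ} (hl : l ∈ A) (P : MvPolynomial σ ℝ) :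
    wordNorm A w (m + 1) (X l * P) ≤ |w l| * wordNorm A w m P := by
  classical
  have jensen := wordNorm_sum_X_mul_sq_le (A := A) (w := w) (m := m) (Pi.single l P)
  simp only [Pi.single_apply, mul_ite, mul_zero, apply_ite (wordNorm A w m), map_zero, ite_pow,
    ne_eq, OfNat.ofNat_ne_zero, not_false_eq_true, zero_pow, sum_ite_eq', if_pos hl] at jensen
  refine abs_le_of_sq_le_sq' ?_ (by positivity) |>.2
  rwa [mul_pow, sq_abs]

end WordNorm

section HostPolynomials

/-- The polynomial enumerating the ways to cut a path on `t` vertices into consecutive pieces with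
between `2` and `k` vertices, a piece on `l` vertices being recorded by the variable `X l`. It is
indexed by the integers so that the recursion needs no truncated subtraction; it vanishes for
`t < 0`. -/
noncomputable def pathPoly (k : ℕ) (t : ℤ) : MvPolynomial ℕ ℝ :=
  if t < 0 then 0 else if t = 0 then 1 else ∑ l ∈ (Icc 2 k).attach, X l.1 * pathPoly k (t - l.1)
termination_by t.toNat
decreasing_by
  have := (mem_Icc.1 l.2).1
  omega

variable {k : ℕ} {a b t : ℤ}

lemma pathPoly_of_neg (ht : t < 0) : pathPoly k t = 0 := by rw [pathPoly, if_pos ht]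

@[simp]
lemma pathPoly_zero : pathPoly k 0 = 1 := by rw [pathPoly, if_neg (lt_irrefl 0), if_pos rfl]

lemma pathPoly_rec (ht : 1 ≤ t) : pathPoly k t = ∑ l ∈ Icc 2 k, X l * pathPoly k (t - l) := by
  rw [pathPoly, if_neg (by omega), if_neg (by omega),
    sum_attach (Icc 2 k) fun l => X l * pathPoly k (t - l)]

lemma pathPoly_mem_nonnegCoeff (k : ℕ) (t : ℤ) : pathPoly k t ∈ nonnegCoeff ℕ := by
  induction h : t.toNat using Nat.strong_induction_on generalizing t with
  | _ n ih =>
    rcases lt_trichotomy t 0 with ht | rfl | ht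
    · rw [pathPoly_of_neg ht]
      exact zero_mem _
    · rw [pathPoly_zero]
      exact one_mem _
    · rw [pathPoly_rec ht]
      refine sum_mem fun l hl => mul_mem (X_mem_nonnegCoeff l) (ih _ ?_ _ rfl)
      have := (mem_Icc.1 hl).1
      omega

/-- The cuttings of a path in which a piece on `l` vertices straddles the vertices `a` and
`a + 1`; the index `i` is the number of its vertices before `a`. -/
noncomputable def straddleSum (k : ℕ) (a b : ℤ) (l : ℕ) : MvPolynomial ℕ ℝ :=
  ∑ i ∈ range (l - 1), pathPoly k (a - (i + 1)) * pathPoly k (b + (i + 1) - l)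

lemma straddleSum_succ {l : ℕ} (hl : 2 ≤ l) :
    straddleSum k (a + 1) b l + pathPoly k (a + 1 - l) * pathPoly k b =
      straddleSum k a (b + 1) l + pathPoly k a * pathPoly k (b + 1 - l) := by
  obtain ⟨d, rfl⟩ := Nat.exists_eq_add_of_le' hl
  set p : ℕ → MvPolynomial ℕ ℝ := fun i => pathPoly k (a - i) * pathPoly k (b + i + 1 - (d + 2))
    with hp
  have left : straddleSum k (a + 1) b (d + 2) = ∑ i ∈ range (d + 1), p i :=
    sum_congr rfl fun i _ => by
      rw [hp]
      push_cast
      ring_nf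
  have right : straddleSum k a (b + 1) (d + 2) = ∑ i ∈ range (d + 1), p (i + 1) :=
    sum_congr rfl fun i _ => by
      rw [hp]
      push_cast
      ring_nf
  have first : pathPoly k a * pathPoly k (b + 1 - (d + 2 : ℕ)) = p 0 := by simp [hp]
  have last : pathPoly k (a + 1 - (d + 2 : ℕ)) * pathPoly k b = p (d + 1) := by
    rw [hp]
    push_cast
    ring_nf
  rw [left, right, first, last, ← sum_range_succ, ← sum_range_succ']

lemma pathPoly_add (a : ℕ) (hb : 0 ≤ b) :
    pathPoly k (a + b) =
      pathPoly k a * pathPoly k b + ∑ l ∈ Icc 2 k, X l * straddleSum k a b l := by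
  induction a generalizing b with
  | zero =>
    have no_straddle (l : ℕ) : straddleSum k 0 b l = 0 :=
      sum_eq_zero fun i _ => by rw [pathPoly_of_neg (by omega), zero_mul]
    simp [no_straddle]
  | succ a ih =>
    have shift : pathPoly k a * pathPoly k (b + 1) + ∑ l ∈ Icc 2 k, X l * straddleSum k a (b + 1) l
        = pathPoly k (a + 1) * pathPoly k b + ∑ l ∈ Icc 2 k, X l * straddleSum k (a + 1) b l := by
      rw [pathPoly_rec (t := b + 1) (by omega), pathPoly_rec (t := (a : ℤ) + 1) (by omega),
        mul_sum, sum_mul, ← sum_add_distrib, ← sum_add_distrib]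
      refine sum_congr rfl fun l hl => ?_
      linear_combination -X l * straddleSum_succ (k := k) (a := a) (b := b) (mem_Icc.1 hl).1
    rw [Nat.cast_succ, ← shift, ← ih (by omega), add_assoc, add_comm b]

lemma pathPoly_add_sub_mul_mem_nonnegCoeff (k : ℕ) (a b : ℤ) :
    pathPoly k (a + b) - pathPoly k a * pathPoly k b ∈ nonnegCoeff ℕ := by
  by_cases h : 0 ≤ a ∧ 0 ≤ b
  · lift a to ℕ using h.1
    rw [pathPoly_add a h.2, add_sub_cancel_left]
    exact sum_mem fun l _ => mul_mem (X_mem_nonnegCoeff l) <| sum_mem fun i _ =>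
      mul_mem (pathPoly_mem_nonnegCoeff _ _) (pathPoly_mem_nonnegCoeff _ _)
  · have : pathPoly k a * pathPoly k b = 0 := by
      rcases not_and_or.1 h with ha | hb
      · rw [pathPoly_of_neg (not_le.1 ha), zero_mul]
      · rw [pathPoly_of_neg (not_le.1 hb), mul_zero]
    rw [this, sub_zero]
    exact pathPoly_mem_nonnegCoeff _ _

/-- The polynomial enumerating the ways to cut a rooted cycle on `k` vertices into paths with
between `2` and `k` vertices: the piece on `l` vertices that contains the root can be placed in `l`
ways. -/
noncomputable def cyclePoly (k : ℕ) : MvPolynomial ℕ ℝ :=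
  ∑ l ∈ Icc 2 k, X l * ((l : ℝ) • pathPoly k (k - l))

lemma cyclePoly_mem_nonnegCoeff (k : ℕ) : cyclePoly k ∈ nonnegCoeff ℕ :=
  sum_mem fun l _ => mul_mem (X_mem_nonnegCoeff l) <|
    smul_mem_nonnegCoeff l.cast_nonneg (pathPoly_mem_nonnegCoeff _ _)

/-- The error made when one vertex is moved from the second to the first of two paths. -/
noncomputable def exchangeDefect (k : ℕ) (a b : ℤ) : MvPolynomial ℕ ℝ :=
  pathPoly k a * pathPoly k b - pathPoly k (a + 1) * pathPoly k (b - 1)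

lemma sum_exchangeDefect (k : ℕ) (a b : ℤ) (d : ℕ) :
    ∑ j ∈ range d, exchangeDefect k (a + j) (b - j) =
      pathPoly k a * pathPoly k b - pathPoly k (a + d) * pathPoly k (b - d) := by
  have telescope := sum_range_sub' (fun j : ℕ => pathPoly k (a + j) * pathPoly k (b - j)) d
  simpa [exchangeDefect, add_assoc, sub_sub] using telescope

lemma cyclePoly_mul_sub (hk : 1 ≤ k) (hb : 0 ≤ b) :
    cyclePoly k * pathPoly k b - pathPoly k (b + k) =
      ∑ l ∈ Icc 2 k, X l * ∑ i ∈ range (l - 1), ∑ j ∈ range (l - 1 - i),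
        exchangeDefect k (k - l + j) (b - j) := by
  rw [add_comm b, pathPoly_add k hb, pathPoly_rec (t := (k : ℤ)) (by exact_mod_cast hk),
    cyclePoly, sum_mul, sum_mul, ← sum_add_distrib, ← sum_sub_distrib]
  refine sum_congr rfl fun l hl => ?_
  have hl := (mem_Icc.1 hl).1
  have exchange (i : ℕ) (hi : i ∈ range (l - 1)) :
      ∑ j ∈ range (l - 1 - i), exchangeDefect k (k - l + j) (b - j) =
        pathPoly k (k - l) * pathPoly k b -
          pathPoly k (k - (i + 1)) * pathPoly k (b + (i + 1) - l) := by
    have hi := mem_range.1 hi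
    rw [sum_exchangeDefect]
    congr 3 <;> omega
  have split : (l : ℝ) • pathPoly k (k - l) =
      (l - 1) • pathPoly k (k - l) + pathPoly k (k - l) := by
    rw [← succ_nsmul, Nat.sub_add_cancel (by omega), Nat.cast_smul_eq_nsmul]
  rw [sum_congr rfl exchange, sum_sub_distrib, sum_const, card_range, split, straddleSum,
    nsmul_eq_mul, nsmul_eq_mul]
  ring

end HostPolynomials

section Renewal

/-- The geometric law of the number of vertices of a random piece. Only the values at `2 ≤ l` are
meaningful. -/
noncomputable def partWeight (θ : ℝ) (l : ℕ) : ℝ := (1 - θ) * θ ^ (l - 2)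

/-- The probability that a sum of independent pieces with law `partWeight θ` visits `j`. -/
noncomputable def renewal (θ : ℝ) (j : ℕ) : ℝ := (1 - θ + (-(1 - θ)) ^ j) / (2 - θ)

variable {θ : ℝ}

lemma partWeight_nonneg (hθ : θ ∈ Set.Icc 0 1) (l : ℕ) : 0 ≤ partWeight θ l :=
  mul_nonneg (sub_nonneg.2 hθ.2) (pow_nonneg hθ.1 _)

lemma sum_partWeight_mul (θ : ℝ) (g : ℕ → ℝ) (i : ℕ) :
    ∑ l ∈ Icc 2 (i + 2), partWeight θ l * g (i + 2 - l) =
      ∑ x ∈ range (i + 1), (1 - θ) * θ ^ x * g (i - x) := by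
  refine sum_nbij' (· - 2) (· + 2) ?_ ?_ ?_ ?_ fun l hl => ?_
  any_goals
    simp only [mem_Icc, mem_range]
    omega
  have := (mem_Icc.1 hl).1
  rw [partWeight, show i + 2 - l = i - (l - 2) by omega]

lemma sum_partWeight_mul_succ (θ : ℝ) (g : ℕ → ℝ) (j : ℕ) :
    ∑ l ∈ Icc 2 (j + 2), partWeight θ l * g (j + 2 - l) =
      θ * ∑ l ∈ Icc 2 (j + 1), partWeight θ l * g (j + 1 - l) + (1 - θ) * g j := by
  rw [sum_partWeight_mul]
  cases j with
  | zero => simp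
  | succ j =>
    rw [sum_partWeight_mul, sum_range_succ', mul_sum]
    congr 1
    · refine sum_congr rfl fun x _ => ?_
      rw [Nat.add_sub_add_right]
      ring
    · simp

lemma sum_partWeight (θ : ℝ) (L : ℕ) : ∑ l ∈ Icc 2 (L + 1), partWeight θ l = 1 - θ ^ L := by
  cases L with
  | zero => simp
  | succ L => simpa [← mul_sum, mul_neg_geom_sum] using sum_partWeight_mul θ 1 L

lemma sum_partWeight_le_one (hθ : 0 ≤ θ) (L : ℕ) : ∑ l ∈ Icc 2 L, partWeight θ l ≤ 1 := by
  cases L with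
  | zero => simp
  | succ L => rw [sum_partWeight]; linarith [pow_nonneg hθ L]

lemma renewal_one (θ : ℝ) : renewal θ 1 = 0 := by simp [renewal]

lemma renewal_zero (hθ : θ < 2) : renewal θ 0 = 1 := by
  have : 2 - θ ≠ 0 := by linarith
  rw [renewal]
  field_simp
  ring

lemma renewal_add_two (hθ : θ < 2) (j : ℕ) :
    renewal θ (j + 2) = θ * renewal θ (j + 1) + (1 - θ) * renewal θ j := by
  have : 2 - θ ≠ 0 := by linarith
  simp only [renewal]
  field_simp
  ring

lemma renewal_succ_sub (hθ : θ < 2) (j : ℕ) :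
    renewal θ (j + 1) - renewal θ j = -(-(1 - θ)) ^ j := by
  have : 2 - θ ≠ 0 := by linarith
  simp only [renewal]
  field_simp
  ring

lemma sum_partWeight_mul_renewal (hθ : θ < 2) {j : ℕ} (hj : 1 ≤ j) :
    ∑ l ∈ Icc 2 j, partWeight θ l * renewal θ (j - l) = renewal θ j := by
  induction j, hj using Nat.le_induction with
  | base => simp [renewal_one]
  | succ j hj ih =>
    obtain ⟨i, rfl⟩ := Nat.exists_eq_add_of_le' hj
    rw [sum_partWeight_mul_succ, ih, renewal_add_two hθ]

/-- The negative correction term is what makes the induction close. -/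
lemma sum_partWeight_mul_renewal_sq_le_sub (hθ : θ ∈ Set.Icc 0.45 0.55) (j : ℕ) :
    ∑ l ∈ Icc 2 (j + 1), partWeight θ l * renewal θ (j + 1 - l) ^ 2 ≤
      renewal θ (j + 1) ^ 2 + 20 * θ ^ (j + 1) - 9 * (1 - θ) ^ (2 * (j + 1)) := by
  obtain ⟨hθ1, hθ2⟩ := hθ
  induction j with
  | zero =>
    norm_num [renewal_one]
    nlinarith
  | succ j ih =>
    set x := (1 - θ) ^ (2 * j) with hx
    have hx0 : 0 ≤ x := by
      have : 0 ≤ 1 - θ := by linarith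
      positivity
    have increment : (renewal θ (j + 1) - renewal θ j) ^ 2 = x := by
      rw [renewal_succ_sub (by linarith), neg_sq, ← pow_mul, mul_comm, pow_mul, neg_sq, ← pow_mul]
    have variance : θ * renewal θ (j + 1) ^ 2 + (1 - θ) * renewal θ j ^ 2 -
        (θ * renewal θ (j + 1) + (1 - θ) * renewal θ j) ^ 2 = θ * (1 - θ) * x := by
      rw [← increment]
      ring
    have numeric : θ * (1 - θ) + 9 * (1 - θ) ^ 4 ≤ 9 * θ * (1 - θ) ^ 2 := by
      have : θ + 9 * (1 - θ) ^ 3 ≤ 9 * θ * (1 - θ) := by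
        nlinarith [mul_nonneg (sub_nonneg.2 hθ1) (sub_nonneg.2 hθ2),
          mul_nonneg (mul_nonneg (sub_nonneg.2 hθ1) (sub_nonneg.2 hθ2)) (sub_nonneg.2 hθ2)]
      nlinarith [mul_le_mul_of_nonneg_left this (show 0 ≤ 1 - θ by linarith)]
    have pow_one : (1 - θ) ^ (2 * (j + 1)) = x * (1 - θ) ^ 2 := by ring
    have pow_two : (1 - θ) ^ (2 * (j + 1 + 1)) = x * (1 - θ) ^ 4 := by ring
    rw [sum_partWeight_mul_succ θ fun i => renewal θ i ^ 2, renewal_add_two (by linarith), pow_two,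
      pow_succ θ (j + 1)]
    rw [pow_one] at ih
    linarith [mul_le_mul_of_nonneg_left ih (show 0 ≤ θ by linarith),
      mul_le_mul_of_nonneg_left numeric hx0]

lemma sum_partWeight_mul_renewal_sq_le (hθ : θ ∈ Set.Icc 0.45 0.55) {j : ℕ} (hj : 1 ≤ j) :
    ∑ l ∈ Icc 2 j, partWeight θ l * renewal θ (j - l) ^ 2 ≤ renewal θ j ^ 2 + 20 * θ ^ j := by
  obtain ⟨i, rfl⟩ := Nat.exists_eq_add_of_le' hj
  have : 0 ≤ (1 - θ) ^ (2 * (i + 1)) := by rw [pow_mul]; positivity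
  linarith [sum_partWeight_mul_renewal_sq_le_sub hθ i]

/-- One random draw replaces a charge `ζ` at `j` by a charge `ζ` at `j - l`. The renewal equation
says that this preserves the expected potential, so only the variance term survives. -/
lemma sum_partWeight_mul_sq_draw_le (hθ : θ ∈ Set.Icc 0.45 0.55) (k : ℕ) {j : ℕ} (hj : 1 ≤ j)
    (U ζ : ℝ) :
    ∑ l ∈ Icc 2 k, partWeight θ l *
        (U + ζ * ((if l ≤ j then renewal θ (j - l) else 0) - renewal θ j)) ^ 2 ≤
      U ^ 2 + ζ ^ 2 * (20 * θ ^ j) := by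
  have hθ0 : 0 ≤ θ := by linarith [hθ.1]
  have hp := partWeight_nonneg (θ := θ) ⟨hθ0, by linarith [hθ.2]⟩
  set v : ℕ → ℝ := fun l => if l ≤ j then renewal θ (j - l) else 0 with hv
  obtain ⟨L, hL⟩ := Nat.exists_eq_add_of_le' (hj.trans (le_max_right k j))
  have restrict (e : ℕ) (he : e ≠ 0) : ∑ l ∈ Icc 2 (L + 1), partWeight θ l * v l ^ e =
      ∑ l ∈ Icc 2 j, partWeight θ l * renewal θ (j - l) ^ e := by
    symm
    refine sum_subset_zero_on_sdiff (Icc_subset_Icc_right (by omega)) (fun l hl => ?_)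
      fun l hl => ?_
    · have : ¬ l ≤ j := by simp only [mem_sdiff, mem_Icc] at hl; omega
      simp [hv, this, he]
    · simp [hv, (mem_Icc.1 hl).2]
  have mean : ∑ l ∈ Icc 2 (L + 1), partWeight θ l * v l = renewal θ j := by
    simpa [sum_partWeight_mul_renewal (hθ.2.trans_lt (by norm_num)) hj] using
      restrict 1 one_ne_zero
  have second_moment : ∑ l ∈ Icc 2 (L + 1), partWeight θ l * v l ^ 2 ≤
      renewal θ j ^ 2 + 20 * θ ^ j :=
    (restrict 2 two_ne_zero).trans_le (sum_partWeight_mul_renewal_sq_le hθ hj)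
  calc ∑ l ∈ Icc 2 k, partWeight θ l * (U + ζ * (v l - renewal θ j)) ^ 2
      ≤ ∑ l ∈ Icc 2 (L + 1), partWeight θ l * (U + ζ * (v l - renewal θ j)) ^ 2 :=
        sum_le_sum_of_subset_of_nonneg (Icc_subset_Icc_right (by omega))
          fun l _ _ => mul_nonneg (hp l) (sq_nonneg _)
    _ = (U - ζ * renewal θ j) ^ 2 * ∑ l ∈ Icc 2 (L + 1), partWeight θ l +
        2 * (U - ζ * renewal θ j) * ζ * ∑ l ∈ Icc 2 (L + 1), partWeight θ l * v l +
        ζ ^ 2 * ∑ l ∈ Icc 2 (L + 1), partWeight θ l * v l ^ 2 := by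
        simp only [mul_sum, ← sum_add_distrib]
        exact sum_congr rfl fun l _ => by ring
    _ ≤ (U - ζ * renewal θ j) ^ 2 * 1 + 2 * (U - ζ * renewal θ j) * ζ * renewal θ j +
        ζ ^ 2 * (renewal θ j ^ 2 + 20 * θ ^ j) := by
        rw [mean]
        gcongr
        exact sum_partWeight_le_one hθ0 _
    _ = U ^ 2 + ζ ^ 2 * (20 * θ ^ j) := by ring

end Renewal

section PathNorm

/-- The word seminorm over the piece sizes `2, …, k`, weighted by the geometric law. -/
noncomputable def pathNorm (θ : ℝ) (k m : ℕ) : Seminorm ℝ (MvPolynomial ℕ ℝ) :=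
  wordNorm (Icc 2 k) (fun l => √(partWeight θ l)) m

variable {θ : ℝ} {k m : ℕ}

lemma pathNorm_zero_sum_X_mul (P : ℕ → MvPolynomial ℕ ℝ) :
    pathNorm θ k 0 (∑ l ∈ Icc 2 k, X l * P l) = 0 :=
  wordNorm_zero_sum_X_mul P

lemma pathNorm_sum_X_mul_sq_le (hθ : θ ∈ Set.Icc 0 1) (P : ℕ → MvPolynomial ℕ ℝ) :
    pathNorm θ k (m + 1) (∑ l ∈ Icc 2 k, X l * P l) ^ 2 ≤
      ∑ l ∈ Icc 2 k, partWeight θ l * pathNorm θ k m (P l) ^ 2 := by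
  simpa only [pathNorm, Real.sq_sqrt (partWeight_nonneg hθ _)] using
    wordNorm_sum_X_mul_sq_le (w := fun l => √(partWeight θ l)) P

lemma pathNorm_sum_X_mul_sq_le_of_forall (hθ : θ ∈ Set.Icc 0 1) {P : ℕ → MvPolynomial ℕ ℝ}
    {B : ℕ → ℝ} (hB : ∀ m, ∀ l ∈ Icc 2 k, pathNorm θ k m (P l) ^ 2 ≤ B l) :
    pathNorm θ k m (∑ l ∈ Icc 2 k, X l * P l) ^ 2 ≤ ∑ l ∈ Icc 2 k, partWeight θ l * B l := by
  cases m with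
  | zero =>
    rw [pathNorm_zero_sum_X_mul, zero_pow two_ne_zero]
    exact sum_nonneg fun l hl =>
      mul_nonneg (partWeight_nonneg hθ l) ((sq_nonneg _).trans (hB 0 l hl))
  | succ m =>
    refine (pathNorm_sum_X_mul_sq_le hθ P).trans (sum_le_sum fun l hl => ?_)
    exact mul_le_mul_of_nonneg_left (hB m l hl) (partWeight_nonneg hθ l)

lemma pathNorm_mono {P Q : MvPolynomial ℕ ℝ} (hP : P ∈ nonnegCoeff ℕ)
    (hPQ : Q - P ∈ nonnegCoeff ℕ) : pathNorm θ k m P ≤ pathNorm θ k m Q :=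
  wordNorm_mono hP hPQ

end PathNorm

section Charges

/-- The superposition, with charges `z τ`, of the pairs of paths on `τ` and `W - τ` vertices. -/
noncomputable def splitPoly (k : ℕ) (z : ℕ →₀ ℝ) (W : ℤ) : MvPolynomial ℕ ℝ :=
  Finsupp.linearCombination ℝ (fun τ : ℕ => pathPoly k τ * pathPoly k (W - τ)) z

/-- The probability that the renewal process running down from `τ` visits `s`. -/
noncomputable def renewalKernel (θ : ℝ) (s τ : ℕ) : ℝ := if s ≤ τ then renewal θ (τ - s) else 0

/-- The potential at `s` of the charges `z`: the expected charge that visits `s`. -/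
noncomputable def potential (θ : ℝ) (z : ℕ →₀ ℝ) (s : ℕ) : ℝ :=
  Finsupp.linearCombination ℝ (renewalKernel θ s) z

/-- The total variation of the charges `z`. -/
noncomputable def variation (z : ℕ →₀ ℝ) : ℝ := z.sum fun _ c => |c|

/-- Moves a charge `ζ` from `t` to `t - l`; it is lost when `t < l`. -/
noncomputable def drawCharge (z : ℕ →₀ ℝ) (t : ℕ) (ζ : ℝ) (l : ℕ) : ℕ →₀ ℝ :=
  z - Finsupp.single t ζ + if l ≤ t then Finsupp.single (t - l) ζ else 0

variable {k t i l s : ℕ} {z : ℕ →₀ ℝ} {ζ θ : ℝ} {W : ℤ}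

lemma linearCombination_drawCharge {E : Type*} [AddCommGroup E] [Module ℝ E] (g : ℕ → E) :
    Finsupp.linearCombination ℝ g (drawCharge z t ζ l) =
      Finsupp.linearCombination ℝ g z - ζ • g t + if l ≤ t then ζ • g (t - l) else 0 := by
  simp [drawCharge, apply_ite (Finsupp.linearCombination ℝ g)]

lemma splitPoly_drawCharge : splitPoly k (drawCharge z t ζ l) W =
    splitPoly k z W - ζ • (pathPoly k t * pathPoly k (W - t)) +
      ζ • (pathPoly k (t - l) * pathPoly k (W - (t - l))) := by
  rw [splitPoly, linearCombination_drawCharge]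
  congr 1
  split_ifs with h
  · rw [Nat.cast_sub h]
  · rw [pathPoly_of_neg (by omega), zero_mul, smul_zero]

lemma sum_X_mul_splitPoly (hz : z.support ⊆ range (t + 1)) (hW : t < W) :
    ∑ l ∈ Icc 2 k, X l * splitPoly k z (W - l) = splitPoly k z W := by
  simp only [splitPoly, Finsupp.linearCombination_apply, Finsupp.sum, mul_sum]
  rw [sum_comm]
  refine sum_congr rfl fun τ hτ => ?_
  have hτ := mem_range.1 (hz hτ)
  rw [pathPoly_rec (t := W - τ) (by omega), mul_sum, smul_sum]
  refine sum_congr rfl fun l _ => ?_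
  rw [mul_smul_comm, mul_left_comm, sub_right_comm]

lemma splitPoly_eq_sum_drawCharge (hz : z.support ⊆ range (t + 1)) (ht : 1 ≤ t) (hW : t < W) :
    splitPoly k z W = ∑ l ∈ Icc 2 k, X l * splitPoly k (drawCharge z t ζ l) (W - l) := by
  have from_right : ∑ l ∈ Icc 2 k, X l * ζ • (pathPoly k t * pathPoly k (W - l - t)) =
      ζ • (pathPoly k t * pathPoly k (W - t)) := by
    rw [pathPoly_rec (t := W - t) (by omega), mul_sum, smul_sum]
    refine sum_congr rfl fun l _ => ?_
    rw [mul_smul_comm, mul_left_comm, sub_right_comm]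
  have from_left : ∑ l ∈ Icc 2 k, X l * ζ • (pathPoly k (t - l) * pathPoly k (W - l - (t - l))) =
      ζ • (pathPoly k t * pathPoly k (W - t)) := by
    rw [pathPoly_rec (t := (t : ℤ)) (by omega), sum_mul, smul_sum]
    refine sum_congr rfl fun l _ => ?_
    rw [mul_smul_comm, mul_assoc, sub_sub_sub_cancel_right]
  simp only [splitPoly_drawCharge, mul_add, mul_sub, sum_add_distrib, sum_sub_distrib]
  rw [sum_X_mul_splitPoly hz hW, from_right, from_left, sub_add_cancel]

lemma potential_drawCharge (hs : s ≤ t) : potential θ (drawCharge z t ζ l) s = potential θ z s +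
    ζ * ((if l ≤ t - s then renewal θ (t - s - l) else 0) - renewal θ (t - s)) := by
  rw [potential, linearCombination_drawCharge, ← potential]
  simp only [renewalKernel, smul_eq_mul, if_pos hs]
  by_cases h : l ≤ t - s
  · rw [if_pos h, if_pos (by omega), if_pos (by omega), Nat.sub_right_comm]
    ring
  · by_cases h' : l ≤ t
    · rw [if_neg h, if_pos h', if_neg (by omega)]
      ring
    · rw [if_neg h, if_neg h']
      ring

lemma variation_eq_sum {A : Finset ℕ} (hz : z.support ⊆ A) : variation z = ∑ τ ∈ A, |z τ| :=
  Finsupp.sum_of_support_subset z hz _ fun _ _ => abs_zero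

lemma variation_single (t : ℕ) (ζ : ℝ) : variation (Finsupp.single t ζ) = |ζ| :=
  Finsupp.sum_single_index abs_zero

lemma variation_add_le (z z' : ℕ →₀ ℝ) : variation (z + z') ≤ variation z + variation z' := by
  rw [variation_eq_sum Finsupp.support_add, variation_eq_sum subset_union_left,
    variation_eq_sum subset_union_right, ← sum_add_distrib]
  exact sum_le_sum fun τ _ => abs_add_le _ _

lemma variation_sub_single (hz : z t = (i + 1) * ζ) :
    variation (z - Finsupp.single t ζ) = variation z - |ζ| := by
  have erase_eq : (z - Finsupp.single t ζ).erase t = z.erase t := by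
    ext τ
    by_cases h : τ = t <;> simp [h, Finsupp.erase]
  have at_t : |z t| = |(z - Finsupp.single t ζ) t| + |ζ| := by
    have : (z - Finsupp.single t ζ) t = i * ζ := by
      rw [Finsupp.sub_apply, Finsupp.single_eq_same, hz]
      ring
    rw [this, hz, abs_mul, abs_mul, abs_of_nonneg (by positivity : (0 : ℝ) ≤ i + 1), Nat.abs_cast]
    ring
  have split_t (y : ℕ →₀ ℝ) : variation y = |y t| + variation (y.erase t) :=
    (Finsupp.add_sum_erase' y t _ fun _ => abs_zero).symm
  rw [split_t z, split_t (z - _), erase_eq, at_t]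
  ring

lemma variation_drawCharge_le (hz : z t = (i + 1) * ζ) :
    variation (drawCharge z t ζ l) ≤ variation z := by
  have drawn : variation (if l ≤ t then Finsupp.single (t - l) ζ else 0) ≤ |ζ| := by
    split_ifs
    · rw [variation_single]
    · rw [variation, Finsupp.sum_zero_index]
      positivity
  have := variation_add_le (z - Finsupp.single t ζ) (if l ≤ t then Finsupp.single (t - l) ζ else 0)
  rw [variation_sub_single hz] at this
  rw [drawCharge]
  linarith

lemma drawCharge_apply_self (hl : l ≠ 0) (hz : z t = (i + 1) * ζ) :
    drawCharge z t ζ l t = i * ζ := by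
  have : (if l ≤ t then Finsupp.single (t - l) ζ else 0) t = 0 := by
    split_ifs
    · exact Finsupp.single_eq_of_ne (by omega)
    · rfl
  rw [drawCharge, Finsupp.add_apply, this, Finsupp.sub_apply, Finsupp.single_eq_same, hz]
  ring

lemma support_drawCharge_subset (hz : z.support ⊆ range (t + 1)) :
    (drawCharge z t ζ l).support ⊆ range (t + 1) := by
  have single_subset {τ : ℕ} (hτ : τ ≤ t) : (Finsupp.single τ ζ).support ⊆ range (t + 1) :=
    Finsupp.support_single_subset.trans (by simpa using Nat.lt_succ_of_le hτ)
  refine Finsupp.support_add.trans (union_subset (Finsupp.support_sub.trans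
    (union_subset hz (single_subset le_rfl))) ?_)
  split_ifs
  · exact single_subset (Nat.sub_le t l)
  · simp

lemma pathNorm_splitPoly_mul_sq_le {m : ℕ} (z : ℕ →₀ ℝ) {P : MvPolynomial ℕ ℝ}
    (hP : P ∈ nonnegCoeff ℕ) {M : ℝ} (hM : pathNorm θ k m (pathPoly k W * P) ^ 2 ≤ M) :
    pathNorm θ k m (splitPoly k z W * P) ^ 2 ≤ variation z ^ 2 * M := by
  have split_le (τ : ℕ) : pathNorm θ k m (pathPoly k τ * pathPoly k (W - τ) * P) ≤
      pathNorm θ k m (pathPoly k W * P) := by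
    refine pathNorm_mono (mul_mem (mul_mem (pathPoly_mem_nonnegCoeff _ _)
      (pathPoly_mem_nonnegCoeff _ _)) hP) ?_
    rw [← sub_mul]
    refine mul_mem ?_ hP
    simpa only [add_sub_cancel] using pathPoly_add_sub_mul_mem_nonnegCoeff k τ (W - τ)
  have triangle : pathNorm θ k m (splitPoly k z W * P) ≤
      variation z * pathNorm θ k m (pathPoly k W * P) := by
    rw [splitPoly, Finsupp.linearCombination_apply, Finsupp.sum, sum_mul, variation, Finsupp.sum,
      sum_mul]
    refine (le_sum_of_subadditive _ (map_zero _).le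
      (map_add_le_add (pathNorm θ k m)) _ _).trans (sum_le_sum fun τ _ => ?_)
    rw [smul_mul_assoc, map_smul_eq_mul, Real.norm_eq_abs]
    exact mul_le_mul_of_nonneg_left (split_le τ) (abs_nonneg _)
  calc pathNorm θ k m (splitPoly k z W * P) ^ 2
      ≤ (variation z * pathNorm θ k m (pathPoly k W * P)) ^ 2 := by gcongr
    _ ≤ variation z ^ 2 * M := by rw [mul_pow]; gcongr

lemma renewalKernel_eq (hθ : θ < 2) {τ : ℕ} (hτ : τ ≤ t) :
    renewalKernel θ s τ =
      (if τ = s then 1 else 0) + ∑ l ∈ Icc 2 t, partWeight θ l * renewalKernel θ (s + l) τ := by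
  rcases lt_trichotomy s τ with h | rfl | h
  · rw [renewalKernel, if_pos h.le, if_neg h.ne', zero_add,
      ← sum_partWeight_mul_renewal hθ (j := τ - s) (by omega)]
    refine sum_subset_zero_on_sdiff (Icc_subset_Icc_right (by omega)) (fun l hl => ?_)
      fun l hl => ?_
    · simp only [mem_sdiff, mem_Icc] at hl
      rw [renewalKernel, if_neg (by omega), mul_zero]
    · have := mem_Icc.1 hl
      rw [renewalKernel, if_pos (by omega), Nat.sub_sub]
  · rw [sum_eq_zero fun l hl => ?_]
    · simp [renewalKernel, renewal_zero hθ]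
    · have := mem_Icc.1 hl
      rw [renewalKernel, if_neg (by omega), mul_zero]
  · rw [sum_eq_zero fun l _ => ?_]
    · simp [renewalKernel, h, h.ne]
    · rw [renewalKernel, if_neg (by omega), mul_zero]

lemma potential_eq (hθ : θ < 2) (hz : z.support ⊆ range (t + 1)) (s : ℕ) :
    potential θ z s = z s + ∑ l ∈ Icc 2 t, partWeight θ l * potential θ z (s + l) := by
  simp only [potential, Finsupp.linearCombination_apply, Finsupp.sum, smul_eq_mul, mul_sum]
  rw [sum_comm, ← sub_eq_iff_eq_add, ← sum_sub_distrib]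
  have (τ : ℕ) (hτ : τ ∈ z.support) : z τ * renewalKernel θ s τ -
      ∑ l ∈ Icc 2 t, partWeight θ l * (z τ * renewalKernel θ (s + l) τ) =
        if τ = s then z τ else 0 := by
    rw [renewalKernel_eq hθ (Nat.lt_succ_iff.1 (mem_range.1 (hz hτ)))]
    simp only [mul_left_comm (partWeight θ _), ← mul_sum]
    split_ifs <;> ring
  rw [sum_congr rfl this, sum_ite_eq']
  split_ifs with h
  · rfl
  · exact (Finsupp.notMem_support_iff.1 h).symm

lemma potential_of_lt (hz : z.support ⊆ range (t + 1)) (hs : t < s) : potential θ z s = 0 := by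
  rw [potential, Finsupp.linearCombination_apply]
  refine sum_eq_zero fun τ hτ => ?_
  have := mem_range.1 (hz hτ)
  simp only [renewalKernel, if_neg (by omega : ¬s ≤ τ), smul_zero]

lemma potential_self (hθ : θ < 2) (hz : z.support ⊆ range (t + 1)) : potential θ z t = z t := by
  rw [potential_eq hθ hz, add_eq_left]
  refine sum_eq_zero fun l hl => ?_
  have := (mem_Icc.1 hl).1
  rw [potential_of_lt hz (by omega), mul_zero]

lemma variation_le_two_mul_sum_potential (hθ : θ ∈ Set.Icc 0 1) (hz : z.support ⊆ range (t + 1)) :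
    variation z ≤ 2 * ∑ s ∈ range (t + 1), |potential θ z s| := by
  have hp := partWeight_nonneg hθ
  have shifted (l : ℕ) : ∑ s ∈ range (t + 1), |potential θ z (s + l)| ≤
      ∑ s ∈ range (t + 1), |potential θ z s| :=
    calc ∑ s ∈ range (t + 1), |potential θ z (s + l)|
        ≤ ∑ s ∈ range (l + (t + 1)), |potential θ z s| := by
          rw [sum_range_add _ l]
          simp only [add_comm l]
          exact le_add_of_nonneg_left (sum_nonneg fun s _ => abs_nonneg (potential θ z s))
      _ = ∑ s ∈ range (t + 1), |potential θ z s| := by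
          refine (sum_subset (range_mono (by omega)) fun s _ hs => ?_).symm
          rw [potential_of_lt hz (by simpa using hs), abs_zero]
  have pointwise (s : ℕ) : |z s| ≤
      |potential θ z s| + ∑ l ∈ Icc 2 t, partWeight θ l * |potential θ z (s + l)| := by
    rw [← sub_eq_iff_eq_add.2 (potential_eq (by linarith [hθ.2]) hz s)]
    refine (abs_sub _ _).trans (add_le_add_right ((abs_sum_le_sum_abs _ _).trans_eq ?_) _)
    exact sum_congr rfl fun l _ => by rw [abs_mul, abs_of_nonneg (hp l)]
  have total_nonneg : 0 ≤ ∑ s ∈ range (t + 1), |potential θ z s| :=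
    sum_nonneg fun _ _ => abs_nonneg _
  calc variation z = ∑ s ∈ range (t + 1), |z s| := variation_eq_sum hz
    _ ≤ ∑ s ∈ range (t + 1), |potential θ z s| +
        ∑ l ∈ Icc 2 t, partWeight θ l * ∑ s ∈ range (t + 1), |potential θ z (s + l)| := by
        simp only [mul_sum]
        rw [sum_comm, ← sum_add_distrib]
        exact sum_le_sum fun s _ => pointwise s
    _ ≤ ∑ s ∈ range (t + 1), |potential θ z s| +
        (∑ l ∈ Icc 2 t, partWeight θ l) * ∑ s ∈ range (t + 1), |potential θ z s| := by
        rw [sum_mul]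
        exact add_le_add_right
          (sum_le_sum fun l _ => mul_le_mul_of_nonneg_left (shifted l) (hp l)) _
    _ ≤ 2 * ∑ s ∈ range (t + 1), |potential θ z s| := by
        rw [two_mul]
        exact add_le_add_right (mul_le_of_le_one_left total_nonneg (sum_partWeight_le_one hθ.1 t)) _

end Charges

section DrawBudget

/-- The parameters of the drawing argument: `θ` is the ratio of the geometric law of the pieces,
`lam` is the rate at which the weights of the levels decay, and the charge of a level is drawn in
`q` equal parts. -/
structure DrawParams (θ lam : ℝ) (q : ℕ) : Prop where
  theta_mem : θ ∈ Set.Icc 0.45 0.55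
  theta_lt_lam : θ < lam
  lam_le : lam ≤ 0.9
  theta_le_mul : 20 * θ ≤ q * (lam - θ)

/-- The weight of the level `s`; the levels up to `t₀` all have weight `1`. -/
noncomputable def levelWeight (lam : ℝ) (t₀ s : ℕ) : ℝ := lam ^ (s - t₀)

/-- The weighted second moment that the draw of a unit charge at `t` adds to the potential. -/
noncomputable def spread (θ lam : ℝ) (t₀ t : ℕ) : ℝ :=
  ∑ s ∈ range t, levelWeight lam t₀ s * (20 * θ ^ (t - s))

/-- The weighted second moment of the potential of the charges `z` below the level `t`. -/
noncomputable def energy (θ lam : ℝ) (t₀ : ℕ) (z : ℕ →₀ ℝ) (t : ℕ) : ℝ :=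
  ∑ s ∈ range t, levelWeight lam t₀ s * potential θ z s ^ 2

/-- The bound kept for charges `z` on `[0, t]` when `i` parts `ζ` remain to be drawn at `t`, at most
`n` draws remain in all, and `e + t` vertices remain to be cut when the drawing has reached `t`. The
last term pays for running out of vertices: each draw multiplies `(2 / 3) ^ e` by at most `8` in
mean. -/
noncomputable def drawBudget (θ lam : ℝ) (t₀ : ℕ) (z : ℕ →₀ ℝ) (t i : ℕ) (ζ : ℝ) (n : ℕ)
    (e : ℤ) : ℝ :=
  4 * (t₀ + 1) * (energy θ lam t₀ z t + i * ζ ^ 2 * spread θ lam t₀ t) + 4 * 8 ^ n * (2 / 3) ^ e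

variable {θ lam ζ : ℝ} {q k t₀ t i n s a : ℕ} {z : ℕ →₀ ℝ} {e : ℤ}

namespace DrawParams

lemma theta_mem_unit (H : DrawParams θ lam q) : θ ∈ Set.Icc 0 1 := by
  obtain ⟨h, h'⟩ := H.theta_mem
  exact ⟨by linarith, by linarith⟩

lemma lam_nonneg (H : DrawParams θ lam q) : 0 ≤ lam := H.theta_mem_unit.1.trans H.theta_lt_lam.le

lemma lam_le_one (H : DrawParams θ lam q) : lam ≤ 1 := H.lam_le.trans (by norm_num)

lemma q_pos (H : DrawParams θ lam q) : 0 < q := by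
  refine Nat.pos_of_ne_zero ?_
  rintro rfl
  have := H.theta_le_mul
  rw [Nat.cast_zero, zero_mul] at this
  linarith [H.theta_mem.1]

end DrawParams

lemma levelWeight_nonneg (hlam : 0 ≤ lam) (t₀ s : ℕ) : 0 ≤ levelWeight lam t₀ s :=
  pow_nonneg hlam _

lemma levelWeight_of_le (hs : s ≤ t₀) : levelWeight lam t₀ s = 1 := by
  rw [levelWeight, Nat.sub_eq_zero_of_le hs, pow_zero]

lemma levelWeight_succ (hs : t₀ ≤ s) :
    levelWeight lam t₀ (s + 1) = lam * levelWeight lam t₀ s := by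
  rw [levelWeight, Nat.sub_add_comm hs, pow_succ', levelWeight]

lemma mul_levelWeight_le (hlam : lam ≤ 1) (t₀ s : ℕ) :
    lam * levelWeight lam t₀ s ≤ levelWeight lam t₀ (s + 1) := by
  by_cases hs : t₀ ≤ s
  · exact (levelWeight_succ hs).ge
  · simpa only [levelWeight_of_le (le_of_not_ge hs), levelWeight_of_le (not_le.1 hs), mul_one]

lemma spread_nonneg (H : DrawParams θ lam q) (t₀ t : ℕ) : 0 ≤ spread θ lam t₀ t :=
  sum_nonneg fun s _ => mul_nonneg (levelWeight_nonneg H.lam_nonneg t₀ s)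
    (mul_nonneg (by norm_num) (pow_nonneg H.theta_mem_unit.1 _))

lemma energy_nonneg (hlam : 0 ≤ lam) (t₀ : ℕ) (z : ℕ →₀ ℝ) (t : ℕ) : 0 ≤ energy θ lam t₀ z t :=
  sum_nonneg fun s _ => mul_nonneg (levelWeight_nonneg hlam t₀ s) (sq_nonneg _)

lemma spread_succ (θ lam : ℝ) (t₀ t : ℕ) :
    spread θ lam t₀ (t + 1) = θ * spread θ lam t₀ t + levelWeight lam t₀ t * (20 * θ) := by
  rw [spread, sum_range_succ, spread, mul_sum, Nat.add_sub_cancel_left, pow_one]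
  congr 1
  refine sum_congr rfl fun s hs => ?_
  rw [Nat.sub_add_comm (mem_range.1 hs).le, pow_succ]
  ring

lemma spread_le (H : DrawParams θ lam q) (t₀ t : ℕ) :
    spread θ lam t₀ t ≤ q * levelWeight lam t₀ t := by
  induction t with
  | zero => simpa [spread] using mul_nonneg q.cast_nonneg (levelWeight_nonneg H.lam_nonneg t₀ 0)
  | succ t ih =>
    calc spread θ lam t₀ (t + 1)
        = θ * spread θ lam t₀ t + 20 * θ * levelWeight lam t₀ t := by rw [spread_succ]; ring
      _ ≤ θ * (q * levelWeight lam t₀ t) + q * (lam - θ) * levelWeight lam t₀ t :=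
        add_le_add (mul_le_mul_of_nonneg_left ih H.theta_mem_unit.1)
          (mul_le_mul_of_nonneg_right H.theta_le_mul (levelWeight_nonneg H.lam_nonneg t₀ t))
      _ = q * (lam * levelWeight lam t₀ t) := by ring
      _ ≤ q * levelWeight lam t₀ (t + 1) :=
        mul_le_mul_of_nonneg_left (mul_levelWeight_le H.lam_le_one t₀ t) q.cast_nonneg

lemma energy_add_spread_le (H : DrawParams θ lam q) (hz : z.support ⊆ range (t + 1)) :
    energy θ lam t₀ z t + q * (z t / q) ^ 2 * spread θ lam t₀ t ≤ energy θ lam t₀ z (t + 1) := by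
  have hq : (0 : ℝ) < q := Nat.cast_pos.2 H.q_pos
  rw [energy, energy, sum_range_succ, potential_self (by linarith [H.theta_mem.2]) hz]
  refine add_le_add_right ?_ _
  calc q * (z t / q) ^ 2 * spread θ lam t₀ t
      ≤ q * (z t / q) ^ 2 * (q * levelWeight lam t₀ t) := by gcongr; exact spread_le H t₀ t
    _ = levelWeight lam t₀ t * z t ^ 2 := by field_simp

lemma sum_partWeight_mul_three_halves_pow_le (hθ : θ ∈ Set.Icc 0.45 0.55) (k : ℕ) :
    ∑ l ∈ Icc 2 k, partWeight θ l * (3 / 2) ^ l ≤ 8 := by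
  have hθ0 (k : ℕ) : 0 ≤ (3 / 2 * θ) ^ k := pow_nonneg (by linarith [hθ.1]) k
  have geometric (k : ℕ) :
      ∑ l ∈ Icc 2 (k + 1), partWeight θ l * (3 / 2) ^ l ≤ 8 - 8 * (3 / 2 * θ) ^ k := by
    induction k with
    | zero => simp
    | succ k ih =>
      have top : partWeight θ (k + 2) * (3 / 2) ^ (k + 2) =
          9 / 4 * (1 - θ) * (3 / 2 * θ) ^ k := by
        rw [partWeight, Nat.add_sub_cancel, mul_pow]
        ring
      rw [sum_Icc_succ_top (by omega), top, pow_succ (3 / 2 * θ)]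
      nlinarith [hθ0 k, hθ.2]
  cases k with
  | zero => simp
  | succ k => linarith [geometric k, hθ0 k]

lemma sum_partWeight_mul_energy_drawCharge_le (H : DrawParams θ lam q) (k t₀ : ℕ) (z : ℕ →₀ ℝ)
    (t : ℕ) (ζ : ℝ) :
    ∑ l ∈ Icc 2 k, partWeight θ l * energy θ lam t₀ (drawCharge z t ζ l) t ≤
      energy θ lam t₀ z t + ζ ^ 2 * spread θ lam t₀ t := by
  simp only [energy, spread, mul_sum]
  rw [sum_comm, ← sum_add_distrib]
  refine sum_le_sum fun s hs => ?_
  have hs := mem_range.1 hs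
  simp only [potential_drawCharge hs.le, mul_left_comm (partWeight θ _), ← mul_sum]
  rw [mul_left_comm (ζ ^ 2), ← mul_add]
  exact mul_le_mul_of_nonneg_left (sum_partWeight_mul_sq_draw_le H.theta_mem k (by omega) _ ζ)
    (levelWeight_nonneg H.lam_nonneg t₀ s)

lemma sum_partWeight_mul_drawBudget_le (H : DrawParams θ lam q) (k t₀ : ℕ) (z : ℕ →₀ ℝ)
    (t i : ℕ) (ζ : ℝ) (n : ℕ) (e : ℤ) :
    ∑ l ∈ Icc 2 k, partWeight θ l * drawBudget θ lam t₀ (drawCharge z t ζ l) t i ζ n (e - l) ≤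
      drawBudget θ lam t₀ z t (i + 1) ζ (n + 1) e := by
  have hs := spread_nonneg H t₀ t
  have halting (l : ℕ) : (2 / 3 : ℝ) ^ (e - l) = (3 / 2) ^ l * (2 / 3) ^ e := by
    rw [zpow_sub₀ (by norm_num), zpow_natCast, div_eq_inv_mul, ← inv_pow]
    norm_num
  calc ∑ l ∈ Icc 2 k, partWeight θ l * drawBudget θ lam t₀ (drawCharge z t ζ l) t i ζ n (e - l)
      = 4 * (t₀ + 1) * (∑ l ∈ Icc 2 k, partWeight θ l * energy θ lam t₀ (drawCharge z t ζ l) t +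
          i * ζ ^ 2 * spread θ lam t₀ t * ∑ l ∈ Icc 2 k, partWeight θ l) +
        4 * 8 ^ n * (2 / 3) ^ e * ∑ l ∈ Icc 2 k, partWeight θ l * (3 / 2) ^ l := by
        simp only [drawBudget, halting, mul_sum, ← sum_add_distrib]
        exact sum_congr rfl fun l _ => by ring
    _ ≤ 4 * (t₀ + 1) * (energy θ lam t₀ z t + ζ ^ 2 * spread θ lam t₀ t +
          i * ζ ^ 2 * spread θ lam t₀ t * 1) + 4 * 8 ^ n * (2 / 3) ^ e * 8 := by
        gcongr
        · exact sum_partWeight_mul_energy_drawCharge_le H k t₀ z t ζ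
        · exact sum_partWeight_le_one H.theta_mem_unit.1 k
        · exact sum_partWeight_mul_three_halves_pow_le H.theta_mem k
    _ = drawBudget θ lam t₀ z t (i + 1) ζ (n + 1) e := by
        rw [drawBudget]
        push_cast
        ring

lemma four_le_drawBudget (H : DrawParams θ lam q) (he : e ≤ 0) :
    4 ≤ drawBudget θ lam t₀ z t i ζ n e := by
  have hE := energy_nonneg (θ := θ) H.lam_nonneg t₀ z t
  have hS := spread_nonneg H t₀ t
  have halting : (1 : ℝ) ≤ 8 ^ n * (2 / 3) ^ e :=
    one_le_mul_of_one_le_of_one_le (one_le_pow₀ (by norm_num))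
      (one_le_zpow_of_nonpos₀ (by norm_num) (by norm_num) he)
  have : 0 ≤ 4 * ((t₀ : ℝ) + 1) * (energy θ lam t₀ z t + i * ζ ^ 2 * spread θ lam t₀ t) := by
    positivity
  rw [drawBudget]
  linarith

lemma drawBudget_div_le (H : DrawParams θ lam q) (hz : z.support ⊆ range (t + 1)) (ζ : ℝ) :
    drawBudget θ lam t₀ z t q (z t / q) n e ≤ drawBudget θ lam t₀ z (t + 1) 0 ζ n e := by
  have := energy_add_spread_le (t₀ := t₀) H hz
  rw [drawBudget, drawBudget, Nat.cast_zero, zero_mul, zero_mul, add_zero]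
  gcongr

lemma variation_sq_le_drawBudget (hθ : θ ∈ Set.Icc 0 1) (hz : z.support ⊆ range (t₀ + 1)) :
    variation z ^ 2 ≤ drawBudget θ lam t₀ z (t₀ + 1) 0 ζ n e := by
  have level_zero : energy θ lam t₀ z (t₀ + 1) = ∑ s ∈ range (t₀ + 1), |potential θ z s| ^ 2 :=
    sum_congr rfl fun s hs => by
      rw [levelWeight_of_le (Nat.lt_succ_iff.1 (mem_range.1 hs)), one_mul, sq_abs]
  have cauchy_schwarz := sq_sum_le_card_mul_sum_sq (s := range (t₀ + 1))
    (f := fun s => |potential θ z s|)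
  rw [card_range, ← level_zero, Nat.cast_add_one] at cauchy_schwarz
  calc variation z ^ 2
      ≤ (2 * ∑ s ∈ range (t₀ + 1), |potential θ z s|) ^ 2 :=
        pow_le_pow_left₀ (sum_nonneg fun _ _ => abs_nonneg _)
          (variation_le_two_mul_sum_potential hθ hz) 2
    _ ≤ 4 * (t₀ + 1) * energy θ lam t₀ z (t₀ + 1) := by
        rw [mul_pow, mul_assoc]
        linarith
    _ ≤ drawBudget θ lam t₀ z (t₀ + 1) 0 ζ n e := by
        rw [drawBudget, Nat.cast_zero, zero_mul, zero_mul, add_zero]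
        exact le_add_of_nonneg_right (by positivity)

end DrawBudget

section ExchangeDefect

/-- A uniform bound on the norms of `pathPoly k W * P` for `W` in a window. -/
def WindowBound (θ : ℝ) (k : ℕ) (P : MvPolynomial ℕ ℝ) (M : ℝ) (Wlo Whi : ℤ) : Prop :=
  ∀ m, ∀ W ∈ Set.Icc Wlo Whi, pathNorm θ k m (pathPoly k W * P) ^ 2 ≤ M

/-- The bound proved by induction along the draws: `drawBudget` controls the norm of
`splitPoly k z W * P` for all charges `z` on `[0, t]` whose charge at `t` consists of `i` equal
parts. At most `n` more draws are made, and each of them removes at most `k` from `W`. -/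
def MixtureBound (θ lam : ℝ) (k t₀ : ℕ) (P : MvPolynomial ℕ ℝ) (M : ℝ) (Wlo Whi T : ℤ)
    (t i n : ℕ) : Prop :=
  ∀ (z : ℕ →₀ ℝ) (ζ : ℝ) (W : ℤ) (m : ℕ), z.support ⊆ range (t + 1) → z t = i * ζ →
    variation z ≤ 2 → Wlo + k * n ≤ W → W ≤ Whi →
    pathNorm θ k m (splitPoly k z W * P) ^ 2 ≤ M * drawBudget θ lam t₀ z t i ζ n (W - T)

variable {θ lam M : ℝ} {q k t₀ t i n a : ℕ} {P : MvPolynomial ℕ ℝ} {Wlo Whi T : ℤ}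

lemma WindowBound.nonneg (hM : WindowBound θ k P M Wlo Whi) (h : Wlo ≤ Whi) : 0 ≤ M :=
  (sq_nonneg _).trans (hM 0 Whi ⟨h, le_rfl⟩)

lemma MixtureBound.draw (H : DrawParams θ lam q) (hP : P ∈ nonnegCoeff ℕ)
    (hM : WindowBound θ k P M Wlo Whi) (ht : 1 ≤ t) (hT : t ≤ T)
    (hb : MixtureBound θ lam k t₀ P M Wlo Whi T t i n) :
    MixtureBound θ lam k t₀ P M Wlo Whi T t (i + 1) (n + 1) := by
  intro z ζ W m hsupp hz hvar hlo hhi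
  have hlo' : Wlo ≤ W := by linarith [show (0 : ℤ) ≤ k * (n + 1 : ℕ) by positivity]
  have hM0 := hM.nonneg (hlo'.trans hhi)
  rw [Nat.cast_add_one] at hz hlo
  rcases le_or_gt W t with hW | hW
  · have hvar0 : 0 ≤ variation z := sum_nonneg fun _ _ => abs_nonneg _
    calc pathNorm θ k m (splitPoly k z W * P) ^ 2
        ≤ variation z ^ 2 * M := pathNorm_splitPoly_mul_sq_le z hP (hM m W ⟨hlo', hhi⟩)
      _ ≤ M * 4 := by rw [mul_comm]; gcongr; nlinarith
      _ ≤ M * drawBudget θ lam t₀ z t (i + 1) ζ (n + 1) (W - T) := by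
        gcongr
        exact four_le_drawBudget H (by omega)
  · have drawn (m : ℕ) (l : ℕ) (hl : l ∈ Icc 2 k) :
        pathNorm θ k m (splitPoly k (drawCharge z t ζ l) (W - l) * P) ^ 2 ≤
          M * drawBudget θ lam t₀ (drawCharge z t ζ l) t i ζ n (W - l - T) := by
      obtain ⟨hl2, hlk⟩ := mem_Icc.1 hl
      have : (l : ℤ) ≤ k := by exact_mod_cast hlk
      exact hb _ ζ _ m (support_drawCharge_subset hsupp) (drawCharge_apply_self (by omega) hz)
        ((variation_drawCharge_le hz).trans hvar) (by linarith) (by omega)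
    rw [splitPoly_eq_sum_drawCharge (ζ := ζ) hsupp ht hW, sum_mul]
    simp only [mul_assoc]
    refine (pathNorm_sum_X_mul_sq_le_of_forall H.theta_mem_unit drawn).trans ?_
    simp only [sub_right_comm _ _ T, mul_left_comm _ M, ← mul_sum]
    exact mul_le_mul_of_nonneg_left (sum_partWeight_mul_drawBudget_le H k t₀ z t i ζ n _) hM0

lemma MixtureBound.draw_all (H : DrawParams θ lam q) (hP : P ∈ nonnegCoeff ℕ)
    (hM : WindowBound θ k P M Wlo Whi) (ht : 1 ≤ t) (hT : t ≤ T)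
    (hb : MixtureBound θ lam k t₀ P M Wlo Whi T t 0 n) (i : ℕ) :
    MixtureBound θ lam k t₀ P M Wlo Whi T t i (n + i) := by
  induction i with
  | zero => exact hb
  | succ i ih => exact ih.draw H hP hM ht hT

lemma support_subset_range {z : ℕ →₀ ℝ} (hz : z.support ⊆ range (t + 1)) (ht : z t = 0) :
    z.support ⊆ range t := fun τ hτ => by
  refine mem_range.2 (lt_of_le_of_ne (Nat.lt_succ_iff.1 (mem_range.1 (hz hτ))) ?_)
  rintro rfl
  exact Finsupp.mem_support_iff.1 hτ ht

lemma MixtureBound.descend (H : DrawParams θ lam q) (hWlo : Wlo ≤ Whi)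
    (hM : WindowBound θ k P M Wlo Whi) (hb : MixtureBound θ lam k t₀ P M Wlo Whi T t q n) :
    MixtureBound θ lam k t₀ P M Wlo Whi T (t + 1) 0 n := by
  intro z ζ W m hsupp hz hvar hlo hhi
  have hq : (q : ℝ) ≠ 0 := Nat.cast_ne_zero.2 H.q_pos.ne'
  have hsupp := support_subset_range hsupp (by simpa using hz)
  refine (hb z (z t / q) W m hsupp (by field_simp) hvar hlo hhi).trans ?_
  exact mul_le_mul_of_nonneg_left (drawBudget_div_le H hsupp ζ) (hM.nonneg hWlo)

lemma mixtureBound_base (hθ : θ ∈ Set.Icc 0 1) (hP : P ∈ nonnegCoeff ℕ)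
    (hM : WindowBound θ k P M Wlo Whi) : MixtureBound θ lam k t₀ P M Wlo Whi T (t₀ + 1) 0 0 := by
  intro z ζ W m hsupp hz _ hlo hhi
  rw [Nat.cast_zero, mul_zero, add_zero] at hlo
  have hsupp := support_subset_range hsupp (by simpa using hz)
  refine (pathNorm_splitPoly_mul_sq_le z hP (hM m W ⟨hlo, hhi⟩)).trans ?_
  rw [mul_comm]
  exact mul_le_mul_of_nonneg_left (variation_sq_le_drawBudget hθ hsupp)
    (hM.nonneg (hlo.trans hhi))

lemma mixtureBound (H : DrawParams θ lam q) (hP : P ∈ nonnegCoeff ℕ) (hWlo : Wlo ≤ Whi)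
    (hM : WindowBound θ k P M Wlo Whi) (d : ℕ) (hT : (t₀ + 1 + d : ℕ) ≤ T) :
    MixtureBound θ lam k t₀ P M Wlo Whi T (t₀ + 1 + d) q (q * (d + 1)) := by
  induction d with
  | zero =>
    simpa using (mixtureBound_base H.theta_mem_unit hP hM).draw_all H hP hM (by omega) hT q
  | succ d ih =>
    exact ((ih (by omega)).descend H hWlo hM).draw_all H hP hM (by omega) hT q

lemma potential_single_sub_single (hθ : θ < 2) {s : ℕ} (hs : s ≤ a) :
    potential θ (Finsupp.single a 1 - Finsupp.single (a + 1) 1) s = (-(1 - θ)) ^ (a - s) := by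
  have := renewal_succ_sub hθ (a - s)
  rw [potential, map_sub, Finsupp.linearCombination_single, Finsupp.linearCombination_single,
    one_smul, one_smul, renewalKernel, renewalKernel, if_pos hs, if_pos (by omega),
    Nat.sub_add_comm hs]
  linarith

lemma sum_levelWeight_mul_pow_le (H : DrawParams θ lam q) (t₀ b : ℕ) :
    ∑ s ∈ range (b + 1), levelWeight lam t₀ s * ((1 - θ) ^ 2) ^ (b - s) ≤
      3.1 * levelWeight lam t₀ b := by
  have hw := levelWeight_nonneg H.lam_nonneg t₀
  induction b with
  | zero => simpa using le_mul_of_one_le_left (hw 0) (by norm_num)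
  | succ b ih =>
    have shift : ∑ s ∈ range (b + 1), levelWeight lam t₀ s * ((1 - θ) ^ 2) ^ (b + 1 - s) =
        (1 - θ) ^ 2 * ∑ s ∈ range (b + 1), levelWeight lam t₀ s * ((1 - θ) ^ 2) ^ (b - s) := by
      rw [mul_sum]
      refine sum_congr rfl fun s hs => ?_
      rw [Nat.sub_add_comm (Nat.lt_succ_iff.1 (mem_range.1 hs)), pow_succ]
      ring
    have numeric : (1 - θ) ^ 2 * 3.1 ≤ 2.1 * lam := by
      nlinarith [H.theta_mem.1, H.theta_mem.2, H.theta_lt_lam]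
    rw [sum_range_succ, shift, Nat.sub_self, pow_zero, mul_one]
    linarith [mul_le_mul_of_nonneg_left ih (sq_nonneg (1 - θ)),
      mul_levelWeight_le H.lam_le_one t₀ b, mul_le_mul_of_nonneg_right numeric (hw b)]

lemma drawBudget_single_sub_single_le (H : DrawParams θ lam q) (ht₀ : t₀ ≤ a) (n : ℕ) (e : ℤ) :
    drawBudget θ lam t₀ (Finsupp.single a 1 - Finsupp.single (a + 1) 1) (a + 1) q (-1 / q) n e ≤
      16 * (t₀ + 1) * lam ^ (a - t₀) + 4 * 8 ^ n * (2 / 3) ^ e := by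
  have hq : (0 : ℝ) < q := Nat.cast_pos.2 H.q_pos
  have hw := levelWeight_nonneg H.lam_nonneg t₀ a
  have energy_part : energy θ lam t₀ (Finsupp.single a 1 - Finsupp.single (a + 1) 1) (a + 1) ≤
      3.1 * levelWeight lam t₀ a := by
    refine (sum_congr rfl fun s hs => ?_).trans_le (sum_levelWeight_mul_pow_le H t₀ a)
    rw [potential_single_sub_single (by linarith [H.theta_mem.2])
      (Nat.lt_succ_iff.1 (mem_range.1 hs)), ← pow_mul, mul_comm (a - s), pow_mul, neg_sq]
  have spread_part : q * (-1 / q : ℝ) ^ 2 * spread θ lam t₀ (a + 1) ≤ 0.9 * levelWeight lam t₀ a :=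
    calc q * (-1 / q : ℝ) ^ 2 * spread θ lam t₀ (a + 1)
        ≤ q * (-1 / q : ℝ) ^ 2 * (q * (lam * levelWeight lam t₀ a)) := by
          rw [← levelWeight_succ ht₀]
          gcongr
          exact spread_le H t₀ (a + 1)
      _ = lam * levelWeight lam t₀ a := by field_simp
      _ ≤ 0.9 * levelWeight lam t₀ a := mul_le_mul_of_nonneg_right H.lam_le hw
  calc drawBudget θ lam t₀ (Finsupp.single a 1 - Finsupp.single (a + 1) 1) (a + 1) q (-1 / q) n e
      ≤ 4 * (t₀ + 1) * (3.1 * levelWeight lam t₀ a + 0.9 * levelWeight lam t₀ a) +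
        4 * 8 ^ n * (2 / 3) ^ e := by
        rw [drawBudget]
        gcongr
    _ = 16 * (t₀ + 1) * lam ^ (a - t₀) + 4 * 8 ^ n * (2 / 3) ^ e := by
        rw [levelWeight]
        ring

lemma exchangeDefect_eq_splitPoly (k a : ℕ) (c : ℤ) : exchangeDefect k a c =
    splitPoly k (Finsupp.single a 1 - Finsupp.single (a + 1) 1) (a + c) := by
  rw [splitPoly, map_sub, Finsupp.linearCombination_single, Finsupp.linearCombination_single,
    one_smul, one_smul, exchangeDefect, Nat.cast_add_one]
  congr 3 <;> ring

/-- Moving a vertex between two long paths hardly matters: the charges `1` at `a` and `-1` at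
`a + 1` are drawn until they have cancelled. -/
lemma pathNorm_exchangeDefect_mul_sq_le (H : DrawParams θ lam q) (hP : P ∈ nonnegCoeff ℕ)
    (ht₀ : t₀ ≤ a) {c : ℤ} (hM : WindowBound θ k P M (a + c - q * k * (a + 1)) (a + c)) (m : ℕ) :
    pathNorm θ k m (exchangeDefect k a c * P) ^ 2 ≤
      M * (16 * (t₀ + 1) * lam ^ (a - t₀) + 4 * 8 ^ (q * (a + 1 - t₀)) * (2 / 3) ^ (c - 1)) := by
  obtain ⟨d, rfl⟩ := Nat.exists_eq_add_of_le ht₀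
  have hq : (q : ℝ) ≠ 0 := Nat.cast_ne_zero.2 H.q_pos.ne'
  have window : (t₀ + d : ℕ) + c - q * k * ((t₀ + d : ℕ) + 1) ≤ (t₀ + d : ℕ) + c :=
    sub_le_self _ (by positivity)
  set z : ℕ →₀ ℝ := Finsupp.single (t₀ + d) 1 - Finsupp.single (t₀ + d + 1) 1 with hz
  have support_z : z.support ⊆ range (t₀ + d + 1 + 1) :=
    Finsupp.support_sub.trans (union_subset (Finsupp.support_single_subset.trans (by simp))
      (Finsupp.support_single_subset.trans (by simp)))
  have variation_z : variation z ≤ 2 := by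
    have := variation_add_le (Finsupp.single (t₀ + d) 1) (Finsupp.single (t₀ + d + 1) (-1))
    rw [Finsupp.single_neg, ← sub_eq_add_neg, ← Finsupp.single_neg] at this
    rw [variation_single, variation_single, abs_neg, abs_one] at this
    linarith
  have mixture := mixtureBound (t₀ := t₀) H hP window hM d (T := (t₀ + d : ℕ) + 1)
    (by push_cast; omega)
  rw [add_right_comm] at mixture
  have bound := mixture z (-1 / q) ((t₀ + d : ℕ) + c) m support_z (by simp [hz]; field_simp)
    variation_z ?_ le_rfl
  · rw [exchangeDefect_eq_splitPoly]
    refine bound.trans (mul_le_mul_of_nonneg_left ?_ (hM.nonneg window))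
    rw [add_sub_add_left_eq_sub, show t₀ + d + 1 - t₀ = d + 1 by omega]
    exact drawBudget_single_sub_single_le H ht₀ (q * (d + 1)) (c - 1)
  · push_cast
    have : (0 : ℤ) ≤ k * q * t₀ := by positivity
    linarith

end ExchangeDefect

section SumWeight

/-- The probability that `x` independent pieces with law `partWeight θ` have `n` vertices in all. -/
noncomputable def sumWeight (θ : ℝ) : ℕ → ℕ → ℝ
  | 0, n => if n = 0 then 1 else 0
  | x + 1, n => ∑ l ∈ Icc 2 n, partWeight θ l * sumWeight θ x (n - l)

/-- The largest value of `sumWeight θ x n` over the number `x` of pieces. -/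
noncomputable def peakWeight (θ : ℝ) (n : ℕ) : ℝ :=
  (range (n + 1)).sup' nonempty_range_add_one fun x => sumWeight θ x n

/-- The bound that `peakWeight θ n` gives for the norm of the path polynomial on `n` vertices. -/
noncomputable def peakNorm (θ : ℝ) (n : ℕ) : ℝ := √(peakWeight θ n)

variable {θ : ℝ} {a b n w x y k m : ℕ}

lemma sumWeight_nonneg (hθ : θ ∈ Set.Icc 0 1) (x n : ℕ) : 0 ≤ sumWeight θ x n := by
  induction x generalizing n with
  | zero =>
    rw [sumWeight]
    positivity
  | succ x ih => exact sum_nonneg fun l _ => mul_nonneg (partWeight_nonneg hθ l) (ih _)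

lemma sumWeight_eq_zero (hn : n < 2 * x) : sumWeight θ x n = 0 := by
  induction x generalizing n with
  | zero => omega
  | succ x ih =>
    refine sum_eq_zero fun l hl => ?_
    rw [mem_Icc] at hl
    rw [ih (by omega), mul_zero]

lemma sumWeight_mul_le (hθ : θ ∈ Set.Icc 0 1) (x y a b : ℕ) :
    sumWeight θ x a * sumWeight θ y b ≤ sumWeight θ (x + y) (a + b) := by
  induction x generalizing a with
  | zero =>
    rw [sumWeight, zero_add]
    split_ifs with ha
    · rw [ha, zero_add, one_mul]
    · rw [zero_mul]
      exact sumWeight_nonneg hθ _ _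
  | succ x ih =>
    rw [add_right_comm, sumWeight, sumWeight, sum_mul]
    calc ∑ l ∈ Icc 2 a, partWeight θ l * sumWeight θ x (a - l) * sumWeight θ y b
        ≤ ∑ l ∈ Icc 2 a, partWeight θ l * sumWeight θ (x + y) (a + b - l) := by
          refine sum_le_sum fun l hl => ?_
          rw [mul_assoc, Nat.sub_add_comm (mem_Icc.1 hl).2]
          exact mul_le_mul_of_nonneg_left (ih _) (partWeight_nonneg hθ l)
      _ ≤ ∑ l ∈ Icc 2 (a + b), partWeight θ l * sumWeight θ (x + y) (a + b - l) :=
          sum_le_sum_of_subset_of_nonneg (Icc_subset_Icc_right le_self_add) fun l _ _ =>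
            mul_nonneg (partWeight_nonneg hθ l) (sumWeight_nonneg hθ _ _)

lemma mul_sumWeight_le (hθ : θ ∈ Set.Icc 0 1) (x : ℕ) (hn : 1 ≤ n) :
    θ * sumWeight θ x n ≤ sumWeight θ x (n + 1) := by
  cases x with
  | zero => simp [sumWeight, Nat.one_le_iff_ne_zero.1 hn]
  | succ x =>
    obtain ⟨j, rfl⟩ := Nat.exists_eq_add_of_le' hn
    rw [sumWeight, sumWeight, sum_partWeight_mul_succ, le_add_iff_nonneg_right]
    exact mul_nonneg (sub_nonneg.2 hθ.2) (sumWeight_nonneg hθ x j)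

lemma sum_sumWeight (hθ : θ < 2) {N : ℕ} (hN : n < N) :
    ∑ x ∈ range N, sumWeight θ x n = renewal θ n := by
  induction n using Nat.strong_induction_on generalizing N with
  | _ n ih =>
    obtain ⟨N, rfl⟩ : ∃ M, N = M + 1 := ⟨N - 1, by omega⟩
    rw [sum_range_succ', sumWeight]
    rcases eq_or_ne n 0 with rfl | hn
    · simp [sumWeight, renewal_zero hθ]
    · rw [if_neg hn, add_zero, ← sum_partWeight_mul_renewal hθ (Nat.one_le_iff_ne_zero.2 hn)]
      simp only [sumWeight]
      rw [sum_comm]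
      refine sum_congr rfl fun l hl => ?_
      rw [mem_Icc] at hl
      rw [← mul_sum, ih (n - l) (by omega) (by omega)]

lemma sumWeight_le_peakWeight (hθ : θ ∈ Set.Icc 0 1) (x n : ℕ) :
    sumWeight θ x n ≤ peakWeight θ n := by
  have le_sup' {y : ℕ} (hy : y < n + 1) : sumWeight θ y n ≤ peakWeight θ n :=
    le_sup' (fun x => sumWeight θ x n) (mem_range.2 hy)
  rcases lt_or_ge x (n + 1) with hx | hx
  · exact le_sup' hx
  · rw [sumWeight_eq_zero (by omega)]
    exact (sumWeight_nonneg hθ 0 n).trans (le_sup' n.succ_pos)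

lemma exists_peakWeight_eq (θ : ℝ) (n : ℕ) : ∃ x, peakWeight θ n = sumWeight θ x n := by
  obtain ⟨x, -, hx⟩ := exists_mem_eq_sup' (nonempty_range_add_one (n := n)) fun x => sumWeight θ x n
  exact ⟨x, hx⟩

lemma peakWeight_nonneg (hθ : θ ∈ Set.Icc 0 1) (n : ℕ) : 0 ≤ peakWeight θ n :=
  (sumWeight_nonneg hθ 0 n).trans (sumWeight_le_peakWeight hθ 0 n)

lemma renewal_ge (hθ : θ ∈ Set.Icc 0.45 0.55) (hw : 2 ≤ w) : 0.2 ≤ renewal θ w := by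
  obtain ⟨hθ₁, hθ₂⟩ := hθ
  have neg_le_pow : -(1 - θ) ^ 3 ≤ (-(1 - θ)) ^ w := by
    rcases hw.eq_or_lt with rfl | hw
    · nlinarith [pow_nonneg (by linarith : 0 ≤ 1 - θ) 3]
    · refine (neg_le_neg ?_).trans (neg_abs_le _)
      rw [abs_pow, abs_neg, abs_of_nonneg (by linarith)]
      exact pow_le_pow_of_le_one (by linarith) (by linarith) hw
  rw [renewal, le_div_iff₀ (by linarith)]
  nlinarith [mul_nonneg (sub_nonneg.2 hθ₁) (sub_nonneg.2 hθ₂)]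

lemma mul_peakWeight_ge (hθ : θ ∈ Set.Icc 0.45 0.55) (hw : 2 ≤ w) :
    0.2 ≤ (w + 1) * peakWeight θ w := by
  have hθ' : θ ∈ Set.Icc 0 1 := Set.Icc_subset_Icc (by norm_num) (by norm_num) hθ
  calc 0.2 ≤ renewal θ w := renewal_ge hθ hw
    _ = ∑ x ∈ range (w + 1), sumWeight θ x w :=
        (sum_sumWeight (hθ'.2.trans_lt one_lt_two) w.lt_succ_self).symm
    _ ≤ #(range (w + 1)) • peakWeight θ w :=
        sum_le_card_nsmul _ _ _ fun x _ => sumWeight_le_peakWeight hθ' x w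
    _ = (w + 1) * peakWeight θ w := by simp

lemma peakWeight_le_mul_peakWeight_add (hθ : θ ∈ Set.Icc 0.45 0.55) (haw : 2 ≤ a + w) :
    peakWeight θ a ≤ 5 * (w + 1) * peakWeight θ (a + w) := by
  have hθ' : θ ∈ Set.Icc 0 1 := Set.Icc_subset_Icc (by norm_num) (by norm_num) hθ
  have peak_nonneg := peakWeight_nonneg hθ'
  obtain ⟨x, hx⟩ := exists_peakWeight_eq θ a
  rcases lt_or_ge w 2 with hw | hw
  · interval_cases w
    · have := peak_nonneg a
      simp only [Nat.cast_zero, add_zero]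
      linarith
    · have step := (mul_sumWeight_le hθ' x (by omega)).trans
        (sumWeight_le_peakWeight hθ' x (a + 1))
      rw [hx]
      push_cast
      nlinarith [hθ.1, sumWeight_nonneg hθ' x a]
  · obtain ⟨y, hy⟩ := exists_peakWeight_eq θ w
    have peak_mul : peakWeight θ a * peakWeight θ w ≤ peakWeight θ (a + w) := by
      rw [hx, hy]
      exact (sumWeight_mul_le hθ' x y a w).trans (sumWeight_le_peakWeight hθ' (x + y) (a + w))
    calc peakWeight θ a = 5 * (peakWeight θ a * 0.2) := by ring
      _ ≤ 5 * (peakWeight θ a * ((w + 1) * peakWeight θ w)) := by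
          have := mul_le_mul_of_nonneg_left (mul_peakWeight_ge hθ hw) (peak_nonneg a)
          linarith
      _ = 5 * (w + 1) * (peakWeight θ a * peakWeight θ w) := by ring
      _ ≤ 5 * (w + 1) * peakWeight θ (a + w) := by gcongr

lemma peakNorm_nonneg (θ : ℝ) (n : ℕ) : 0 ≤ peakNorm θ n := Real.sqrt_nonneg _

lemma peakNorm_le_mul_peakNorm_add (hθ : θ ∈ Set.Icc 0.45 0.55) (haw : 2 ≤ a + w) :
    peakNorm θ a ≤ √(5 * (w + 1)) * peakNorm θ (a + w) := by
  rw [peakNorm, peakNorm, ← Real.sqrt_mul (by positivity)]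
  exact Real.sqrt_le_sqrt (peakWeight_le_mul_peakWeight_add hθ haw)

lemma pathNorm_zero_one (θ : ℝ) (k : ℕ) : pathNorm θ k 0 1 = 1 := by
  rw [← sq_eq_sq₀ (apply_nonneg _ _) zero_le_one, pathNorm, wordNorm_sq]
  simp [mixedDeriv]

lemma pathNorm_succ_one (θ : ℝ) (k m : ℕ) : pathNorm θ k (m + 1) 1 = 0 := by
  rw [← sq_eq_zero_iff, pathNorm, wordNorm_sq]
  simp [mixedDeriv]

lemma pathNorm_pathPoly_sq_le (hθ : θ ∈ Set.Icc 0 1) (k m n : ℕ) :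
    pathNorm θ k m (pathPoly k n) ^ 2 ≤ sumWeight θ m n := by
  induction m generalizing n with
  | zero =>
    rcases eq_or_ne n 0 with rfl | hn
    · simp [pathNorm_zero_one, sumWeight]
    · rw [pathPoly_rec (by omega), pathNorm_zero_sum_X_mul, zero_pow two_ne_zero]
      exact sumWeight_nonneg hθ _ _
  | succ m ih =>
    rcases eq_or_ne n 0 with rfl | hn
    · simpa [pathNorm_succ_one] using sumWeight_nonneg hθ _ _
    rw [pathPoly_rec (by omega), sumWeight]
    refine (pathNorm_sum_X_mul_sq_le hθ _).trans ?_
    rw [← sum_filter_of_ne (p := (· ≤ n))]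
    · refine (sum_le_sum fun l hl => ?_).trans
        (sum_le_sum_of_subset_of_nonneg (t := Icc 2 n) (fun l hl => ?_) fun l _ _ =>
          mul_nonneg (partWeight_nonneg hθ l) (sumWeight_nonneg hθ m (n - l)))
      · rw [← Nat.cast_sub (mem_filter.1 hl).2]
        exact mul_le_mul_of_nonneg_left (ih _) (partWeight_nonneg hθ l)
      · simp only [mem_filter, mem_Icc] at hl ⊢
        omega
    · intro l _ hl
      contrapose! hl
      rw [pathPoly_of_neg (by omega), map_zero, zero_pow two_ne_zero, mul_zero]

lemma pathNorm_pathPoly_le (hθ : θ ∈ Set.Icc 0 1) (k m n : ℕ) :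
    pathNorm θ k m (pathPoly k n) ≤ peakNorm θ n :=
  Real.le_sqrt_of_sq_le <|
    (pathNorm_pathPoly_sq_le hθ k m n).trans (sumWeight_le_peakWeight hθ m n)

end SumWeight

section HostBound

/-- Multiplying `P` by the path on `W` vertices costs no more than `C` times the bound for a path on
`W + w₀` vertices: in norm, `P` behaves like a host on `w₀` vertices. -/
def HostBound (θ : ℝ) (k : ℕ) (P : MvPolynomial ℕ ℝ) (C : ℝ) (w₀ : ℕ) : Prop :=
  ∀ W m : ℕ, pathNorm θ k m (pathPoly k W * P) ≤ C * peakNorm θ (W + w₀)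

variable {θ lam C : ℝ} {k m q b l w₀ : ℕ} {P : MvPolynomial ℕ ℝ}

lemma peakNorm_pos (hθ : θ ∈ Set.Icc 0.45 0.55) {n : ℕ} (hn : 2 ≤ n) : 0 < peakNorm θ n := by
  have peak_ge := mul_peakWeight_ge hθ hn
  exact Real.sqrt_pos.2 (pos_of_mul_pos_right (by linarith) (by positivity : (0 : ℝ) ≤ n + 1))

lemma HostBound.nonneg (h : HostBound θ k P C w₀) (hθ : θ ∈ Set.Icc 0.45 0.55) : 0 ≤ C :=
  nonneg_of_mul_nonneg_left ((apply_nonneg _ _).trans (h 2 0)) (peakNorm_pos hθ le_self_add)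

lemma HostBound.windowBound (h : HostBound θ k P C w₀) (hθ : θ ∈ Set.Icc 0.45 0.55) (hq : 0 < q)
    (hk : 2 ≤ k) (hl : l ≤ k) :
    WindowBound θ k P ((4 * q * k * (C * peakNorm θ (b + k + w₀))) ^ 2) (k + b - l - q * k * k)
      (k + b - l) := by
  rintro m W ⟨hW₁, hW₂⟩
  have hC := h.nonneg hθ
  have peak_nonneg := peakNorm_nonneg θ (b + k + w₀)
  refine pow_le_pow_left₀ (apply_nonneg _ _) ?_ 2
  rcases lt_or_ge W 0 with hW | hW
  · rw [pathPoly_of_neg hW, zero_mul, map_zero]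
    positivity
  lift W to ℕ using hW
  obtain ⟨w, hw⟩ : ∃ w, W + w₀ + w = b + k + w₀ := ⟨b + k - W, by omega⟩
  have w_le : (w : ℝ) ≤ k + q * k * k := by exact_mod_cast (by zify; omega : w ≤ k + q * k * k)
  have sqrt_le : √(5 * (w + 1)) ≤ 4 * q * k := by
    refine Real.sqrt_le_iff.2 ⟨by positivity, ?_⟩
    have hq : (1 : ℝ) ≤ q := by exact_mod_cast hq
    have hk : (2 : ℝ) ≤ k := by exact_mod_cast hk
    have one_le_sq : (1 : ℝ) ≤ k * k := by nlinarith
    nlinarith [mul_nonneg (sub_nonneg.2 hq) (sub_nonneg.2 one_le_sq),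
      mul_nonneg (mul_nonneg (sub_nonneg.2 hq) (Nat.cast_nonneg q)) (mul_self_nonneg (k : ℝ))]
  have shift := peakNorm_le_mul_peakNorm_add (a := W + w₀) (w := w) hθ (by omega)
  rw [hw] at shift
  calc pathNorm θ k m (pathPoly k W * P) ≤ C * peakNorm θ (W + w₀) := h W m
    _ ≤ C * (√(5 * (w + 1)) * peakNorm θ (b + k + w₀)) := mul_le_mul_of_nonneg_left shift hC
    _ ≤ C * (4 * q * k * peakNorm θ (b + k + w₀)) := by gcongr
    _ = 4 * q * k * (C * peakNorm θ (b + k + w₀)) := by ring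

lemma sqrt_partWeight_le (hθ : θ ∈ Set.Icc 0.45 0.55) (hlam : θ ≤ lam) (hl : 2 ≤ l) :
    √(partWeight θ l) ≤ 3 * √lam ^ l := by
  obtain ⟨hθ₁, -⟩ := hθ
  have hθ₀ : 0 ≤ θ := by linarith
  obtain ⟨d, rfl⟩ := Nat.exists_eq_add_of_le' hl
  refine Real.sqrt_le_iff.2 ⟨by positivity, ?_⟩
  calc partWeight θ (d + 2) = (1 - θ) * θ ^ d := by rw [partWeight, Nat.add_sub_cancel]
    _ ≤ 9 * θ ^ 2 * θ ^ d := by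
        gcongr
        nlinarith
    _ = 9 * θ ^ (d + 2) := by ring
    _ ≤ 9 * lam ^ (d + 2) := by gcongr
    _ = (3 * √lam ^ (d + 2)) ^ 2 := by
        rw [mul_pow, ← pow_mul, mul_comm (d + 2) 2, pow_mul, Real.sq_sqrt (hθ₀.trans hlam)]
        norm_num

lemma pathNorm_X_mul_le (hθ : θ ∈ Set.Icc 0.45 0.55) (hlam : θ ≤ lam) (hl : l ∈ Icc 2 k) {B : ℝ}
    (hB : ∀ m, pathNorm θ k m P ≤ B) (m : ℕ) :
    pathNorm θ k m (X l * P) ≤ 3 * √lam ^ l * B := by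
  have hB₀ : 0 ≤ B := (apply_nonneg _ _).trans (hB 0)
  cases m with
  | zero =>
    rw [pathNorm, wordNorm_zero_X_mul]
    positivity
  | succ m =>
    refine (wordNorm_X_mul_le hl P).trans ?_
    rw [abs_of_nonneg (Real.sqrt_nonneg _)]
    exact mul_le_mul (sqrt_partWeight_le hθ hlam (mem_Icc.1 hl).1) (hB m) (apply_nonneg _ _)
      (by positivity)

lemma pathNorm_sum_le {ι : Type*} (A : Finset ι) (P : ι → MvPolynomial ℕ ℝ) :
    pathNorm θ k m (∑ i ∈ A, P i) ≤ ∑ i ∈ A, pathNorm θ k m (P i) :=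
  le_sum_of_subadditive _ (map_zero _).le (map_add_le_add _) A P

lemma pathNorm_cyclePoly_mul_sub_mul_le (hθ : θ ∈ Set.Icc 0.45 0.55) (hlam : θ ≤ lam) (hk : 2 ≤ k)
    {B : ℝ} (hB : ∀ l ∈ Icc 2 k, ∀ j, j + 2 ≤ l → ∃ β, 3 * √lam ^ l * β ≤ B ∧
      ∀ m, pathNorm θ k m (exchangeDefect k (k - l + j) (b - j) * P) ≤ β) (m : ℕ) :
    pathNorm θ k m ((cyclePoly k * pathPoly k b - pathPoly k (b + k)) * P) ≤ k ^ 3 * B := by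
  have defect_le {l : ℕ} (hl : l ∈ Icc 2 k) {j : ℕ} (hj : j + 2 ≤ l) :
      pathNorm θ k m (X l * (exchangeDefect k (k - l + j) (b - j) * P)) ≤ B := by
    obtain ⟨β, hβB, hβ⟩ := hB l hl j hj
    exact (pathNorm_X_mul_le hθ hlam hl hβ m).trans hβB
  have hB₀ : 0 ≤ B :=
    (apply_nonneg _ _).trans (defect_le (mem_Icc.2 ⟨le_rfl, hk⟩) (by omega : 0 + 2 ≤ 2))
  have row_le (l : ℕ) (hl : l ∈ Icc 2 k) : pathNorm θ k m (∑ i ∈ range (l - 1),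
      ∑ j ∈ range (l - 1 - i), X l * (exchangeDefect k (k - l + j) (b - j) * P)) ≤ k ^ 2 * B := by
    have hl' := (mem_Icc.1 hl).2
    have cell_le (i : ℕ) : pathNorm θ k m (∑ j ∈ range (l - 1 - i),
        X l * (exchangeDefect k (k - l + j) (b - j) * P)) ≤ k * B := by
      refine ((pathNorm_sum_le _ _).trans <| sum_le_card_nsmul _ _ B fun j hj =>
        defect_le hl (by have := mem_range.1 hj; omega)).trans ?_
      rw [card_range, nsmul_eq_mul]
      gcongr
      omega
    refine ((pathNorm_sum_le _ _).trans <| sum_le_card_nsmul _ _ _ fun i _ => cell_le i).trans ?_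
    rw [card_range, nsmul_eq_mul, pow_two, mul_assoc]
    gcongr
    omega
  simp only [cyclePoly_mul_sub (one_le_two.trans hk) (Nat.cast_nonneg b), sum_mul, mul_sum,
    mul_assoc]
  refine ((pathNorm_sum_le _ _).trans (sum_le_card_nsmul _ _ _ row_le)).trans ?_
  rw [Nat.card_Icc, nsmul_eq_mul, pow_succ' (k : ℝ) 2, mul_assoc]
  gcongr
  omega

end HostBound

section MergeBound

/-- In the presence of any host, replacing a cycle on `k` vertices and a path on `b ≥ b₀` vertices
by a path on `b + k` vertices costs at most the proportion `δ` of the bound for the latter. -/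
def MergeBound (θ : ℝ) (k b₀ : ℕ) (δ : ℝ) : Prop :=
  ∀ P ∈ nonnegCoeff ℕ, ∀ C w₀, HostBound θ k P C w₀ → ∀ b m : ℕ, b₀ ≤ b →
    pathNorm θ k m ((cyclePoly k * pathPoly k b - pathPoly k (b + k)) * P) ≤
      δ * (C * peakNorm θ (b + k + w₀))

/-- The square of the proportion lost on drawing from a path on `t₀ + y` vertices down to `t₀`, by
`q` draws per level, next to a path on `e + 1` vertices. -/
noncomputable def drawError (lam : ℝ) (q t₀ y : ℕ) (e : ℤ) : ℝ :=
  16 * (t₀ + 1) * lam ^ y + 4 * 8 ^ (q * (y + 1)) * (2 / 3) ^ e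

variable {θ lam C : ℝ} {q k m b l j t₀ w₀ Z s : ℕ} {P : MvPolynomial ℕ ℝ}

lemma HostBound.pathNorm_exchangeDefect_mul_le (h : HostBound θ k P C w₀)
    (H : DrawParams θ lam q) (hk : 2 ≤ k) (hP : P ∈ nonnegCoeff ℕ) (hl : l ≤ k)
    (hj : j + 2 ≤ l) {y : ℕ} (hy : t₀ + y = k - l + j) {β : ℝ}
    (hβ₀ : 0 ≤ β) (hβ : drawError lam q t₀ y (b - j - 1) ≤ β ^ 2) (m : ℕ) :
    pathNorm θ k m (exchangeDefect k (k - l + j) (b - j) * P) ≤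
      4 * q * k * (C * peakNorm θ (b + k + w₀)) * β := by
  have hC := h.nonneg H.theta_mem
  have peak_nonneg := peakNorm_nonneg θ (b + k + w₀)
  have size : ((t₀ + y : ℕ) : ℤ) = k - l + j := by omega
  have window : WindowBound θ k P ((4 * q * k * (C * peakNorm θ (b + k + w₀))) ^ 2)
      ((t₀ + y : ℕ) + (b - j) - q * k * ((t₀ + y : ℕ) + 1)) ((t₀ + y : ℕ) + (b - j)) := by
    intro m W hW
    refine h.windowBound H.theta_mem H.q_pos hk hl m W
      (Set.Icc_subset_Icc ?_ (by omega) hW)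
    have : (q * k : ℤ) * ((t₀ + y : ℕ) + 1) ≤ q * k * k := by
      gcongr
      omega
    omega
  have square_le := pathNorm_exchangeDefect_mul_sq_le H hP (Nat.le_add_right t₀ y) window m
  rw [size, Nat.add_sub_cancel_left, show t₀ + y + 1 - t₀ = y + 1 by omega] at square_le
  refine abs_le_of_sq_le_sq' ?_ (by positivity) |>.2
  rw [mul_pow]
  exact square_le.trans (mul_le_mul_of_nonneg_left hβ (sq_nonneg _))

lemma drawError_le_of_le (H : DrawParams θ lam q) (hs : 8 ^ q * (2 / 3 : ℝ) ^ s ≤ 0.45)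
    (hl : l ≤ k) (hj : j + 2 ≤ l) (hb : (s + 1) * k ≤ b) :
    drawError lam q 0 (k - l + j) (b - j - 1) ≤ (5 * √lam ^ (k - l)) ^ 2 := by
  have hlam := H.lam_nonneg
  have draws_le : (8 : ℝ) ^ (q * (k - l + j + 1)) * (2 / 3 : ℝ) ^ ((b : ℤ) - j - 1) ≤
      lam ^ (k - l) := by
    calc (8 : ℝ) ^ (q * (k - l + j + 1)) * (2 / 3 : ℝ) ^ ((b : ℤ) - j - 1)
        ≤ 8 ^ (q * k) * (2 / 3 : ℝ) ^ ((s * k : ℕ) : ℤ) := by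
          refine mul_le_mul (pow_le_pow_right₀ (by norm_num) (Nat.mul_le_mul_left q (by omega)))
            (zpow_le_zpow_right_of_le_one₀ (by norm_num) (by norm_num) ?_) (by positivity)
            (by positivity)
          rw [add_one_mul] at hb
          omega
      _ = (8 ^ q * (2 / 3) ^ s) ^ k := by rw [zpow_natCast, mul_pow, ← pow_mul, ← pow_mul]
      _ ≤ lam ^ k :=
          pow_le_pow_left₀ (by positivity) (by linarith [H.theta_mem.1, H.theta_lt_lam]) k
      _ ≤ lam ^ (k - l) := pow_le_pow_of_le_one hlam H.lam_le_one (Nat.sub_le k l)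
  have levels_le : lam ^ (k - l + j) ≤ lam ^ (k - l) :=
    pow_le_pow_of_le_one hlam H.lam_le_one (Nat.le_add_right _ j)
  rw [mul_pow, ← pow_mul, mul_comm (k - l) 2, pow_mul, Real.sq_sqrt hlam, drawError, Nat.cast_zero]
  linarith [pow_nonneg hlam (k - l)]

lemma mergeBound_of_large (H : DrawParams θ lam q) (hk : 2 ≤ k)
    (hs : 8 ^ q * (2 / 3 : ℝ) ^ s ≤ 0.45) :
    MergeBound θ k ((s + 1) * k) (60 * q * k ^ 4 * √lam ^ k) := by
  intro P hP C w₀ h b m hb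
  refine (pathNorm_cyclePoly_mul_sub_mul_le H.theta_mem H.theta_lt_lam.le hk
    (B := 60 * q * k * √lam ^ k * (C * peakNorm θ (b + k + w₀))) ?_ m).trans_eq (by ring)
  intro l hl j hj
  have hl' := (mem_Icc.1 hl).2
  refine ⟨_, le_of_eq ?_, h.pathNorm_exchangeDefect_mul_le H hk hP hl' hj (zero_add _)
    (by positivity) (drawError_le_of_le H hs hl' hj hb)⟩
  rw [← Nat.add_sub_of_le hl', Nat.add_sub_cancel_left, pow_add]
  ring

lemma HostBound.pathNorm_exchangeDefect_mul_le_two_mul (h : HostBound θ k P C w₀)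
    (hθ : θ ∈ Set.Icc 0.45 0.55) (hq : 0 < q) (hk : 2 ≤ k) (hP : P ∈ nonnegCoeff ℕ) (hl : l ≤ k)
    (m : ℕ) : pathNorm θ k m (exchangeDefect k (k - l + j) (b - j) * P) ≤
      2 * (4 * q * k * (C * peakNorm θ (b + k + w₀))) := by
  have hC := h.nonneg hθ
  have peak_nonneg := peakNorm_nonneg θ (b + k + w₀)
  have pair_le {a c : ℤ} (hac : a + c = k + b - l) :
      pathNorm θ k m (pathPoly k a * pathPoly k c * P) ≤
        4 * q * k * (C * peakNorm θ (b + k + w₀)) := by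
    refine (pathNorm_mono (Q := pathPoly k (a + c) * P) (mul_mem (mul_mem
      (pathPoly_mem_nonnegCoeff _ _) (pathPoly_mem_nonnegCoeff _ _)) hP) ?_).trans
      (abs_le_of_sq_le_sq' (h.windowBound hθ hq hk hl m _ ?_) (by positivity)).2
    · rw [← sub_mul]
      exact mul_mem (pathPoly_add_sub_mul_mem_nonnegCoeff k a c) hP
    · rw [hac]
      exact ⟨sub_le_self _ (by positivity), le_rfl⟩
  rw [exchangeDefect, sub_mul, two_mul]
  exact (map_sub_le_add _ _ _).trans (add_le_add (pair_le (by ring)) (pair_le (by ring)))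

/-- The loss in the bound for merging a cycle into a path on at least `k / 2` vertices. A piece on
at most `k / 8` vertices leaves room for `k / 8 / Z` levels of draws; a longer one is rare. -/
noncomputable def mergeError (lam : ℝ) (q Z k : ℕ) : ℝ :=
  4 * q * k ^ 4 *
    (3 * √(16 * k * lam ^ (k / 8 / Z) + 4 * 8 ^ q * (2 / 3) ^ (k / 8)) + 6 * √lam ^ (k / 8))

lemma drawError_le_of_half (hZ : (8 : ℝ) ^ q ≤ (3 / 2) ^ (2 * Z)) (hlam : 0 ≤ lam)
    (hl : 8 * l ≤ k) (hj : j + 2 ≤ l) (hb : k ≤ 2 * b) :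
    drawError lam q (k - l + j - k / 8 / Z) (k / 8 / Z) (b - j - 1) ≤
      16 * k * lam ^ (k / 8 / Z) + 4 * 8 ^ q * (2 / 3) ^ (k / 8) := by
  have hZy : Z * (k / 8 / Z) ≤ k / 8 := Nat.mul_div_le _ _
  generalize k / 8 / Z = y at *
  have levels_le : ((k - l + j - y : ℕ) : ℝ) + 1 ≤ k := by exact_mod_cast (by omega)
  have draws_le : (8 : ℝ) ^ (q * y) * (2 / 3) ^ (2 * (k / 8)) ≤ 1 := by
    calc (8 : ℝ) ^ (q * y) * (2 / 3) ^ (2 * (k / 8))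
        = (8 ^ q) ^ y * (2 / 3) ^ (2 * (k / 8)) := by rw [pow_mul]
      _ ≤ ((3 / 2) ^ (2 * Z)) ^ y * (2 / 3) ^ (2 * (k / 8)) := by gcongr
      _ = (3 / 2) ^ (2 * (Z * y)) * (2 / 3) ^ (2 * (k / 8)) := by rw [← pow_mul, mul_assoc 2]
      _ ≤ (3 / 2) ^ (2 * (k / 8)) * (2 / 3) ^ (2 * (k / 8)) := by
          gcongr
          norm_num
      _ = 1 := by
          rw [← mul_pow]
          norm_num
  have room_le : (2 / 3 : ℝ) ^ ((b : ℤ) - j - 1) ≤ (2 / 3) ^ (2 * (k / 8) + k / 8) := by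
    rw [← zpow_natCast]
    refine zpow_le_zpow_right_of_le_one₀ (by norm_num) (by norm_num) ?_
    omega
  rw [drawError]
  refine add_le_add (by gcongr) ?_
  calc 4 * (8 : ℝ) ^ (q * (y + 1)) * (2 / 3) ^ ((b : ℤ) - j - 1)
      ≤ 4 * 8 ^ (q * (y + 1)) * (2 / 3) ^ (2 * (k / 8) + k / 8) := by gcongr
    _ = 4 * 8 ^ q * (2 / 3) ^ (k / 8) * (8 ^ (q * y) * (2 / 3) ^ (2 * (k / 8))) := by
        rw [mul_add_one, pow_add, pow_add]
        ring
    _ ≤ 4 * 8 ^ q * (2 / 3) ^ (k / 8) := mul_le_of_le_one_right (by positivity) draws_le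

lemma mergeBound_of_half (H : DrawParams θ lam q) (hk : 2 ≤ k)
    (hZ : (8 : ℝ) ^ q ≤ (3 / 2) ^ (2 * Z)) :
    MergeBound θ k ((k + 1) / 2) (mergeError lam q Z k) := by
  intro P hP C w₀ h b m hb
  have hC := h.nonneg H.theta_mem
  have peak_nonneg := peakNorm_nonneg θ (b + k + w₀)
  have hlam := H.lam_nonneg
  have mu_le_one : √lam ≤ 1 := Real.sqrt_le_one.2 H.lam_le_one
  set β := √(16 * k * lam ^ (k / 8 / Z) + 4 * 8 ^ q * (2 / 3) ^ (k / 8))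
  set K := 4 * q * k * (C * peakNorm θ (b + k + w₀))
  have hK : 0 ≤ K := by positivity
  refine (pathNorm_cyclePoly_mul_sub_mul_le H.theta_mem H.theta_lt_lam.le hk
    (B := (3 * β + 6 * √lam ^ (k / 8)) * K) ?_ m).trans_eq (by rw [mergeError]; ring)
  intro l hl j hj
  have hl' := (mem_Icc.1 hl).2
  rcases le_or_gt (8 * l) k with h8 | h8
  · refine ⟨K * β, ?_, h.pathNorm_exchangeDefect_mul_le H hk hP hl' hj
      (t₀ := k - l + j - k / 8 / Z) (y := k / 8 / Z) ?_ (Real.sqrt_nonneg _) ?_⟩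
    · have := mul_le_of_le_one_left (mul_nonneg hK (Real.sqrt_nonneg _ : 0 ≤ β))
        (pow_le_one₀ (n := l) (Real.sqrt_nonneg lam) mu_le_one)
      have : 0 ≤ 6 * √lam ^ (k / 8) * K := by positivity
      linarith
    · have := Nat.div_le_self (k / 8) Z
      omega
    · rw [Real.sq_sqrt (by positivity)]
      exact drawError_le_of_half hZ hlam h8 hj (by omega)
  · refine ⟨2 * K, ?_, h.pathNorm_exchangeDefect_mul_le_two_mul H.theta_mem H.q_pos hk hP hl'⟩
    calc 3 * √lam ^ l * (2 * K) ≤ 3 * √lam ^ (k / 8) * (2 * K) := by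
          have := pow_le_pow_of_le_one (Real.sqrt_nonneg lam) mu_le_one (by omega : k / 8 ≤ l)
          gcongr
      _ ≤ (3 * β + 6 * √lam ^ (k / 8)) * K := by
          have : 0 ≤ 3 * β * K := by positivity
          linarith

end MergeBound

section Chain

/-- The loss, relative to the bound for a path, on splitting a piece on `l` vertices off a cycle in
one of the `l` possible positions of the root. -/
noncomputable def pieceCost (lam : ℝ) (l : ℕ) : ℝ :=
  l * (3 * √lam ^ l) * √(5 * (l + 1))

/-- `f_n`, the counterpart of `cyclePoly k` for a cycle on `n` vertices of which every piece has at
most `k` vertices. -/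
noncomputable def longCyclePoly (k n : ℕ) : MvPolynomial ℕ ℝ :=
  ∑ l ∈ Icc 2 k, X l * ((l : ℝ) • pathPoly k (n - l))

/-- The parameters of the comparison of `cyclePoly k ^ r` with the polynomial of one long cycle:
`δ` and `η` are the losses for merging a cycle into a path on at least `k / 2`, respectively at
least `L * k`, vertices; `C` bounds the cost of all pieces, and `τ` that of the pieces on more than
`k / 2` vertices; `ε` is the total loss of `r` mergers. -/
structure ChainParams (θ lam : ℝ) (k r L : ℕ) (C τ δ η ε : ℝ) : Prop where
  theta_mem : θ ∈ Set.Icc 0.45 0.55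
  theta_le_lam : θ ≤ lam
  mergeBound_half : MergeBound θ k ((k + 1) / 2) δ
  mergeBound_large : MergeBound θ k (L * k) η
  sum_pieceCost_le : ∑ l ∈ Icc 2 k, pieceCost lam l ≤ C
  sum_pieceCost_tail_le : ∑ l ∈ Icc 2 k with k < 2 * l, pieceCost lam l ≤ τ
  delta_nonneg : 0 ≤ δ
  eta_nonneg : 0 ≤ η
  tail_le_one : (2 * C + 1) * τ ≤ 1
  loss_le : (2 * C + 1) * (L * δ + r * η) ≤ ε
  loss_le_one : ε ≤ 1

variable {θ lam C τ δ η ε : ℝ} {k r L i b m n : ℕ}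

lemma pieceCost_nonneg (lam : ℝ) (l : ℕ) : 0 ≤ pieceCost lam l := by
  unfold pieceCost
  positivity

lemma pathPoly_mul_cyclePoly_pow_sub (k b i : ℕ) :
    pathPoly k b * cyclePoly k ^ i - pathPoly k ((b + i * k : ℕ) : ℤ) =
      ∑ j ∈ range i, (cyclePoly k * pathPoly k ((b + j * k : ℕ) : ℤ) -
        pathPoly k ((b + j * k : ℕ) + k)) * cyclePoly k ^ (i - 1 - j) := by
  have telescope := sum_range_sub' (fun j => pathPoly k ((b + j * k : ℕ) : ℤ) *
    cyclePoly k ^ (i - j)) i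
  simp only [Nat.sub_self, pow_zero, mul_one, zero_mul, add_zero, Nat.sub_zero] at telescope
  rw [← telescope]
  refine sum_congr rfl fun j hj => ?_
  rw [mem_range] at hj
  rw [show i - j = i - 1 - j + 1 by omega, show i - (j + 1) = i - 1 - j by omega, pow_succ,
    show ((b + (j + 1) * k : ℕ) : ℤ) = (b + j * k : ℕ) + k by push_cast; ring]
  ring

namespace ChainParams

lemma theta_mem_unit (H : ChainParams θ lam k r L C τ δ η ε) : θ ∈ Set.Icc 0 1 := by
  obtain ⟨h, h'⟩ := H.theta_mem
  exact ⟨by linarith, by linarith⟩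

lemma cost_nonneg (H : ChainParams θ lam k r L C τ δ η ε) : 0 ≤ C :=
  (sum_nonneg fun l _ => pieceCost_nonneg lam l).trans H.sum_pieceCost_le

lemma loss_nonneg (H : ChainParams θ lam k r L C τ δ η ε) : 0 ≤ ε := by
  have := H.cost_nonneg
  have := H.delta_nonneg
  have := H.eta_nonneg
  exact le_trans (by positivity) H.loss_le

lemma pathNorm_mul_cyclePoly_pow_sub_le (H : ChainParams θ lam k r L C τ δ η ε) (hi : i ≤ r)
    (IH : ∀ j < i, HostBound θ k (cyclePoly k ^ j) (2 * C + 1) (j * k)) (hb : k ≤ 2 * b) (m : ℕ) :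
    pathNorm θ k m (pathPoly k b * cyclePoly k ^ i - pathPoly k ((b + i * k : ℕ) : ℤ)) ≤
      ε * peakNorm θ (b + i * k) := by
  have hC := H.cost_nonneg
  have hδ := H.delta_nonneg
  have hη := H.eta_nonneg
  have peak_nonneg := peakNorm_nonneg θ (b + i * k)
  have term_le : ∀ j ∈ range i, pathNorm θ k m ((cyclePoly k * pathPoly k ((b + j * k : ℕ) : ℤ) -
      pathPoly k ((b + j * k : ℕ) + k)) * cyclePoly k ^ (i - 1 - j)) ≤
        ((if j < L then δ else 0) + η) * ((2 * C + 1) * peakNorm θ (b + i * k)) := by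
    intro j hj
    rw [mem_range] at hj
    have size : b + j * k + k + (i - 1 - j) * k = b + i * k := by
      obtain ⟨d, rfl⟩ : ∃ d, i = j + 1 + d := ⟨i - (j + 1), by omega⟩
      rw [show j + 1 + d - 1 - j = d by omega]
      ring
    have host := IH (i - 1 - j) (by omega)
    have host_mem := pow_mem (cyclePoly_mem_nonnegCoeff k) (i - 1 - j)
    rw [← size]
    split_ifs with hjL
    · refine (H.mergeBound_half _ host_mem _ _ host (b + j * k) m (by omega)).trans ?_
      rw [size]
      exact mul_le_mul_of_nonneg_right (le_add_of_nonneg_right hη) (by positivity)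
    · have : L * k ≤ j * k := Nat.mul_le_mul_right k (not_lt.1 hjL)
      rw [zero_add]
      exact H.mergeBound_large _ host_mem _ _ host (b + j * k) m (by omega)
  have sum_delta_le : ∑ j ∈ range i, (if j < L then δ else 0) ≤ L * δ := by
    rw [← sum_filter, sum_const, nsmul_eq_mul]
    have card_le : #{j ∈ range i | j < L} ≤ #(range L) := card_le_card fun j => by simp
    rw [card_range] at card_le
    gcongr
  rw [pathPoly_mul_cyclePoly_pow_sub]
  calc _ ≤ ∑ j ∈ range i, ((if j < L then δ else 0) + η) *
          ((2 * C + 1) * peakNorm θ (b + i * k)) :=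
        (pathNorm_sum_le _ _).trans (sum_le_sum term_le)
    _ ≤ (L * δ + r * η) * ((2 * C + 1) * peakNorm θ (b + i * k)) := by
        rw [← sum_mul, sum_add_distrib, sum_const, card_range, nsmul_eq_mul]
        gcongr
    _ = (2 * C + 1) * (L * δ + r * η) * peakNorm θ (b + i * k) := by ring
    _ ≤ ε * peakNorm θ (b + i * k) := mul_le_mul_of_nonneg_right H.loss_le peak_nonneg

lemma pathNorm_mul_cyclePoly_pow_le (H : ChainParams θ lam k r L C τ δ η ε) (hi : i ≤ r)
    (IH : ∀ j < i, HostBound θ k (cyclePoly k ^ j) (2 * C + 1) (j * k)) (hb : k ≤ 2 * b) (m : ℕ) :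
    pathNorm θ k m (pathPoly k b * cyclePoly k ^ i) ≤ 2 * peakNorm θ (b + i * k) := by
  have path_le := pathNorm_pathPoly_le H.theta_mem_unit k m (b + i * k)
  have diff_le := H.pathNorm_mul_cyclePoly_pow_sub_le hi IH hb m
  have loss_le := mul_le_mul_of_nonneg_right H.loss_le_one (peakNorm_nonneg θ (b + i * k))
  rw [← sub_add_cancel (pathPoly k b * cyclePoly k ^ i) (pathPoly k ((b + i * k : ℕ) : ℤ))]
  linarith [map_add_le_add (pathNorm θ k m)
    (pathPoly k b * cyclePoly k ^ i - pathPoly k ((b + i * k : ℕ) : ℤ))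
    (pathPoly k ((b + i * k : ℕ) : ℤ))]

lemma pathNorm_sum_X_mul_le (H : ChainParams θ lam k r L C τ δ η ε) {x y : ℝ} (hx : 0 ≤ x)
    (hy : 0 ≤ y) {N : ℕ → ℕ} (hN : ∀ l ∈ Icc 2 k, N l + l = n)
    {R : ℕ → MvPolynomial ℕ ℝ}
    (short_le : ∀ l ∈ Icc 2 k, 2 * l ≤ k → ∀ m, pathNorm θ k m (R l) ≤ x * peakNorm θ (N l))
    (long_le : ∀ l ∈ Icc 2 k, k < 2 * l → ∀ m, pathNorm θ k m (R l) ≤ y * peakNorm θ (N l))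
    (m : ℕ) :
    pathNorm θ k m (∑ l ∈ Icc 2 k, X l * ((l : ℝ) • R l)) ≤ (x * C + y * τ) * peakNorm θ n := by
  have term_le : ∀ l ∈ Icc 2 k, pathNorm θ k m (X l * ((l : ℝ) • R l)) ≤
      (x * pieceCost lam l + y * if k < 2 * l then pieceCost lam l else 0) * peakNorm θ n := by
    intro l hl
    have shift := peakNorm_le_mul_peakNorm_add (a := N l) (w := l) H.theta_mem
      ((mem_Icc.1 hl).1.trans (Nat.le_add_left _ _))
    rw [hN l hl] at shift
    have cost_le {c : ℝ} (hc : 0 ≤ c) (h : ∀ m, pathNorm θ k m (R l) ≤ c * peakNorm θ (N l)) :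
        pathNorm θ k m (X l * ((l : ℝ) • R l)) ≤ c * pieceCost lam l * peakNorm θ n := by
      refine (pathNorm_X_mul_le H.theta_mem H.theta_le_lam hl
        (B := l * (c * (√(5 * (l + 1)) * peakNorm θ n))) (fun m => ?_) m).trans_eq
        (by rw [pieceCost]; ring)
      rw [map_smul_eq_mul, Real.norm_natCast]
      gcongr
      exact (h m).trans (mul_le_mul_of_nonneg_left shift hc)
    split_ifs with hkl
    · refine (cost_le hy (long_le l hl hkl)).trans ?_
      have := peakNorm_nonneg θ n
      have := pieceCost_nonneg lam l
      gcongr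
      exact le_add_of_nonneg_left (by positivity)
    · rw [mul_zero, add_zero]
      exact cost_le hx (short_le l hl (not_lt.1 hkl))
  refine (pathNorm_sum_le _ _).trans ((sum_le_sum term_le).trans ?_)
  rw [← sum_mul, sum_add_distrib, ← mul_sum, ← mul_sum, ← sum_filter]
  exact mul_le_mul_of_nonneg_right (add_le_add
    (mul_le_mul_of_nonneg_left H.sum_pieceCost_le hx)
    (mul_le_mul_of_nonneg_left H.sum_pieceCost_tail_le hy)) (peakNorm_nonneg θ n)

lemma hostBound_cyclePoly_pow (H : ChainParams θ lam k r L C τ δ η ε) (hi : i ≤ r) :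
    HostBound θ k (cyclePoly k ^ i) (2 * C + 1) (i * k) := by
  have hC := H.cost_nonneg
  induction i using Nat.strong_induction_on with
  | _ i ih =>
  intro b m
  rcases i with _ | i
  · rw [pow_zero, mul_one, zero_mul, add_zero]
    exact (pathNorm_pathPoly_le H.theta_mem_unit k m b).trans
      (le_mul_of_one_le_left (peakNorm_nonneg θ b) (by linarith))
  have expand : pathPoly k b * cyclePoly k ^ (i + 1) = ∑ l ∈ Icc 2 k,
      X l * ((l : ℝ) • (pathPoly k (k - l) * pathPoly k b * cyclePoly k ^ i)) := by
    rw [pow_succ', ← mul_assoc, mul_comm (pathPoly k b), cyclePoly, sum_mul, sum_mul]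
    exact sum_congr rfl fun l _ => by simp only [mul_assoc, smul_mul_assoc]
  have join_le : ∀ l ∈ Icc 2 k, ∀ m,
      pathNorm θ k m (pathPoly k (k - l) * pathPoly k b * cyclePoly k ^ i) ≤
        pathNorm θ k m (pathPoly k ((b + (k - l) : ℕ) : ℤ) * cyclePoly k ^ i) := by
    intro l hl m
    have powers := pow_mem (cyclePoly_mem_nonnegCoeff k) i
    refine pathNorm_mono (mul_mem (mul_mem (pathPoly_mem_nonnegCoeff _ _)
      (pathPoly_mem_nonnegCoeff _ _)) powers) ?_
    rw [← sub_mul, show ((b + (k - l) : ℕ) : ℤ) = (k - l) + b by have := mem_Icc.1 hl; omega]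
    exact mul_mem (pathPoly_add_sub_mul_mem_nonnegCoeff k _ _) powers
  rw [expand]
  refine (H.pathNorm_sum_X_mul_le zero_le_two (by linarith : 0 ≤ 2 * C + 1)
    (N := fun l => b + (k - l) + i * k) (n := b + (i + 1) * k) (fun l hl => ?_)
    (fun l hl hkl m => (join_le l hl m).trans (H.pathNorm_mul_cyclePoly_pow_le (by omega)
      (fun j hj => ih j (by omega) (by omega)) (by omega) m))
    (fun l hl _ m => (join_le l hl m).trans (ih i (by omega) (by omega) _ m)) m).trans ?_
  · have := mem_Icc.1 hl
    have := add_one_mul i k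
    omega
  · have := H.tail_le_one
    exact mul_le_mul_of_nonneg_right (by linarith) (peakNorm_nonneg θ _)

lemma pathNorm_cyclePoly_pow_sub_le (H : ChainParams θ lam k r L C τ δ η ε) (hr : 1 ≤ r) (m : ℕ) :
    pathNorm θ k m (cyclePoly k ^ r - longCyclePoly k (r * k)) ≤
      (ε * C + (2 * C + 2) * τ) * peakNorm θ (r * k) := by
  have hC := H.cost_nonneg
  obtain ⟨r, rfl⟩ : ∃ d, r = d + 1 := ⟨r - 1, by omega⟩
  have expand : cyclePoly k ^ (r + 1) - longCyclePoly k ((r + 1) * k) = ∑ l ∈ Icc 2 k, X l *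
      ((l : ℝ) • (pathPoly k ((k - l : ℕ) : ℤ) * cyclePoly k ^ r -
        pathPoly k ((k - l + r * k : ℕ) : ℤ))) := by
    rw [pow_succ', longCyclePoly]
    conv_lhs => enter [1, 1]; rw [cyclePoly]
    rw [sum_mul, ← sum_sub_distrib]
    refine sum_congr rfl fun l hl => ?_
    have hl := (mem_Icc.1 hl).2
    rw [smul_sub, mul_sub, mul_assoc, smul_mul_assoc, Nat.cast_add, Nat.cast_sub hl,
      show (((r + 1) * k : ℕ) : ℤ) - l = k - l + (r * k : ℕ) by push_cast; ring]
  have IH : ∀ j ≤ r, HostBound θ k (cyclePoly k ^ j) (2 * C + 1) (j * k) :=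
    fun j hj => H.hostBound_cyclePoly_pow (by omega)
  rw [expand]
  refine H.pathNorm_sum_X_mul_le H.loss_nonneg (by linarith : 0 ≤ 2 * C + 2)
    (N := fun l => k - l + r * k) (fun l hl => ?_)
    (fun l _ hkl m => H.pathNorm_mul_cyclePoly_pow_sub_le (by omega)
      (fun j hj => IH j hj.le) (by omega) m) (fun l _ _ m => ?_) m
  · have := mem_Icc.1 hl
    have := add_one_mul r k
    omega
  · have path_le := pathNorm_pathPoly_le H.theta_mem_unit k m (k - l + r * k)
    linarith [map_sub_le_add (pathNorm θ k m) (pathPoly k ((k - l : ℕ) : ℤ) * cyclePoly k ^ r)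
      (pathPoly k ((k - l + r * k : ℕ) : ℤ)), IH r le_rfl (k - l) m]

end ChainParams

end Chain

section LongCycle

variable {θ lam C τ δ η ε : ℝ} {k r L m n : ℕ}

lemma mixedDeriv_pathPoly (k : ℕ) {m : ℕ} (s : Fin m → ℕ) (hs : ∀ i, s i ∈ Icc 2 k) (t : ℤ) :
    mixedDeriv s (pathPoly k t) = if ∑ i, (s i : ℤ) = t then (m.factorial : ℝ) else 0 := by
  induction m generalizing t with
  | zero =>
    rcases lt_trichotomy t 0 with ht | rfl | ht
    · rw [pathPoly_of_neg ht, map_zero, if_neg (by simp; omega)]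
    · simp [mixedDeriv]
    · rw [pathPoly_rec (by omega), map_sum, if_neg (by simp; omega)]
      simp only [mixedDeriv_X_mul_zero, sum_const_zero]
  | succ m ih =>
    have sum_pos : 2 ≤ ∑ i, (s i : ℤ) := by
      have : (s 0 : ℤ) ≤ ∑ i, (s i : ℤ) :=
        single_le_sum (f := fun i => (s i : ℤ)) (fun _ _ => Int.natCast_nonneg _) (mem_univ 0)
      have := mem_Icc.1 (hs 0)
      omega
    rcases lt_trichotomy t 0 with ht | rfl | ht
    · rw [pathPoly_of_neg ht, map_zero, if_neg (by omega)]
    · rw [pathPoly_zero, if_neg (by omega)]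
      simp [mixedDeriv]
    · have remove (i : Fin (m + 1)) :
          mixedDeriv (i.removeNth s) (pathPoly k (t - s i)) =
            if ∑ i, (s i : ℤ) = t then (m.factorial : ℝ) else 0 := by
        rw [ih (i.removeNth s) (fun j => hs _), Fin.sum_univ_succAbove _ i]
        simp only [eq_sub_iff_add_eq', Fin.removeNth_apply]
      rw [pathPoly_rec (by omega), mixedDeriv_sum_X_mul _ _ s hs,
        sum_congr rfl fun i _ => remove i]
      split_ifs <;> simp [Nat.factorial_succ]

lemma mixedDeriv_longCyclePoly (n : ℕ) (s : Fin (m + 1) → ℕ) (hs : ∀ i, s i ∈ Icc 2 k) :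
    mixedDeriv s (longCyclePoly k n) = n / (m + 1) * mixedDeriv s (pathPoly k n) := by
  have remove (i : Fin (m + 1)) :
      mixedDeriv (i.removeNth s) ((s i : ℝ) • pathPoly k (n - s i)) =
        s i * if ∑ i, (s i : ℤ) = n then (m.factorial : ℝ) else 0 := by
    rw [map_smul, smul_eq_mul, mixedDeriv_pathPoly k (i.removeNth s) (fun j => hs _),
      Fin.sum_univ_succAbove _ i]
    simp only [eq_sub_iff_add_eq', Fin.removeNth_apply]
  rw [longCyclePoly, mixedDeriv_sum_X_mul _ _ s hs, sum_congr rfl fun i _ => remove i, ← sum_mul,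
    mixedDeriv_pathPoly k s hs]
  split_ifs with h
  · rw [show ∑ i, (s i : ℝ) = n by exact_mod_cast h, Nat.factorial_succ]
    push_cast
    field_simp
  · simp

lemma pathNorm_longCyclePoly_le (hθ : θ ∈ Set.Icc 0 1) (k n m : ℕ) :
    pathNorm θ k (m + 1) (longCyclePoly k n) ≤ n / (m + 1) * √(sumWeight θ (m + 1) n) := by
  have sq_eq : pathNorm θ k (m + 1) (longCyclePoly k n) ^ 2 =
      (n / (m + 1)) ^ 2 * pathNorm θ k (m + 1) (pathPoly k n) ^ 2 := by
    simp only [pathNorm, wordNorm_sq, mul_sum]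
    refine sum_congr rfl fun s _ => ?_
    rw [mixedDeriv_longCyclePoly n _ fun i => (s i).2]
    ring
  refine abs_le_of_sq_le_sq' ?_ (by positivity) |>.2
  rw [sq_eq, mul_pow, Real.sq_sqrt (sumWeight_nonneg hθ _ _)]
  exact mul_le_mul_of_nonneg_left (pathNorm_pathPoly_sq_le hθ k (m + 1) n) (by positivity)

lemma ChainParams.pathNorm_cyclePoly_pow_sq_le (H : ChainParams θ lam k r L C τ δ η ε)
    (hr : 1 ≤ r) (hm : 1 ≤ m) (hpeak : peakWeight θ (r * k) = sumWeight θ m (r * k)) :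
    pathNorm θ k m (cyclePoly k ^ r) ^ 2 ≤
      (((r * k : ℕ) : ℝ) / m + (ε * C + (2 * C + 2) * τ)) ^ 2 * sumWeight θ m (r * k) := by
  obtain ⟨m, rfl⟩ : ∃ d, m = d + 1 := ⟨m - 1, by omega⟩
  have diff_le := H.pathNorm_cyclePoly_pow_sub_le hr (m + 1)
  have long_le := pathNorm_longCyclePoly_le H.theta_mem_unit k (r * k) m
  have triangle := map_add_le_add (pathNorm θ k (m + 1)) (cyclePoly k ^ r - longCyclePoly k (r * k))
    (longCyclePoly k (r * k))
  rw [sub_add_cancel] at triangle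
  rw [peakNorm, hpeak] at diff_le
  rw [← Real.sq_sqrt (sumWeight_nonneg H.theta_mem_unit (m + 1) (r * k)), ← mul_pow]
  refine pow_le_pow_left₀ (apply_nonneg _ _) ?_ 2
  push_cast at long_le ⊢
  linarith

end LongCycle

section Mode

variable {θ : ℝ} {m n x : ℕ}

lemma sumWeight_succ_succ (θ : ℝ) (x n : ℕ) :
    sumWeight θ (x + 1) (n + 2) = θ * sumWeight θ (x + 1) (n + 1) + (1 - θ) * sumWeight θ x n :=
  sum_partWeight_mul_succ θ (sumWeight θ x) n

lemma sumWeight_succ_eq (θ : ℝ) (x d : ℕ) :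
    sumWeight θ (x + 1) (2 * x + 2 + d) = (1 - θ) ^ (x + 1) * θ ^ d * (x + d).choose x := by
  induction x generalizing d with
  | zero =>
    induction d with
    | zero => simp [sumWeight, partWeight]
    | succ d ih =>
      rw [show 2 * 0 + 2 + (d + 1) = d + 1 + 2 by ring, sumWeight_succ_succ, sumWeight.eq_1,
        if_neg (by omega), show d + 1 + 1 = 2 * 0 + 2 + d by ring, ih]
      simp only [Nat.choose_zero_right]
      ring
  | succ x ihx =>
    induction d with
    | zero =>
      rw [add_zero, sumWeight_succ_succ, sumWeight_eq_zero (by omega), show 2 * (x + 1) =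
        2 * x + 2 + 0 by ring, ihx]
      simp only [add_zero, Nat.choose_self]
      ring
    | succ d ihd =>
      rw [show 2 * (x + 1) + 2 + (d + 1) = 2 * (x + 1) + (d + 1) + 2 by ring, sumWeight_succ_succ,
        show 2 * (x + 1) + (d + 1) + 1 = 2 * (x + 1) + 2 + d by ring, ihd,
        show 2 * (x + 1) + (d + 1) = 2 * x + 2 + (d + 1) by ring, ihx,
        show x + 1 + (d + 1) = x + (d + 1) + 1 by ring, Nat.choose_succ_succ,
        show x + 1 + d = x + (d + 1) by ring]
      push_cast
      ring

/-- The sequences of `m` integers `≥ 2` with sum `n`: the possible sizes of the components of a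
graph in `I_{0,m}`. -/
def pathSizes (m n : ℕ) : Finset (Fin m → ℕ) :=
  {s ∈ piAntidiag univ n | ∀ i, 2 ≤ s i}

lemma mem_pathSizes {s : Fin m → ℕ} : s ∈ pathSizes m n ↔ (∀ i, 2 ≤ s i) ∧ ∑ i, s i = n := by
  simp [pathSizes, and_comm]

lemma card_pathSizes_succ (x d : ℕ) : #(pathSizes (x + 1) (2 * x + 2 + d)) = (x + d).choose x := by
  have card_antidiag : #(piAntidiag (univ : Finset (Fin (x + 1))) d) = (x + d).choose x := by
    rw [← map_sym_eq_piAntidiag, card_map, sym_univ, card_univ, Sym.card_sym_eq_choose,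
      Fintype.card_fin, show x + 1 + d - 1 = x + d by omega, Nat.choose_symm_add]
  rw [← card_antidiag]
  refine card_nbij' (fun s i => s i - 2) (fun s i => s i + 2) ?_ ?_ ?_ ?_
  · intro s hs
    obtain ⟨two_le, sum_eq⟩ := mem_pathSizes.1 hs
    simp [sum_tsub_distrib univ fun i _ => two_le i, sum_eq]
    omega
  · intro s hs
    have sum_eq : ∑ i, s i = d := by simpa using hs
    simp [mem_pathSizes, sum_add_distrib, sum_eq]
    omega
  · intro s hs
    funext i
    exact Nat.sub_add_cancel ((mem_pathSizes.1 hs).1 i)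
  · intro s _
    rfl

lemma sumWeight_eq_mul_card_pathSizes (θ : ℝ) (hm : 1 ≤ m) (hn : 2 * m ≤ n) :
    sumWeight θ m n = (1 - θ) ^ m * θ ^ (n - 2 * m) * #(pathSizes m n) := by
  obtain ⟨x, rfl⟩ : ∃ x, m = x + 1 := ⟨m - 1, by omega⟩
  obtain ⟨d, rfl⟩ : ∃ d, n = 2 * x + 2 + d := ⟨n - (2 * x + 2), by omega⟩
  rw [sumWeight_succ_eq, card_pathSizes_succ, show 2 * x + 2 + d - 2 * (x + 1) = d by omega]

lemma sumWeight_succ_mul (θ : ℝ) (hx : 1 ≤ x) (hn : 2 * x ≤ n) :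
    sumWeight θ (x + 1) n * (θ ^ 2 * (x * (n - x - 1))) =
      sumWeight θ x n * ((1 - θ) * ((n - 2 * x) * (n - 2 * x - 1))) := by
  obtain ⟨y, rfl⟩ : ∃ y, x = y + 1 := ⟨x - 1, by omega⟩
  obtain ⟨d, rfl⟩ : ∃ d, n = 2 * y + 2 + d := ⟨n - (2 * y + 2), by omega⟩
  rcases Nat.lt_or_ge d 2 with hd | hd
  · rw [sumWeight_eq_zero (by omega)]
    interval_cases d <;>
    · push_cast
      ring
  · obtain ⟨e, rfl⟩ : ∃ e, d = e + 2 := ⟨d - 2, by omega⟩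
    have choose_up := Nat.choose_succ_right_eq (y + 1 + e) y
    have choose_low := Nat.choose_mul_succ_eq (y + 1 + e) y
    rw [show y + 1 + e - y = e + 1 by omega] at choose_up
    rw [show y + 1 + e + 1 - y = e + 2 by omega, show y + 1 + e + 1 = y + (e + 2) by ring]
      at choose_low
    rw [sumWeight_succ_eq, show 2 * y + 2 + (e + 2) = 2 * (y + 1) + 2 + e by ring,
      sumWeight_succ_eq]
    replace choose_up := congrArg (Nat.cast : ℕ → ℝ) choose_up
    replace choose_low := congrArg (Nat.cast : ℕ → ℝ) choose_low
    push_cast at choose_up choose_low ⊢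
    linear_combination (1 - θ) ^ (y + 2) * θ ^ (e + 2) * (y + e + 2) * choose_up +
      (1 - θ) ^ (y + 2) * θ ^ (e + 2) * (e + 1) * choose_low

/-- The equation saying that the sequence `x ↦ sumWeight θ x n` is stationary at `x = m`. -/
def IsBalanced (θ : ℝ) (m n : ℕ) : Prop :=
  θ ^ 2 * (m * (n - m - 1)) = (1 - θ) * (((n : ℝ) - 2 * m) * (n - 2 * m - 1))

lemma IsBalanced.sumWeight_le_succ (h : IsBalanced θ m n) (hθ : θ ∈ Set.Ioo 0 1)
    (hn : 2 * m + 2 ≤ n) (hx : x < m) : sumWeight θ x n ≤ sumWeight θ (x + 1) n := by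
  have weight_nonneg := sumWeight_nonneg (Set.Ioo_subset_Icc_self hθ) (n := n)
  rcases Nat.eq_zero_or_pos x with rfl | x_pos
  · rw [sumWeight.eq_1, if_neg (by omega)]
    exact weight_nonneg _
  rify at hn hx x_pos
  have x_lt : (x : ℝ) + 1 ≤ m := by exact_mod_cast hx
  have one_le_x : (1 : ℝ) ≤ x := by exact_mod_cast x_pos
  obtain ⟨θ_pos, θ_lt⟩ := hθ
  have coeff_pos : 0 < θ ^ 2 * (x * ((n : ℝ) - x - 1)) := by
    have : 0 < (n : ℝ) - x - 1 := by linarith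
    positivity
  have coeff_le := calc
    θ ^ 2 * (x * ((n : ℝ) - x - 1)) ≤ θ ^ 2 * (m * ((n : ℝ) - m - 1)) :=
      mul_le_mul_of_nonneg_left (by nlinarith) (by positivity)
    _ = (1 - θ) * (((n : ℝ) - 2 * m) * (n - 2 * m - 1)) := h
    _ ≤ (1 - θ) * (((n : ℝ) - 2 * x) * (n - 2 * x - 1)) :=
      mul_le_mul_of_nonneg_left (mul_le_mul (by linarith) (by linarith) (by linarith)
        (by linarith)) (by linarith)
  refine le_of_mul_le_mul_right ?_ coeff_pos
  rw [sumWeight_succ_mul θ (by exact_mod_cast x_pos) (by rify; linarith)]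
  exact mul_le_mul_of_nonneg_left coeff_le (weight_nonneg x)

lemma IsBalanced.sumWeight_succ_le (h : IsBalanced θ m n) (hθ : θ ∈ Set.Ioo 0 1) (hm : 1 ≤ m)
    (hn : 2 * m + 2 ≤ n) (hx : m ≤ x) : sumWeight θ (x + 1) n ≤ sumWeight θ x n := by
  have weight_nonneg := sumWeight_nonneg (Set.Ioo_subset_Icc_self hθ) (n := n)
  rcases Nat.lt_or_ge n (2 * x) with hnx | hnx
  · rw [sumWeight_eq_zero (by omega)]
    exact weight_nonneg _
  have one_le_x := hm.trans hx
  have ratio := sumWeight_succ_mul θ one_le_x hnx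
  rify at hn hx hnx hm one_le_x
  obtain ⟨θ_pos, θ_lt⟩ := hθ
  have coeff_pos : 0 < θ ^ 2 * (x * ((n : ℝ) - x - 1)) := by
    have : 0 < (n : ℝ) - x - 1 := by linarith
    positivity
  have coeff_le := calc
    (1 - θ) * (((n : ℝ) - 2 * x) * (n - 2 * x - 1)) ≤
        (1 - θ) * (((n : ℝ) - 2 * m) * (n - 2 * m - 1)) :=
      mul_le_mul_of_nonneg_left (by nlinarith) (by linarith)
    _ = θ ^ 2 * (m * ((n : ℝ) - m - 1)) := h.symm
    _ ≤ θ ^ 2 * (x * ((n : ℝ) - x - 1)) :=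
      mul_le_mul_of_nonneg_left (by nlinarith) (by positivity)
  refine le_of_mul_le_mul_right ?_ coeff_pos
  rw [ratio]
  exact mul_le_mul_of_nonneg_left coeff_le (weight_nonneg x)

lemma IsBalanced.peakWeight_eq (h : IsBalanced θ m n) (hθ : θ ∈ Set.Ioo 0 1) (hm : 1 ≤ m)
    (hn : 2 * m + 2 ≤ n) : peakWeight θ n = sumWeight θ m n := by
  obtain ⟨x, peak_eq⟩ := exists_peakWeight_eq θ n
  refine le_antisymm (peak_eq.trans_le ?_)
    (sumWeight_le_peakWeight (Set.Ioo_subset_Icc_self hθ) m n)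
  rcases le_total x m with hx | hx
  · refine Nat.decreasingInduction' (P := fun y => sumWeight θ y n ≤ sumWeight θ m n)
      (fun y hy _ ih => (h.sumWeight_le_succ hθ hn hy).trans ih) hx le_rfl
  · exact Nat.le_induction le_rfl
      (fun y hy ih => (h.sumWeight_succ_le hθ hm hn hy).trans ih) x hx

lemma exists_mul_eq_one_sub_mul {η x z : ℝ} (hη : 0 < η) (hη' : η ≤ 0.05)
    (hx : |x - 1 / 3| ≤ η / 100) (hz : |z| ≤ η / 100) :
    ∃ θ ∈ Set.Icc (1 / 2 - η) (1 / 2 + η),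
      θ ^ 2 * (x * (1 - x - z)) = (1 - θ) * ((1 - 2 * x) * (1 - 2 * x - z)) := by
  obtain ⟨u, rfl⟩ : ∃ u, x = 1 / 3 + u := ⟨x - 1 / 3, by ring⟩
  rw [add_sub_cancel_left] at hx
  have sq_bound : |u ^ 2| ≤ η / 100 / 100 := by
    rw [abs_pow]
    nlinarith [abs_nonneg u]
  have mul_bound : |u * z| ≤ η / 100 / 100 := by
    rw [abs_mul]
    nlinarith [abs_nonneg u, abs_nonneg z]
  rw [abs_le] at hx hz sq_bound mul_bound
  set p := (1 / 3 + u) * (1 - (1 / 3 + u) - z) with p_def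
  set q := (1 - 2 * (1 / 3 + u)) * (1 - 2 * (1 / 3 + u) - z) with q_def
  have p_lower : 2 / 9 - η / 50 ≤ p := by linarith
  have p_upper : p ≤ 2 / 9 + η / 50 := by linarith
  have q_lower : 1 / 9 - η / 50 ≤ q := by linarith
  have q_upper : q ≤ 1 / 9 + η / 50 := by linarith
  have cont : ContinuousOn (fun θ : ℝ => θ ^ 2 * p - (1 - θ) * q)
      (Set.Icc (1 / 2 - η) (1 / 2 + η)) := by fun_prop
  have sq_p_le : (1 / 2 - η) ^ 2 * p ≤ 1 / 18 := by
    nlinarith [mul_le_mul_of_nonneg_left p_upper (sq_nonneg (1 / 2 - η))]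
  have le_q : 1 / 18 ≤ (1 / 2 + η) * q := by nlinarith [q_lower]
  have q_le : (1 / 2 - η) * q ≤ 1 / 18 := by nlinarith [q_upper]
  have le_sq_p : 1 / 18 ≤ (1 / 2 + η) ^ 2 * p := by
    nlinarith [mul_le_mul_of_nonneg_left p_lower (sq_nonneg (1 / 2 + η))]
  obtain ⟨θ, hθ, root⟩ := intermediate_value_Icc (by linarith) cont
    (show (0 : ℝ) ∈ Set.Icc _ _ from ⟨by linarith, by linarith⟩)
  exact ⟨θ, hθ, sub_eq_zero.1 root⟩

lemma exists_isBalanced {η : ℝ} (hη : 0 < η) (hη' : η ≤ 0.05) (hn : 1 ≤ n)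
    (hx : |(m : ℝ) / n - 1 / 3| ≤ η / 100) (hz : 1 / (n : ℝ) ≤ η / 100) :
    ∃ θ ∈ Set.Icc (1 / 2 - η) (1 / 2 + η), IsBalanced θ m n := by
  obtain ⟨θ, hθ, root⟩ := exists_mul_eq_one_sub_mul hη hη' hx
    ((abs_of_nonneg (by positivity)).trans_le hz)
  have : (0 : ℝ) < n := by exact_mod_cast hn
  refine ⟨θ, hθ, ?_⟩
  rw [IsBalanced]
  field_simp at root
  linear_combination root

end Mode

section Asymptotics

open Filter Topology

variable {lam c : ℝ}

lemma tendsto_pow_mul_pow_div {a : ℝ} (ha : a ∈ Set.Ioo 0 1) (j : ℕ) {d : ℕ} (hd : 1 ≤ d) :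
    Tendsto (fun k : ℕ => (k : ℝ) ^ j * a ^ (k / d)) atTop (𝓝 0) := by
  obtain ⟨a_pos, a_lt⟩ := ha
  have quotient_atTop : Tendsto (fun k : ℕ => k / d + 1) atTop atTop :=
    (tendsto_add_atTop_nat 1).comp (Nat.tendsto_div_const_atTop (by omega))
  have majorant := ((tendsto_pow_const_mul_const_pow_of_abs_lt_one j
    (by rwa [abs_of_pos a_pos])).comp quotient_atTop).const_mul ((d : ℝ) ^ j / a)
  rw [mul_zero] at majorant
  refine squeeze_zero (fun k => by positivity) (fun k => ?_) majorant
  have k_le : (k : ℝ) ≤ d * ((k / d + 1 : ℕ) : ℝ) := by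
    exact_mod_cast (Nat.lt_mul_div_succ k (by omega)).le
  calc (k : ℝ) ^ j * a ^ (k / d) ≤ (d * ((k / d + 1 : ℕ) : ℝ)) ^ j * a ^ (k / d) := by gcongr
    _ = _ := by
      rw [Function.comp_apply, mul_pow, pow_succ]
      field_simp

lemma tendsto_mergeError (hlam : lam ∈ Set.Ioo 0 1) (q : ℕ) {Z : ℕ} (hZ : 1 ≤ Z) :
    Tendsto (mergeError lam q Z) atTop (𝓝 0) := by
  have sqrt_mem : √lam ∈ Set.Ioo 0 1 :=
    ⟨Real.sqrt_pos.2 hlam.1, (Real.sqrt_lt' one_pos).2 (by simpa using hlam.2)⟩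
  have levels := (tendsto_pow_mul_pow_div hlam 9 (d := 8 * Z) (by omega)).const_mul 16
  have draws := (tendsto_pow_mul_pow_div (a := 2 / 3) (by norm_num) 8 (d := 8)
    (by norm_num)).const_mul (4 * 8 ^ q)
  have pieces := (tendsto_pow_mul_pow_div sqrt_mem 4 (d := 8) (by norm_num)).const_mul 6
  have total := (((levels.add draws).sqrt.const_mul 3).add pieces).const_mul (4 * q : ℝ)
  simp only [mul_zero, add_zero, Real.sqrt_zero] at total
  refine total.congr fun k => ?_
  have factor : 16 * ((k : ℝ) ^ 9 * lam ^ (k / (8 * Z))) +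
      4 * 8 ^ q * ((k : ℝ) ^ 8 * (2 / 3) ^ (k / 8)) =
      ((k : ℝ) ^ 4) ^ 2 * (16 * k * lam ^ (k / 8 / Z) + 4 * 8 ^ q * (2 / 3 : ℝ) ^ (k / 8)) := by
    rw [Nat.div_div_eq_div_mul]
    ring
  rw [factor, Real.sqrt_mul (by positivity), Real.sqrt_sq (by positivity), mergeError]
  ring

lemma mergeError_nonneg (lam : ℝ) (q Z k : ℕ) : 0 ≤ mergeError lam q Z k := by
  unfold mergeError
  positivity

lemma summable_pieceCost (hlam : lam < 1) : Summable (pieceCost lam) := by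
  have sqrt_lt : ‖√lam‖ < 1 := by
    rw [Real.norm_of_nonneg (Real.sqrt_nonneg _)]
    exact (Real.sqrt_lt' one_pos).2 (by simpa using hlam)
  have majorant := ((summable_pow_mul_geometric_of_norm_lt_one 2 sqrt_lt).add
    (summable_pow_mul_geometric_of_norm_lt_one 1 sqrt_lt)).mul_left 15
  refine Summable.of_nonneg_of_le (pieceCost_nonneg lam) (fun l => ?_) majorant
  have sqrt_le : √(5 * ((l : ℝ) + 1)) ≤ 5 * (l + 1) :=
    Real.sqrt_le_iff.2 ⟨by positivity, by nlinarith [(Nat.cast_nonneg l : (0 : ℝ) ≤ l)]⟩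
  calc pieceCost lam l ≤ (l : ℝ) * (3 * √lam ^ l) * (5 * (l + 1)) := by
        unfold pieceCost
        gcongr
    _ = _ := by ring

lemma eventually_sum_pieceCost_tail_le (hlam : lam < 1) {τ : ℝ} (hτ : 0 < τ) :
    ∀ᶠ k : ℕ in atTop, ∑ l ∈ Icc 2 k with k < 2 * l, pieceCost lam l ≤ τ := by
  obtain ⟨s, hs⟩ := summable_iff_vanishing_norm.1 (summable_pieceCost hlam) τ hτ
  filter_upwards [eventually_ge_atTop (2 * s.sup id)] with k hk
  refine (le_abs_self _).trans (hs _ (disjoint_left.2 fun l hl hls => ?_)).le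
  have : l ≤ s.sup id := le_sup (f := id) hls
  have := (mem_filter.1 hl).2
  omega

lemma exists_pow_mul_pow_le {a x δ : ℝ} (hx : x ∈ Set.Ico 0 1) (hδ : 0 < δ) (ha : 0 < a) :
    ∃ s : ℕ, a * x ^ s ≤ δ := by
  obtain ⟨s, hs⟩ := exists_pow_lt_of_lt_one (div_pos hδ ha) hx.2
  exact ⟨s, by rw [mul_comm]; exact ((lt_div_iff₀ ha).1 hs).le⟩

lemma eventually_merge_loss_le (hlam : lam ∈ Set.Ioo 0 1) (hc : 0 ≤ c) (hg : c * √lam < 1)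
    (L q : ℕ) {Z : ℕ} (hZ : 1 ≤ Z) {a ε : ℝ} (ha : 0 ≤ a) (hε : 0 < ε) :
    ∀ᶠ k : ℕ in atTop, ∀ r : ℕ, (r : ℝ) ≤ c ^ k →
      a * (L * mergeError lam q Z k + r * (60 * q * k ^ 4 * √lam ^ k)) ≤ ε := by
  have merge_tendsto := (tendsto_mergeError hlam q hZ).const_mul (L : ℝ)
  have large_tendsto := (tendsto_pow_const_mul_const_pow_of_abs_lt_one 4 (show |c * √lam| < 1 by
    rwa [abs_of_nonneg (by positivity)])).const_mul (60 * q : ℝ)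
  have total := (merge_tendsto.add large_tendsto).const_mul a
  simp only [mul_zero, add_zero] at total
  filter_upwards [total.eventually_le_const hε] with k hk r hr
  refine (mul_le_mul_of_nonneg_left (add_le_add_right ?_ _) ha).trans hk
  calc (r : ℝ) * (60 * q * k ^ 4 * √lam ^ k) ≤ c ^ k * (60 * q * k ^ 4 * √lam ^ k) := by gcongr
    _ = 60 * q * (k ^ 4 * (c * √lam) ^ k) := by ring

lemma eventually_exists_chainParams (hlam : lam ∈ Set.Ioc (1 / 2) 0.9) (hc : 0 ≤ c)
    (hg : c * √lam < 1) {δ : ℝ} (hδ : 0 < δ) :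
    ∀ᶠ k : ℕ in atTop, ∀ r : ℕ, (r : ℝ) ≤ c ^ k →
      ∀ θ ∈ Set.Icc (0.45 : ℝ) 0.55, θ ≤ (lam + 1 / 2) / 2 →
        ∃ (L : ℕ) (C τ δ' η ε : ℝ), ChainParams θ lam k r L C τ δ' η ε ∧
          ε * C + (2 * C + 2) * τ ≤ δ := by
  obtain ⟨half_lt, lam_le⟩ := hlam
  have hlam : lam ∈ Set.Ioo 0 1 := ⟨by linarith, by linarith⟩
  obtain ⟨q, hq⟩ := exists_nat_ge (40 / (lam - 1 / 2))
  obtain ⟨s, hs⟩ := exists_pow_mul_pow_le (a := 8 ^ q) (x := 2 / 3) (δ := 0.45) (by norm_num)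
    (by norm_num) (by positivity)
  obtain ⟨Z, hZ⟩ := pow_unbounded_of_one_lt ((8 : ℝ) ^ q) (show (1 : ℝ) < 3 / 2 by norm_num)
  have hZ' : (8 : ℝ) ^ q ≤ (3 / 2) ^ (2 * (Z + 1)) :=
    hZ.le.trans (pow_le_pow_right₀ (by norm_num) (by omega))
  set C := ∑' l, pieceCost lam l
  have C_nonneg : 0 ≤ C := tsum_nonneg (pieceCost_nonneg lam)
  obtain ⟨τ, τ_pos, τ_lt⟩ :=
    exists_between (show 0 < min (1 / (2 * C + 1)) (δ / 2 / (2 * C + 2)) by positivity)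
  obtain ⟨ε, ε_pos, ε_lt⟩ := exists_between (show 0 < min 1 (δ / 2 / (C + 1)) by positivity)
  rw [lt_min_iff, lt_div_iff₀ (by positivity), lt_div_iff₀ (by positivity)] at τ_lt
  rw [lt_min_iff, lt_div_iff₀ (by positivity)] at ε_lt
  filter_upwards [eventually_sum_pieceCost_tail_le hlam.2 τ_pos, eventually_ge_atTop 2,
    eventually_merge_loss_le hlam hc hg (s + 1) q (Nat.le_add_left 1 Z)
      (show 0 ≤ 2 * C + 1 by positivity) ε_pos] with k tail_le hk loss_le r hr θ hθ θ_le
  have draw : DrawParams θ lam q := by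
    refine ⟨hθ, by linarith, lam_le, ?_⟩
    rw [div_le_iff₀ (by linarith)] at hq
    nlinarith [hθ.2, mul_le_mul_of_nonneg_left (show (lam - 1 / 2) / 2 ≤ lam - θ by linarith)
      (Nat.cast_nonneg (α := ℝ) q)]
  refine ⟨s + 1, C, τ, mergeError lam q (Z + 1) k, 60 * q * k ^ 4 * √lam ^ k, ε,
    ⟨hθ, by linarith, mergeBound_of_half draw hk hZ', mergeBound_of_large draw hk hs,
      (summable_pieceCost hlam.2).sum_le_tsum _ fun l _ => pieceCost_nonneg lam l, tail_le,
      mergeError_nonneg .., by positivity, by linarith, loss_le r hr, ε_lt.1.le⟩, by linarith⟩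

lemma eventually_pathNorm_cyclePoly_pow_sq_le (hlam : lam ∈ Set.Ioc (1 / 2) 0.9) (hc : 0 ≤ c)
    (hg : c * √lam < 1) {δ : ℝ} (hδ : 0 < δ) :
    ∀ᶠ k : ℕ in atTop, ∀ r : ℕ, 1 ≤ r → (r : ℝ) ≤ c ^ k →
      ∀ θ ∈ Set.Icc (0.45 : ℝ) 0.55, θ ≤ (lam + 1 / 2) / 2 →
        ∀ m : ℕ, 1 ≤ m → peakWeight θ (r * k) = sumWeight θ m (r * k) →
          pathNorm θ k m (cyclePoly k ^ r) ^ 2 ≤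
            (((r * k : ℕ) : ℝ) / m + δ) ^ 2 * sumWeight θ m (r * k) := by
  filter_upwards [eventually_exists_chainParams hlam hc hg hδ]
    with k hk r one_le_r hr θ hθ θ_le m hm hpeak
  obtain ⟨L, C, τ, δ', η, ε, H, le_δ⟩ := hk r hr θ hθ θ_le
  have cost_nonneg := H.cost_nonneg
  have loss_nonneg := H.loss_nonneg
  have tail_nonneg : 0 ≤ τ :=
    (sum_nonneg fun l _ => pieceCost_nonneg lam l).trans H.sum_pieceCost_tail_le
  refine (H.pathNorm_cyclePoly_pow_sq_le one_le_r hm hpeak).trans ?_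
  have := sumWeight_nonneg H.theta_mem_unit m (r * k)
  gcongr

lemma exists_growth_rate {ε : ℝ} (hε : 0 < ε) :
    ∃ c lam : ℝ, 0 ≤ c ∧ lam ∈ Set.Ioc (1 / 2) 0.9 ∧ c * √lam < 1 ∧
      ∀ n k : ℕ, 1 ≤ n → (2 + ε) * Real.logb 2 n ≤ k → (n : ℝ) ≤ c ^ k := by
  set c : ℝ := 2 ^ (1 / (2 + ε)) with c_def
  have c_pos : 0 < c := by positivity
  have c_sq_lt : c ^ 2 < 2 := by
    calc c ^ 2 = 2 ^ (1 / (2 + ε) * 2) := by rw [Real.rpow_mul two_pos.le, Real.rpow_two]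
      _ < 2 ^ (1 : ℝ) := Real.rpow_lt_rpow_of_exponent_lt one_lt_two <| by
        rw [div_mul_eq_mul_div, div_lt_one (by positivity)]
        linarith
      _ = 2 := Real.rpow_one 2
  obtain ⟨lam, half_lt, lam_lt⟩ := exists_between (show 1 / 2 < min 0.9 (1 / c ^ 2) from
    lt_min (by norm_num) (one_div_lt_one_div_of_lt (by positivity) c_sq_lt))
  rw [lt_min_iff, lt_div_iff₀ (by positivity)] at lam_lt
  refine ⟨c, lam, c_pos.le, ⟨half_lt, lam_lt.1.le⟩, ?_, fun n k hn hk => ?_⟩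
  · rw [← pow_lt_one_iff_of_nonneg (by positivity) two_ne_zero, mul_pow,
      Real.sq_sqrt (by linarith), mul_comm]
    exact lam_lt.2
  · have n_pos : (0 : ℝ) < n := by exact_mod_cast hn
    rw [c_def, ← Real.rpow_natCast, ← Real.rpow_mul two_pos.le,
      ← Real.logb_le_iff_le_rpow one_lt_two n_pos, div_mul_eq_mul_div, one_mul,
      le_div_iff₀ (by positivity), mul_comm]
    exact hk

end Asymptotics

section SecondMoment

open Filter Topology

variable {θ : ℝ} {k m n : ℕ}

lemma prod_partWeight (θ : ℝ) {s : Fin m → ℕ} (hs : s ∈ pathSizes m n) :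
    ∏ i, partWeight θ (s i) = (1 - θ) ^ m * θ ^ (n - 2 * m) := by
  obtain ⟨two_le, sum_eq⟩ := mem_pathSizes.1 hs
  simp only [partWeight]
  rw [prod_mul_distrib, prod_const, prod_pow_eq_pow_sum, card_univ, Fintype.card_fin,
    sum_tsub_distrib univ fun i _ => two_le i, sum_eq, sum_const, card_univ, Fintype.card_fin,
    smul_eq_mul, mul_comm m]

lemma sum_sq_mixedDeriv_le (hθ : θ ∈ Set.Ioo 0 1) (hm : 1 ≤ m) (hn : 2 * m ≤ n)
    {P : MvPolynomial ℕ ℝ} {B : ℝ} (hP : pathNorm θ k m P ^ 2 ≤ B * sumWeight θ m n) :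
    ∑ s ∈ pathSizes m n with ∀ i, s i ≤ k, mixedDeriv s P ^ 2 ≤
      B * (m.factorial : ℝ) ^ 2 * #(pathSizes m n) := by
  have partWeight_nonneg := partWeight_nonneg (Set.Ioo_subset_Icc_self hθ)
  have weight_pos : 0 < (1 - θ) ^ m * θ ^ (n - 2 * m) :=
    mul_pos (pow_pos (sub_pos.2 hθ.2) _) (pow_pos hθ.1 _)
  have le_norm : ∑ s ∈ pathSizes m n with ∀ i, s i ≤ k,
      (∏ i, partWeight θ (s i)) * (mixedDeriv s P / m.factorial) ^ 2 ≤ pathNorm θ k m P ^ 2 := by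
    simp only [pathNorm, wordNorm_sq, Real.sq_sqrt (partWeight_nonneg _)]
    let words : (Fin m → Icc 2 k) ↪ (Fin m → ℕ) :=
      ⟨fun s i => s i, fun s t h => funext fun i => Subtype.ext (congrFun h i)⟩
    refine (sum_le_sum_of_subset_of_nonneg (t := univ.map words) (fun s hs => ?_) fun s _ _ =>
      mul_nonneg (prod_nonneg fun i _ => partWeight_nonneg _) (sq_nonneg _)).trans_eq
      (sum_map univ words _)
    obtain ⟨hs, s_le⟩ := mem_filter.1 hs
    exact mem_map.2 ⟨fun i => ⟨s i, mem_Icc.2 ⟨(mem_pathSizes.1 hs).1 i, s_le i⟩⟩, mem_univ _, rfl⟩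
  rw [sumWeight_eq_mul_card_pathSizes θ hm hn] at hP
  rw [sum_congr rfl fun s hs => by rw [prod_partWeight θ (mem_filter.1 hs).1, div_pow, mul_div],
    ← sum_div, ← mul_sum] at le_norm
  refine le_of_mul_le_mul_left ?_ weight_pos
  rw [div_le_iff₀ (by positivity)] at le_norm
  nlinarith [mul_le_mul_of_nonneg_right hP (sq_nonneg (m.factorial : ℝ))]

lemma eventually_exists_peakWeight_eq {η : ℝ} (hη : 0 < η) (hη' : η ≤ 0.05) :
    ∀ᶠ n : ℕ in atTop, ∀ m : ℕ, |(m : ℝ) / n - 1 / 3| ≤ η / 100 →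
      1 ≤ m ∧ 2 * m ≤ n ∧
        ∃ θ ∈ Set.Icc (1 / 2 - η) (1 / 2 + η), peakWeight θ n = sumWeight θ m n := by
  filter_upwards [eventually_ge_atTop 10,
    tendsto_one_div_atTop_nhds_zero_nat.eventually_le_const (show 0 < η / 100 by positivity)]
    with n hn inv_le m hm
  obtain ⟨θ, hθ, balanced⟩ := exists_isBalanced hη hη' (by omega) hm inv_le
  have n_ge : (10 : ℝ) ≤ n := by exact_mod_cast hn
  obtain ⟨lower, upper⟩ := abs_le.1 hm
  have m_pos : (0 : ℝ) < m / n := by linarith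
  have m_le : (m : ℝ) / n ≤ 0.4 := by linarith
  rw [div_le_iff₀ (by linarith)] at m_le
  have one_le_m : 1 ≤ m := by
    by_contra! h
    simp [Nat.lt_one_iff.1 h] at m_pos
  have two_mul_le : 2 * m + 2 ≤ n := by
    rify
    linarith
  exact ⟨one_le_m, by omega, θ, hθ,
    balanced.peakWeight_eq ⟨by linarith [hθ.1], by linarith [hθ.2]⟩ one_le_m two_mul_le⟩

lemma div_le_three_add {x y δ : ℝ} (hδ : 0 < δ) (hδ' : δ ≤ 1)
    (h : |x / y - 1 / 3| ≤ δ / 12) : y / x ≤ 3 + δ := by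
  have lower := (abs_le.1 h).1
  have ratio_pos : 0 < x / y := by linarith
  rw [← inv_div, inv_le_comm₀ ratio_pos (by positivity), inv_le_iff_one_le_mul₀ (by positivity)]
  nlinarith

lemma eventually_forall_of_tendsto {f : ℕ → ℝ} (hf : Tendsto f atTop atTop) {p : ℕ → Prop}
    (hp : ∀ᶠ k in atTop, p k) : ∀ᶠ n in atTop, ∀ k : ℕ, f n ≤ k → p k := by
  obtain ⟨K, hK⟩ := eventually_atTop.1 hp
  filter_upwards [hf.eventually_ge_atTop K] with n hn k hk
  exact hK k (by exact_mod_cast hn.trans hk)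

theorem exists_eventually_sum_sq_mixedDeriv_cyclePoly_le {ε ε' : ℝ} (hε : 0 < ε) (hε' : 0 < ε') :
    ∃ γ > 0, ∀ᶠ n : ℕ in atTop, ∀ k : ℕ, k ∣ n → (2 + ε) * Real.logb 2 n ≤ k →
      ∀ m : ℕ, |(m : ℝ) / n - 1 / 3| ≤ γ →
        ∑ s ∈ pathSizes m n with ∀ i, s i ≤ k, mixedDeriv s (cyclePoly k ^ (n / k)) ^ 2 ≤
          (9 + ε') * (m.factorial : ℝ) ^ 2 * #(pathSizes m n) := by
  obtain ⟨c, lam, hc, hlam, hg, growth⟩ := exists_growth_rate hε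
  obtain ⟨δ, δ_pos, δ_lt⟩ := exists_between (show 0 < min 1 (ε' / 16) by positivity)
  obtain ⟨η, η_pos, η_lt⟩ := exists_between
    (show 0 < min 0.05 ((lam - 1 / 2) / 2) from lt_min (by norm_num) (by linarith [hlam.1]))
  rw [lt_min_iff] at δ_lt η_lt
  have length_tendsto : Tendsto (fun n : ℕ => (2 + ε) * Real.logb 2 n) atTop atTop :=
    ((Real.tendsto_logb_atTop one_lt_two).comp tendsto_natCast_atTop_atTop).const_mul_atTop
      (by positivity)
  refine ⟨min (η / 100) (δ / 12), by positivity, ?_⟩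
  filter_upwards [eventually_ge_atTop 1, eventually_exists_peakWeight_eq η_pos η_lt.1.le,
    eventually_forall_of_tendsto length_tendsto
      (eventually_pathNorm_cyclePoly_pow_sq_le hlam hc hg δ_pos)]
    with n hn exists_peak norm_le k hkn hk m hm
  obtain ⟨near_η, near_δ⟩ := le_min_iff.1 hm
  obtain ⟨hm', two_mul_le, θ, ⟨le_θ, θ_le⟩, hpeak⟩ := exists_peak m near_η
  have ratio_le := div_le_three_add δ_pos δ_lt.1.le near_δ
  have factors_le : ((n / k : ℕ) : ℝ) ≤ c ^ k :=
    (Nat.cast_le.2 (Nat.div_le_self n k)).trans (growth n k hn hk)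
  have norm_le' := norm_le k hk (n / k) (Nat.div_pos (Nat.le_of_dvd hn hkn)
    (Nat.pos_of_dvd_of_pos hkn hn)) factors_le θ ⟨by linarith, by linarith⟩ (by linarith) m hm'
  rw [Nat.div_mul_cancel hkn] at norm_le'
  refine (sum_sq_mixedDeriv_le ⟨by linarith, by linarith⟩ hm' two_mul_le (norm_le' hpeak)).trans ?_
  gcongr
  calc ((n : ℝ) / m + δ) ^ 2 ≤ (3 + δ + δ) ^ 2 := by gcongr
    _ ≤ 9 + ε' := by nlinarith

end SecondMoment

section Tilings

variable {r k m : ℕ}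

/-- A cell of a union of `r` directed `k`-cycles: a cycle together with a position on it. -/
abbrev Cell (r k : ℕ) : Type :=
  Fin r × ZMod k

/-- The cell reached from `p` after `i` steps along its cycle. -/
def shift (p : Cell r k) (i : ℕ) : Cell r k :=
  (p.1, p.2 + i)

/-- The first `l` cells met when walking along a cycle from `p`. -/
def arc (p : Cell r k) (l : ℕ) : Set (Cell r k) :=
  shift p '' Set.Iio l

/-- The pieces of lengths `s j` that start at the cells `P j` are disjoint and fill the region `C`;
injectivity also forces each piece not to overlap itself. -/
def IsTiling (C : Set (Cell r k)) (s : Fin m → ℕ) (P : Fin m → Cell r k) : Prop :=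
  Function.Injective (fun x : Σ j, Fin (s j) => shift (P x.1) x.2) ∧
    Set.range (fun x : Σ j, Fin (s j) => shift (P x.1) x.2) = C

/-- The number of ways to tile the region `C` with labelled pieces of lengths `s j`. -/
noncomputable def numTilings (C : Set (Cell r k)) (s : Fin m → ℕ) : ℕ :=
  Nat.card {P : Fin m → Cell r k // IsTiling C s P}

@[simp] lemma shift_zero (p : Cell r k) : shift p 0 = p := by
  simp [shift]

lemma shift_shift (p : Cell r k) (i j : ℕ) : shift (shift p i) j = shift p (i + j) := by
  simp [shift, add_assoc]

lemma shift_left_injective (i : ℕ) : Function.Injective fun p : Cell r k => shift p i := by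
  intro p q h
  simpa [shift, Prod.ext_iff] using h

lemma shift_one_iterate (i : ℕ) (p : Cell r k) :
    (fun q => shift q 1)^[i] p = shift p i := by
  induction i with
  | zero => simp
  | succ i ih => rw [Function.iterate_succ_apply', ih, shift_shift]

@[simp] lemma arc_zero (p : Cell r k) : arc p 0 = ∅ := by
  simp [arc]

lemma fst_eq_of_mem_arc {p u : Cell r k} {l : ℕ} (h : u ∈ arc p l) : u.1 = p.1 := by
  obtain ⟨i, -, rfl⟩ := h
  rfl

lemma shift_injOn (p : Cell r k) : Set.InjOn (shift p) (Set.Iio k) := by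
  intro i hi j hj h
  simpa [ZMod.val_cast_of_lt hi, ZMod.val_cast_of_lt hj] using
    congrArg ZMod.val (add_left_cancel (congrArg Prod.snd h))

lemma arc_self [NeZero k] (p : Cell r k) : arc p k = Prod.fst ⁻¹' {p.1} := by
  refine Set.Subset.antisymm (fun _ h => fst_eq_of_mem_arc h) fun u hu =>
    ⟨(u.2 - p.2).val, ZMod.val_lt _, Prod.ext hu.symm ?_⟩
  simp [shift]

lemma arc_sdiff_arc [NeZero k] (p : Cell r k) {l t : ℕ} (hl : l ≤ t) (ht : t ≤ k) :
    arc p t \ arc p l = arc (shift p l) (t - l) := by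
  have shift_image : shift (shift p l) '' Set.Iio (t - l) = shift p '' Set.Ico l t := by
    ext u
    constructor
    · rintro ⟨i, hi, rfl⟩
      exact ⟨l + i, ⟨by simp, by grind⟩, (shift_shift ..).symm⟩
    · rintro ⟨i, ⟨hi, hi'⟩, rfl⟩
      exact ⟨i - l, by grind, by rw [shift_shift, Nat.add_sub_cancel' hi]⟩
  rw [arc, arc, arc, shift_image,
    ← ((shift_injOn p).mono (Set.Iio_subset_Iio ht)).image_sdiff_subset (Set.Iio_subset_Iio hl)]
  congr 1
  ext i
  simp

namespace IsTiling

variable {C : Set (Cell r k)} {s : Fin m → ℕ} {P : Fin m → Cell r k}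

lemma mem (h : IsTiling C s P) {j : Fin m} {i : ℕ} (hi : i < s j) : shift (P j) i ∈ C :=
  h.2 ▸ Set.mem_range_self (f := fun x : Σ j, Fin (s j) => shift (P x.1) x.2) ⟨j, i, hi⟩

lemma exists_eq_shift (h : IsTiling C s P) {u : Cell r k} (hu : u ∈ C) :
    ∃ j, ∃ i < s j, shift (P j) i = u := by
  rw [← h.2] at hu
  obtain ⟨⟨j, i⟩, rfl⟩ := hu
  exact ⟨j, i, i.2, rfl⟩

lemma length_le [NeZero k] (h : IsTiling C s P) (j : Fin m) : s j ≤ k := by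
  by_contra! hk
  have := @h.1 ⟨j, 0, by omega⟩ ⟨j, k, hk⟩ (by simp [shift])
  simp only [Sigma.mk.injEq, Fin.mk.injEq, heq_eq_eq, true_and] at this
  exact NeZero.ne k this.symm

lemma removeNth {s : Fin (m + 1) → ℕ} {P : Fin (m + 1) → Cell r k}
    (h : IsTiling C s P) (j : Fin (m + 1)) :
    IsTiling (C \ arc (P j) (s j)) (j.removeNth s) (j.removeNth P) := by
  have remove_injective : Function.Injective
      (Sigma.map j.succAbove fun _ => id : (Σ i, Fin (j.removeNth s i)) → Σ i, Fin (s i)) :=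
    Fin.succAbove_right_injective.sigma_map fun _ => Function.injective_id
  refine ⟨h.1.comp remove_injective, Set.Subset.antisymm ?_ ?_⟩
  · rintro _ ⟨⟨a, i⟩, rfl⟩
    refine ⟨h.mem i.2, fun ⟨i', hi', eq⟩ => j.succAbove_ne a ?_⟩
    exact (congrArg Sigma.fst (@h.1 ⟨j, i', hi'⟩ ⟨j.succAbove a, i⟩ eq)).symm
  · rintro u ⟨hu, not_mem⟩
    obtain ⟨a, i, hi, rfl⟩ := h.exists_eq_shift hu
    obtain ⟨b, rfl⟩ := Fin.exists_succAbove_eq (x := a) (y := j) (by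
      rintro rfl
      exact not_mem ⟨i, hi, rfl⟩)
    exact ⟨⟨b, i, hi⟩, rfl⟩

end IsTiling

lemma numTilings_le_sum [NeZero k] (C : Set (Cell r k)) (s : Fin (m + 1) → ℕ)
    (V : Fin (m + 1) → Finset (Cell r k)) (hV : ∀ P, IsTiling C s P → ∃ j, P j ∈ V j) :
    numTilings C s ≤ ∑ j, ∑ v ∈ V j, numTilings (C \ arc v (s j)) (j.removeNth s) := by
  choose j hj using fun P : {P // IsTiling C s P} => hV P.1 P.2
  let remove (P : {P // IsTiling C s P}) : Σ (j : Fin (m + 1)) (v : V j),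
      {Q : Fin m → Cell r k // IsTiling (C \ arc v.1 (s j)) (j.removeNth s) Q} :=
    ⟨j P, ⟨P.1 (j P), hj P⟩, (j P).removeNth P.1, P.2.removeNth (j P)⟩
  have remove_injective : Function.Injective remove := by
    let restore (x : Σ (j : Fin (m + 1)) (v : V j),
        {Q : Fin m → Cell r k // IsTiling (C \ arc v.1 (s j)) (j.removeNth s) Q}) :
        Fin (m + 1) → Cell r k := x.1.insertNth x.2.1.1 x.2.2.1
    have restore_remove (P) : restore (remove P) = P.1 := (j P).insertNth_self_removeNth P.1
    exact fun P Q h => Subtype.ext (by rw [← restore_remove, ← restore_remove, h])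
  refine (Nat.card_le_card_of_injective remove remove_injective).trans_eq ?_
  simp only [Nat.card_sigma, numTilings]
  exact sum_congr rfl fun j _ => sum_coe_sort (V j) fun v =>
    Nat.card {Q : Fin m → Cell r k // IsTiling (C \ arc v (s j)) (j.removeNth s) Q}

/-- The cells of the cycles in `D` together with the `t` cells that follow `p`. -/
def region (D : Finset (Fin r)) (p : Cell r k) (t : ℕ) : Set (Cell r k) :=
  Prod.fst ⁻¹' D ∪ arc p t

lemma region_sdiff_arc [NeZero k] {D : Finset (Fin r)} {p : Cell r k} (hD : p.1 ∉ D) {l t : ℕ}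
    (hl : l ≤ t) (ht : t ≤ k) : region D p t \ arc p l = region D (shift p l) (t - l) := by
  have disjoint : Disjoint (Prod.fst ⁻¹' D : Set (Cell r k)) (arc p l) :=
    Set.disjoint_left.2 fun u hu hu' => hD (fst_eq_of_mem_arc hu' ▸ hu)
  rw [region, region, Set.union_sdiff_distrib, disjoint.sdiff_eq_left, arc_sdiff_arc p hl ht]

lemma preimage_fst_sdiff_arc [NeZero k] {D : Finset (Fin r)} {p : Cell r k} (hD : p.1 ∈ D) {l : ℕ}
    (hl : l ≤ k) :
    (Prod.fst ⁻¹' D : Set (Cell r k)) \ arc p l = region (D.erase p.1) (shift p l) (k - l) := by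
  have split : (Prod.fst ⁻¹' D : Set (Cell r k)) = region (D.erase p.1) p k := by
    rw [region, arc_self, ← Set.preimage_union, coe_erase, Set.sdiff_union_of_subset (by simpa)]
  rw [split, region_sdiff_arc (notMem_erase _ _) hl le_rfl]

lemma numTilings_region_le_sum [NeZero k] (s : Fin (m + 1) → ℕ) {D : Finset (Fin r)}
    {p : Cell r k} (hD : p.1 ∉ D) {t : ℕ} (ht : t ∈ Set.Ioo 0 k) :
    numTilings (region D p t) s ≤ ∑ j, if s j ≤ t then
      numTilings (region D (shift p (s j)) (t - s j)) (j.removeNth s) else 0 := by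
  have mem_region {i : ℕ} (hi : i < k) : shift p i ∈ region D p t ↔ i < t :=
    ⟨fun h => (h.resolve_left hD).elim fun i' ⟨hi', eq⟩ =>
      shift_injOn p (hi'.trans ht.2) hi eq ▸ hi', fun h => .inr ⟨i, h, rfl⟩⟩
  refine (numTilings_le_sum _ s (fun j => if s j ≤ t then {p} else ∅) fun P hP => ?_).trans
    (sum_le_sum fun j _ => ?_)
  · have p_mem : shift p 0 ∈ region D p t := (mem_region (ht.1.trans ht.2)).2 ht.1
    rw [shift_zero] at p_mem
    obtain ⟨j, i, hi, eq⟩ := hP.exists_eq_shift p_mem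
    -- The cell before `p` lies outside the region, so the piece covering `p` starts there.
    obtain rfl : i = 0 := by
      by_contra hi'
      have pred_eq : shift (P j) (i - 1) = shift p (k - 1) := by
        rw [← eq, shift_shift, shift, shift, show i + (k - 1) = i - 1 + k by have := ht.1; grind]
        simp
      have := (mem_region (by grind)).1 (pred_eq ▸ hP.mem (j := j) (i := i - 1) (by omega))
      grind
    rw [shift_zero] at eq
    have length_le : s j ≤ t := by
      by_contra! h
      exact lt_irrefl _ ((mem_region ht.2).1 (eq ▸ hP.mem h))
    exact ⟨j, by simp [length_le, eq]⟩
  · split_ifs with h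
    · simp [region_sdiff_arc hD h ht.2.le]
    · simp

lemma numTilings_preimage_fst_le_sum [NeZero k] {s : Fin (m + 1) → ℕ} (hs : ∀ j, s j ≤ k)
    {D : Finset (Fin r)} {c : Fin r} (hD : c ∈ D) {B : Fin (m + 1) → ℝ}
    (hB : ∀ j (z : ZMod k),
      (numTilings (region (D.erase c) (c, z) (k - s j)) (j.removeNth s) : ℝ) ≤ B j) :
    (numTilings (Prod.fst ⁻¹' D : Set (Cell r k)) s : ℝ) ≤ ∑ j, s j * B j := by
  let starts (j : Fin (m + 1)) : Finset (Cell r k) :=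
    (range (s j)).image fun i : ℕ => (c, -(i : ZMod k))
  have le_sum := numTilings_le_sum (Prod.fst ⁻¹' D : Set (Cell r k)) s starts fun P hP => by
    obtain ⟨j, i, hi, eq⟩ := hP.exists_eq_shift (u := (c, 0)) hD
    refine ⟨j, mem_image.2 ⟨i, mem_range.2 hi, ?_⟩⟩
    simp only [shift, Prod.ext_iff] at eq
    exact Prod.ext eq.1.symm (eq_neg_of_add_eq_zero_left eq.2).symm
  refine (Nat.cast_le.2 le_sum).trans ?_
  push_cast
  refine sum_le_sum fun j _ => ?_
  have B_nonneg : 0 ≤ B j := (Nat.cast_nonneg _).trans (hB j (0 : ZMod k))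
  have each_le : ∀ v ∈ starts j, (numTilings ((Prod.fst ⁻¹' D : Set (Cell r k)) \ arc v (s j))
      (j.removeNth s) : ℝ) ≤ B j := fun v hv => by
    obtain ⟨i, -, rfl⟩ := mem_image.1 hv
    rw [preimage_fst_sdiff_arc hD (hs j)]
    exact hB j _
  have card_le : #(starts j) ≤ s j := card_image_le.trans_eq (card_range _)
  calc _ ≤ #(starts j) • B j := sum_le_card_nsmul _ _ _ each_le
    _ ≤ s j * B j := by rw [nsmul_eq_mul]; gcongr

lemma numTilings_empty_le {s : Fin m → ℕ} (hs : ∀ j, 0 < s j) :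
    (numTilings (∅ : Set (Cell r k)) s : ℝ) ≤ mixedDeriv s 1 := by
  cases m with
  | zero =>
    have card_le : numTilings (∅ : Set (Cell r k)) s ≤ 1 :=
      Finite.card_le_one_iff_subsingleton.2 inferInstance
    simpa [mixedDeriv] using card_le
  | succ m =>
    have : IsEmpty {P : Fin (m + 1) → Cell r k // IsTiling ∅ s P} := ⟨fun P => P.2.mem (hs 0)⟩
    simpa [numTilings] using mixedDeriv_nonneg (one_mem (nonnegCoeff ℕ)) s

lemma numTilings_eq_zero {C : Set (Cell r k)} (hC : C.Nonempty) (s : Fin 0 → ℕ) :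
    numTilings C s = 0 := by
  have : IsEmpty {P : Fin 0 → Cell r k // IsTiling C s P} :=
    ⟨fun P => (P.2.exists_eq_shift hC.some_mem).elim fun j _ => j.elim0⟩
  exact Nat.card_of_isEmpty

lemma mixedDeriv_pathPoly_mul {s : Fin (m + 1) → ℕ} (hs : ∀ j, s j ∈ Icc 2 k) {t : ℤ} (ht : 1 ≤ t)
    (P : MvPolynomial ℕ ℝ) : mixedDeriv s (pathPoly k t * P) =
      ∑ j, mixedDeriv (j.removeNth s) (pathPoly k (t - s j) * P) := by
  rw [pathPoly_rec ht, sum_mul]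
  simp only [mul_assoc]
  exact mixedDeriv_sum_X_mul _ _ s hs

lemma mixedDeriv_cyclePoly_pow_succ {s : Fin (m + 1) → ℕ} (hs : ∀ j, s j ∈ Icc 2 k) (d : ℕ) :
    mixedDeriv s (cyclePoly k ^ (d + 1)) =
      ∑ j, s j * mixedDeriv (j.removeNth s) (pathPoly k (k - s j) * cyclePoly k ^ d) := by
  rw [pow_succ', cyclePoly, sum_mul]
  simp only [mul_assoc, smul_mul_assoc]
  rw [mixedDeriv_sum_X_mul _ _ s hs]
  simp only [map_smul, smul_eq_mul]

lemma numTilings_region_le [NeZero k] : ∀ {m : ℕ} {s : Fin m → ℕ}, (∀ j, s j ∈ Icc 2 k) →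
    ∀ {D : Finset (Fin r)} {p : Cell r k} {t : ℕ}, t < k → (0 < t → p.1 ∉ D) →
      (numTilings (region D p t) s : ℝ) ≤ mixedDeriv s (pathPoly k t * cyclePoly k ^ #D)
  | m, s, hs, D, p, t, htk, hD => by
    have deriv_nonneg {m : ℕ} (s : Fin m → ℕ) (t : ℤ) :
        0 ≤ mixedDeriv s (pathPoly k t * cyclePoly k ^ #D) :=
      mixedDeriv_nonneg (mul_mem (pathPoly_mem_nonnegCoeff k t)
        (pow_mem (cyclePoly_mem_nonnegCoeff k) _)) s
    rcases t.eq_zero_or_pos with rfl | ht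
    · simp only [region, arc_zero, Set.union_empty, Nat.cast_zero, pathPoly_zero, one_mul]
      rcases D.eq_empty_or_nonempty with rfl | ⟨c, hc⟩
      · simpa using numTilings_empty_le fun j => two_pos.trans_le (mem_Icc.1 (hs j)).1
      cases m with
      | zero =>
        have nonempty : (Prod.fst ⁻¹' D : Set (Cell r k)).Nonempty := ⟨(c, 0), hc⟩
        simpa [numTilings_eq_zero nonempty] using deriv_nonneg s 0
      | succ m =>
        rw [← card_erase_add_one hc, mixedDeriv_cyclePoly_pow_succ hs]
        refine numTilings_preimage_fst_le_sum (fun j => (mem_Icc.1 (hs j)).2) hc fun j z => ?_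
        have := mem_Icc.1 (hs j)
        rw [← Nat.cast_sub this.2]
        exact numTilings_region_le (fun i => hs _) (by omega) fun _ => notMem_erase _ _
    · cases m with
      | zero =>
        rw [numTilings_eq_zero ⟨p, .inr ⟨0, ht, shift_zero p⟩⟩, Nat.cast_zero]
        exact deriv_nonneg s t
      | succ m =>
        rw [mixedDeriv_pathPoly_mul hs (by omega)]
        refine (Nat.cast_le.2 (numTilings_region_le_sum s (hD ht) ⟨ht, htk⟩)).trans ?_
        push_cast
        refine sum_le_sum fun j _ => ?_
        split_ifs with h
        · have := (mem_Icc.1 (hs j)).1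
          rw [← Nat.cast_sub h]
          exact numTilings_region_le (fun i => hs _) (by omega) fun _ => hD ht
        · exact deriv_nonneg _ _

theorem numTilings_univ_le [NeZero k] (hr : 0 < r) {s : Fin m → ℕ} (hs : ∀ j, s j ∈ Icc 2 k) :
    (numTilings (Set.univ : Set (Cell r k)) s : ℝ) ≤ mixedDeriv s (cyclePoly k ^ r) := by
  simpa [region] using numTilings_region_le hs (D := univ) (p := (⟨0, hr⟩, 0)) (t := 0)
    (Nat.pos_of_ne_zero (NeZero.ne k)) fun h => absurd h (lt_irrefl 0)

end Tilings

section PathUnion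

variable {m n : ℕ} {s : Fin m → ℕ}

/-- The disjoint union of paths on `s j` vertices. -/
def pathUnion (s : Fin m → ℕ) : SimpleGraph (Σ j, Fin (s j)) where
  Adj x y := x.1 = y.1 ∧ ((x.2 : ℕ) + 1 = y.2 ∨ (y.2 : ℕ) + 1 = x.2)
  symm := ⟨fun _ _ h => ⟨h.1.symm, h.2.symm⟩⟩
  loopless := ⟨fun _ h => by omega⟩

lemma pathUnion_adj {x y : Σ j, Fin (s j)} : (pathUnion s).Adj x y ↔
    x.1 = y.1 ∧ ((x.2 : ℕ) + 1 = y.2 ∨ (y.2 : ℕ) + 1 = x.2) :=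
  Iff.rfl

lemma pathUnion_reachable {x y : Σ j, Fin (s j)} : (pathUnion s).Reachable x y ↔ x.1 = y.1 := by
  constructor
  · rintro ⟨walk⟩
    induction walk with
    | nil => rfl
    | cons adj _ ih => exact adj.1.trans ih
  · obtain ⟨j, a⟩ := x
    obtain ⟨j', b⟩ := y
    rintro (rfl : j = j')
    let inclusion : SimpleGraph.pathGraph (s j) →g pathUnion s :=
      ⟨fun a => (⟨j, a⟩ : Σ j, Fin (s j)), fun h => ⟨rfl, SimpleGraph.pathGraph_adj.1 h⟩⟩
    exact (SimpleGraph.pathGraph_preconnected _ a b).map inclusion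

lemma pathsGraph_of_iso (hs : ∀ j, 2 ≤ s j) {S : SimpleGraph (Fin n)} (e : pathUnion s ≃g S) :
    PathsGraph S m := by
  have reachable_iff {x y} : S.Reachable (e x) (e y) ↔ x.1 = y.1 :=
    e.reachable_iff.trans pathUnion_reachable
  have component_bijective : Function.Bijective fun j : Fin m =>
      S.connectedComponentMk (e ⟨j, ⟨0, two_pos.trans_le (hs j)⟩⟩) := by
    refine ⟨fun j j' h => reachable_iff.1 (SimpleGraph.ConnectedComponent.exact h), fun c => ?_⟩
    obtain ⟨u, rfl⟩ := c.exists_rep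
    obtain ⟨x, rfl⟩ := e.surjective u
    exact ⟨x.1, SimpleGraph.ConnectedComponent.sound (reachable_iff.2 rfl)⟩
  refine ⟨by rw [← Nat.card_eq_of_bijective _ component_bijective, Nat.card_fin], fun c => ?_⟩
  obtain ⟨j, rfl⟩ := component_bijective.2 c
  refine ⟨s j, fun i => e ⟨j, i⟩, hs j, e.injective.comp sigma_mk_injective, ?_, fun a b => ?_⟩
  · ext u
    obtain ⟨⟨j', i⟩, rfl⟩ := e.surjective u
    rw [SimpleGraph.ConnectedComponent.mem_supp_iff, SimpleGraph.ConnectedComponent.eq,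
      reachable_iff]
    constructor
    · rintro ⟨_, h⟩
      rw [← e.injective h]
    · rintro (rfl : j' = j)
      exact ⟨i, rfl⟩
  · simp [e.map_adj_iff, pathUnion_adj]

lemma exists_iso_of_pathsGraph {S : SimpleGraph (Fin n)} (h : PathsGraph S m) :
    ∃ s ∈ pathSizes m n, Nonempty (pathUnion s ≃g S) := by
  obtain ⟨card_eq, is_path⟩ := h
  let component : Fin m ≃ S.ConnectedComponent := (Finite.equivFinOfCardEq card_eq).symm
  choose s v two_le v_injective range_v v_adj using fun j => is_path (component j)
  have mk_v (j a) : S.connectedComponentMk (v j a) = component j :=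
    (range_v j).le ⟨a, rfl⟩
  have eq_of_reachable {j j' a a'} (h : S.Reachable (v j a) (v j' a')) : j = j' := by
    rw [← component.injective.eq_iff, ← mk_v j a, ← mk_v j' a',
      SimpleGraph.ConnectedComponent.eq]
    exact h
  have v_bijective : Function.Bijective fun x : Σ j, Fin (s j) => v x.1 x.2 := by
    constructor
    · rintro ⟨j, a⟩ ⟨j', b⟩ (h : v j a = v j' b)
      obtain rfl : j = j' := eq_of_reachable (a := a) (a' := b) (by rw [h])
      rw [v_injective j h]
    · intro u
      obtain ⟨j, hj⟩ := component.surjective (S.connectedComponentMk u)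
      obtain ⟨a, rfl⟩ := (range_v j).ge hj.symm
      exact ⟨⟨j, a⟩, rfl⟩
  let e : pathUnion s ≃g S :=
    { Equiv.ofBijective _ v_bijective with
      map_rel_iff' := by
        rintro ⟨j, a⟩ ⟨j', b⟩
        change S.Adj (v j a) (v j' b) ↔ _
        by_cases hj : j = j'
        · subst hj
          simp [v_adj, pathUnion_adj]
        · simp only [pathUnion_adj, hj, false_and, iff_false]
          exact fun adj => hj (eq_of_reachable adj.reachable) }
  refine ⟨s, mem_pathSizes.2 ⟨two_le, ?_⟩, ⟨e⟩⟩
  simpa using Fintype.card_congr e.toEquiv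

end PathUnion

section Orientation

/-- The permutation of `Fin l` that reverses the order if `b` holds: it encodes the direction in
which a path is traversed. -/
def orient (b : Bool) {l : ℕ} : Equiv.Perm (Fin l) :=
  bif b then Fin.revPerm else Equiv.refl _

variable {α : Type*} {T : α → α} {l : ℕ} {y : Fin (l + 1) → α}

lemma forall_step_or_forall_step (hT : Function.Injective T) (hy : Function.Injective y)
    (step : ∀ i : Fin l, y i.succ = T (y i.castSucc) ∨ y i.castSucc = T (y i.succ)) :
    (∀ i : Fin l, y i.succ = T (y i.castSucc)) ∨ ∀ i : Fin l, y i.castSucc = T (y i.succ) := by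
  cases l with
  | zero => exact .inl finZeroElim
  | succ l =>
    have no_turn (i : Fin l) : y i.castSucc.castSucc ≠ y i.succ.succ :=
      fun h => by grind [hy h]
    have step_iff (i : Fin l) : y i.castSucc.succ = T (y i.castSucc.castSucc) ↔
        y i.succ.succ = T (y i.succ.castSucc) := by
      rw [Fin.succ_castSucc]
      refine ⟨fun h => (step i.succ).resolve_right fun h' => ?_,
        fun h => (step i.castSucc).resolve_right fun h' => ?_⟩
      · exact no_turn i (hT (h.symm.trans h'))
      · exact no_turn i (h'.trans h.symm)
    have step_zero_iff (i : Fin (l + 1)) :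
        y i.succ = T (y i.castSucc) ↔ y (Fin.succ 0) = T (y (Fin.castSucc 0)) :=
      Fin.induction Iff.rfl (fun i ih => (step_iff i).symm.trans ih) i
    by_cases h : y (Fin.succ 0) = T (y (Fin.castSucc 0))
    · exact .inl fun i => (step_zero_iff i).2 h
    · exact .inr fun i => (step i).resolve_left fun h' => h ((step_zero_iff i).1 h')

lemma exists_eq_iterate_orient (hT : Function.Injective T) {l : ℕ} (hl : 0 < l) {y : Fin l → α}
    (hy : Function.Injective y)
    (step : ∀ i j : Fin l, (i : ℕ) + 1 = j → y j = T (y i) ∨ y i = T (y j)) :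
    ∃ b a, ∀ i, y i = T^[orient b i] a := by
  obtain ⟨l, rfl⟩ := Nat.exists_eq_succ_of_ne_zero hl.ne'
  rcases forall_step_or_forall_step hT hy fun i => step _ _ (by simp) with forward | backward
  · refine ⟨false, y 0, Fin.induction rfl fun i ih => ?_⟩
    rw [forward, ih]
    exact (Function.iterate_succ_apply' ..).symm
  · refine ⟨true, y (Fin.last l), Fin.reverseInduction (by simp [orient]) fun i ih => ?_⟩
    have orient_castSucc :
        (orient true i.castSucc : ℕ) = (orient true i.succ : ℕ) + 1 := by
      simp only [orient, cond_true, Fin.revPerm_apply, Fin.val_rev, Fin.val_castSucc, Fin.val_succ]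
      omega
    rw [backward, ih, orient_castSucc, Function.iterate_succ_apply']

end Orientation

section Position

variable {n k m : ℕ} [NeZero k] {s : Fin m → ℕ} {S : SimpleGraph (Fin n)}

/-- The cell of each vertex in the cycle factor `F`: its cycle, and its place on that cycle
counted from the root. -/
noncomputable def position (F : RODFactor n k) : Fin n ≃ Cell (n / k) k :=
  (Equiv.ofBijective _ F.2).symm.trans <| Equiv.prodCongrRight fun _ =>
    { toFun i := (i : ℕ)
      invFun x := ⟨x.val, x.val_lt⟩
      left_inv i := Fin.ext (ZMod.val_cast_of_lt i.2)
      right_inv := ZMod.natCast_zmod_val }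

lemma position_apply (F : RODFactor n k) (c : Fin (n / k)) (i : Fin k) :
    position F (F.1 c i) = (c, ((i : ℕ) : ZMod k)) := by
  have : (Equiv.ofBijective _ F.2).symm (F.1 c i) = (c, i) :=
    (Equiv.ofBijective _ F.2).symm_apply_apply (c, i)
  simp [position, this]

lemma position_injective :
    Function.Injective (position : RODFactor n k → (Fin n ≃ Cell (n / k) k)) := by
  intro F F' h
  refine Subtype.ext (funext₂ fun c i => (position F).injective ?_)
  rw [position_apply, h, position_apply]

lemma position_eq_shift_or_of_adj {F : RODFactor n k} (hF : RODContains F S)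
    {u v : Fin n} (h : S.Adj u v) :
    position F v = shift (position F u) 1 ∨ position F u = shift (position F v) 1 := by
  have position_next (c : Fin (n / k)) (i : Fin k) :
      position F (F.1 c ⟨(i + 1) % k, Nat.mod_lt _ i.pos⟩) = shift (position F (F.1 c i)) 1 := by
    simp [position_apply, shift]
  obtain ⟨c, i, ⟨rfl, rfl⟩ | ⟨rfl, rfl⟩⟩ := hF u v h
  · exact .inl (position_next c i)
  · exact .inr (position_next c i)

lemma exists_isTiling_position_eq (hs : ∀ j, 0 < s j) (e : pathUnion s ≃g S) {F : RODFactor n k}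
    (hF : RODContains F S) :
    ∃ (b : Fin m → Bool) (P : Fin m → Cell (n / k) k), IsTiling Set.univ s P ∧
      ∀ x, position F (e x) = shift (P x.1) (orient (b x.1) x.2) := by
  have traverse (j : Fin m) :=
    exists_eq_iterate_orient (shift_left_injective 1) (hs j) (y := fun i => position F (e ⟨j, i⟩))
      ((position F).injective.comp (e.injective.comp sigma_mk_injective)) fun i i' h =>
        position_eq_shift_or_of_adj hF (e.map_adj_iff.2 ⟨rfl, .inl h⟩)
  choose b P position_eq using traverse
  simp only [shift_one_iterate] at position_eq
  refine ⟨b, P, ?_, fun x => position_eq x.1 x.2⟩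
  have bijective : Function.Bijective fun x : Σ j, Fin (s j) => shift (P x.1) x.2 := by
    refine ((Equiv.sigmaCongrRight fun j => orient (b j)).bijective_comp _).1 ?_
    convert (e.toEquiv.trans (position F)).bijective
    exact funext fun x => (position_eq x.1 x.2).symm
  exact ⟨bijective.1, bijective.2.range_eq⟩

lemma NS_le_numTilings (hs : ∀ j, 0 < s j) (e : pathUnion s ≃g S) :
    NS k S ≤ 2 ^ m * numTilings (Set.univ : Set (Cell (n / k) k)) s := by
  choose b P isTiling position_eq using
    fun F : {F : RODFactor n k // RODContains F S} => exists_isTiling_position_eq hs e F.2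
  have injective : Function.Injective
      fun F => (b F, (⟨P F, isTiling F⟩ : {P // IsTiling Set.univ s P})) := by
    intro F F' h
    simp only [Prod.mk.injEq, Subtype.mk.injEq] at h
    refine Subtype.ext (position_injective (Equiv.ext fun u => ?_))
    obtain ⟨x, rfl⟩ := e.surjective u
    rw [position_eq, position_eq, h.1, h.2]
  simpa [NS, numTilings, Nat.card_prod] using Nat.card_le_card_of_injective _ injective

lemma sq_NS_le (hr : 0 < n / k) (hs : ∀ j, 2 ≤ s j) (e : pathUnion s ≃g S) :
    (NS k S : ℝ) ^ 2 ≤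
      (2 ^ m) ^ 2 * if ∀ j, s j ≤ k then mixedDeriv s (cyclePoly k ^ (n / k)) ^ 2 else 0 := by
  have NS_le : (NS k S : ℝ) ≤ 2 ^ m * numTilings (Set.univ : Set (Cell (n / k) k)) s :=
    mod_cast NS_le_numTilings (fun j => two_pos.trans_le (hs j)) e
  split_ifs with hk
  · rw [← mul_pow]
    gcongr
    refine NS_le.trans ?_
    gcongr
    exact numTilings_univ_le hr fun j => mem_Icc.2 ⟨hs j, hk j⟩
  · have : IsEmpty {P : Fin m → Cell (n / k) k // IsTiling Set.univ s P} :=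
      ⟨fun P => hk P.2.length_le⟩
    simpa [numTilings] using NS_le

end Position

section Reframe

variable {m : ℕ} {s s' : Fin m → ℕ}

lemma orient_step_iff (b : Bool) {l : ℕ} {i i' : Fin l} :
    ((orient b i : ℕ) + 1 = orient b i' ∨ (orient b i' : ℕ) + 1 = orient b i) ↔
      ((i : ℕ) + 1 = i' ∨ (i' : ℕ) + 1 = i) := by
  cases b
  · rfl
  · simp only [orient, cond_true, Fin.revPerm_apply, Fin.val_rev]
    omega

/-- The isomorphism that permutes the paths of a disjoint union by `σ`, and reverses those for which
`b` holds. -/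
def reframe (s : Fin m → ℕ) (σ : Equiv.Perm (Fin m)) (b : Fin m → Bool) :
    pathUnion (s ∘ σ) ≃g pathUnion s where
  toEquiv := (Equiv.sigmaCongrRight fun j => orient (b j)).trans
    (Equiv.sigmaCongrLeft (β := fun j => Fin (s j)) σ)
  map_rel_iff' := by
    rintro ⟨j, i⟩ ⟨j', i'⟩
    by_cases hj : j = j'
    · subst hj
      simpa [pathUnion_adj] using orient_step_iff (b j)
    · simp [pathUnion_adj, hj]

lemma orient_zero_injective {l : ℕ} (hl : 2 ≤ l) :
    Function.Injective fun b => orient b (⟨0, two_pos.trans_le hl⟩ : Fin l) := by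
  intro b b' h
  cases b <;> cases b' <;> simp [orient, Fin.ext_iff, Fin.val_rev] at h ⊢ <;> omega

lemma exists_perm_fst_eq (hs' : ∀ j, 0 < s' j) (φ : pathUnion s' ≃g pathUnion s) :
    ∃ σ : Equiv.Perm (Fin m), ∀ x, (φ x).1 = σ x.1 := by
  have fst_eq_iff {x y} : (φ x).1 = (φ y).1 ↔ x.1 = y.1 := by
    rw [← pathUnion_reachable, ← pathUnion_reachable, φ.reachable_iff]
  have injective : Function.Injective fun j => (φ ⟨j, ⟨0, hs' j⟩⟩).1 := fun _ _ h => fst_eq_iff.1 h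
  exact ⟨Equiv.ofBijective _ (Finite.injective_iff_bijective.1 injective),
    fun x => fst_eq_iff.2 rfl⟩

lemma val_snd_injective_of_fst_eq {φ : pathUnion s' ≃g pathUnion s} {σ : Equiv.Perm (Fin m)}
    (hσ : ∀ x, (φ x).1 = σ x.1) (j : Fin m) :
    Function.Injective fun i => ((φ ⟨j, i⟩).2 : ℕ) := by
  intro i i' h
  have fst_eq : (φ ⟨j, i⟩).1 = (φ ⟨j, i'⟩).1 := by rw [hσ, hσ]
  exact sigma_mk_injective (i := j) <| φ.injective <|
    Sigma.ext fst_eq ((Fin.heq_ext_iff (congrArg s fst_eq)).2 h)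

lemma eq_comp_of_fst_eq {φ : pathUnion s' ≃g pathUnion s} {σ : Equiv.Perm (Fin m)}
    (hσ : ∀ x, (φ x).1 = σ x.1) : s' = s ∘ σ := by
  have snd_lt (j i) : ((φ ⟨j, i⟩).2 : ℕ) < s (σ j) :=
    (φ ⟨j, i⟩).2.2.trans_eq (congrArg s (hσ ⟨j, i⟩))
  have le (j : Fin m) : s' j ≤ s (σ j) := by
    simpa using Fintype.card_le_of_injective (fun i => (⟨_, snd_lt j i⟩ : Fin (s (σ j))))
      fun _ _ h => val_snd_injective_of_fst_eq hσ j (congrArg Fin.val h)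
  have sum_eq : ∑ j, s' j = ∑ j, s (σ j) := by
    rw [Equiv.sum_comp σ s]
    simpa using Fintype.card_congr φ.toEquiv
  exact funext fun j => (Finset.sum_eq_sum_iff_of_le fun j _ => le j).1 sum_eq j (mem_univ j)

lemma exists_reframe_eq (hs' : ∀ j, 0 < s' j) (φ : pathUnion s' ≃g pathUnion s) :
    ∃ (σ : Equiv.Perm (Fin m)) (b : Fin m → Bool),
      (⟨s ∘ σ, reframe s σ b⟩ : Σ t : Fin m → ℕ, pathUnion t ≃g pathUnion s) = ⟨s', φ⟩ := by
  obtain ⟨σ, hσ⟩ := exists_perm_fst_eq hs' φ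
  obtain rfl := eq_comp_of_fst_eq hσ
  have traverse (j : Fin m) := exists_eq_iterate_orient Nat.succ_injective (hs' j)
    (val_snd_injective_of_fst_eq hσ j) fun i i' h =>
      ((φ.map_adj_iff (v := ⟨j, i⟩) (w := ⟨j, i'⟩)).2 ⟨rfl, .inl h⟩).2.imp Eq.symm Eq.symm
  choose b a snd_eq using traverse
  simp only [Nat.succ_iterate] at snd_eq
  have start_eq_zero (j : Fin m) : a j = 0 := by
    obtain ⟨i, hi⟩ := (orient (b j)).surjective ⟨s (σ j) - 1, Nat.sub_lt (hs' j) one_pos⟩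
    have snd_last := snd_eq j i
    have snd_lt := (φ ⟨j, i⟩).2.2.trans_eq (congrArg s (hσ ⟨j, i⟩))
    rw [hi] at snd_last
    grind
  refine ⟨σ, b, congrArg _ (RelIso.ext ?_)⟩
  rintro ⟨j, i⟩
  refine (Sigma.ext (hσ ⟨j, i⟩) ((Fin.heq_ext_iff (congrArg s (hσ ⟨j, i⟩))).2 ?_)).symm
  rw [snd_eq, start_eq_zero, zero_add]
  rfl

end Reframe

section Framing

variable {m n : ℕ}

/-- A framing of `S`: a numbering and a direction for each of its `m` path components, given as an
isomorphism with a disjoint union of paths. -/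
abbrev Framing (m : ℕ) (S : SimpleGraph (Fin n)) : Type :=
  Σ s : pathSizes m n, pathUnion s.1 ≃g S

lemma comp_perm_mem_pathSizes {s : Fin m → ℕ} (hs : s ∈ pathSizes m n) (σ : Equiv.Perm (Fin m)) :
    s ∘ σ ∈ pathSizes m n := by
  rw [mem_pathSizes] at hs ⊢
  exact ⟨fun i => hs.1 _, (Equiv.sum_comp σ s).trans hs.2⟩

lemma card_framing {S : SimpleGraph (Fin n)} (hS : PathsGraph S m) :
    Nat.card (Framing m S) = m.factorial * 2 ^ m := by
  obtain ⟨s, hs, ⟨e⟩⟩ := exists_iso_of_pathsGraph hS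
  let f (p : Equiv.Perm (Fin m) × (Fin m → Bool)) : Framing m S :=
    ⟨⟨s ∘ p.1, comp_perm_mem_pathSizes hs p.1⟩, (reframe s p.1 p.2).trans e⟩
  have two_le := (mem_pathSizes.1 hs).1
  have f_injective : Function.Injective f := by
    let start (x : Framing m S) (j : Fin m) : Fin n :=
      x.2 ⟨j, ⟨0, two_pos.trans_le ((mem_pathSizes.1 x.1.2).1 j)⟩⟩
    rintro ⟨σ, b⟩ ⟨σ', b'⟩ h
    have start_eq (j : Fin m) := e.injective (congrFun (congrArg start h) j)
    obtain rfl : σ = σ' := Equiv.ext fun j => congrArg Sigma.fst (start_eq j)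
    exact Prod.ext rfl <| funext fun j =>
      orient_zero_injective (two_le (σ j)) (sigma_mk_injective (i := σ j) (start_eq j))
  have f_surjective : Function.Surjective f := by
    rintro ⟨⟨s', hs'⟩, e'⟩
    obtain ⟨σ, b, h⟩ := exists_reframe_eq
      (fun j => two_pos.trans_le ((mem_pathSizes.1 hs').1 j)) (e'.trans e.symm)
    obtain ⟨rfl, h⟩ := Sigma.mk.inj_iff.1 h
    refine ⟨(σ, b), ?_⟩
    simp only [f, eq_of_heq h]
    congr 1
    ext x
    simp
  rw [← Nat.card_eq_of_bijective f ⟨f_injective, f_surjective⟩]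
  simp [Fintype.card_perm]

/-- A labelling of a disjoint union of paths by the vertices of `S` is the same thing as a graph
together with a framing. -/
def framingEquiv : (Σ S : {S : SimpleGraph (Fin n) // PathsGraph S m}, Framing m S.1) ≃
    Σ s : pathSizes m n, (Σ j, Fin (s.1 j)) ≃ Fin n where
  toFun x := ⟨x.2.1, x.2.2.toEquiv⟩
  invFun y := ⟨⟨(pathUnion y.1.1).map y.2, pathsGraph_of_iso (mem_pathSizes.1 y.1.2).1
    (SimpleGraph.Iso.map y.2 _)⟩, y.1, SimpleGraph.Iso.map y.2 _⟩
  left_inv := by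
    rintro ⟨⟨S, hS⟩, s, ⟨e, he⟩⟩
    obtain rfl : S = (pathUnion s.1).map e := by
      ext u v
      obtain ⟨x, rfl⟩ := e.surjective u
      obtain ⟨y, rfl⟩ := e.surjective v
      exact he.trans (SimpleGraph.Iso.map e (pathUnion s.1)).map_adj_iff.symm
    rfl
  right_inv _ := rfl

end Framing

section DoubleCounting

variable {m n k : ℕ}

instance {s : Fin m → ℕ} {S : SimpleGraph (Fin n)} : Finite (pathUnion s ≃g S) :=
  DFunLike.finite _

open Classical in
noncomputable instance {S : SimpleGraph (Fin n)} : Fintype (Framing m S) :=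
  Fintype.ofFinite _

lemma card_labelling {s : Fin m → ℕ} (hs : s ∈ pathSizes m n) :
    Fintype.card ((Σ j, Fin (s j)) ≃ Fin n) = n.factorial := by
  have e : (Σ j, Fin (s j)) ≃ Fin n :=
    Fintype.equivFinOfCardEq (by simpa using (mem_pathSizes.1 hs).2)
  rw [Fintype.card_equiv e, Fintype.card_congr e, Fintype.card_fin]

open Classical in
lemma sum_sum_framing (f : (Fin m → ℕ) → ℝ) :
    ∑ S : {S : SimpleGraph (Fin n) // PathsGraph S m}, ∑ x : Framing m S.1, f x.1 =
      n.factorial * ∑ s ∈ pathSizes m n, f s := by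
  calc ∑ S : {S : SimpleGraph (Fin n) // PathsGraph S m}, ∑ x : Framing m S.1, f x.1
      = ∑ y : Σ s : pathSizes m n, (Σ j, Fin (s.1 j)) ≃ Fin n, f y.1 := by
        rw [← Fintype.sum_sigma']
        exact framingEquiv.sum_comp fun y => f y.1.1
    _ = ∑ s : pathSizes m n, n.factorial * f s := by
        rw [Fintype.sum_sigma]
        refine sum_congr rfl fun s _ => ?_
        rw [← card_labelling s.2, ← nsmul_eq_mul, ← card_univ, ← sum_const]
    _ = n.factorial * ∑ s ∈ pathSizes m n, f s := by
        rw [← mul_sum, sum_coe_sort (pathSizes m n) f]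

open Classical in
lemma sum_framing_const {S : SimpleGraph (Fin n)} (hS : PathsGraph S m) (c : ℝ) :
    ∑ _x : Framing m S, c = m.factorial * 2 ^ m * c := by
  rw [sum_const, card_univ, ← Nat.card_eq_fintype_card, card_framing hS, nsmul_eq_mul]
  push_cast
  rfl

lemma tsum_sq_NS_le (hk : 0 < k) (hr : 0 < n / k) {A : ℝ}
    (h : ∑ s ∈ pathSizes m n with ∀ i, s i ≤ k, mixedDeriv s (cyclePoly k ^ (n / k)) ^ 2 ≤
      A * (m.factorial : ℝ) ^ 2 * #(pathSizes m n)) :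
    ∑' S : {G : SimpleGraph (Fin n) // PathsGraph G m}, (NS k S.1 : ℝ) ^ 2 ≤
      A * ((m.factorial : ℝ) * 2 ^ m) ^ 2 *
        (Nat.card {G : SimpleGraph (Fin n) // PathsGraph G m} : ℝ) := by
  classical
  have : NeZero k := ⟨hk.ne'⟩
  have card_eq : (n.factorial : ℝ) * #(pathSizes m n) =
      m.factorial * 2 ^ m * Nat.card {G : SimpleGraph (Fin n) // PathsGraph G m} := by
    have := sum_sum_framing (m := m) (n := n) fun _ => 1
    simp_rw [fun S : {G : SimpleGraph (Fin n) // PathsGraph G m} => sum_framing_const S.2 1] at this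
    simpa [mul_comm] using this.symm
  rw [tsum_fintype]
  refine le_of_mul_le_mul_left ?_ (by positivity : (0 : ℝ) < m.factorial * 2 ^ m)
  calc m.factorial * 2 ^ m * ∑ S : {G : SimpleGraph (Fin n) // PathsGraph G m}, (NS k S.1 : ℝ) ^ 2
      = ∑ S : {G : SimpleGraph (Fin n) // PathsGraph G m}, ∑ _x : Framing m S.1,
          (NS k S.1 : ℝ) ^ 2 := by
        rw [mul_sum]
        exact sum_congr rfl fun S _ => (sum_framing_const S.2 _).symm
    _ ≤ ∑ S : {G : SimpleGraph (Fin n) // PathsGraph G m}, ∑ x : Framing m S.1, (2 ^ m) ^ 2 *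
          if ∀ j, x.1.1 j ≤ k then mixedDeriv x.1.1 (cyclePoly k ^ (n / k)) ^ 2 else 0 :=
        sum_le_sum fun S _ => sum_le_sum fun x _ => sq_NS_le hr (mem_pathSizes.1 x.1.2).1 x.2
    _ = n.factorial * ((2 ^ m) ^ 2 * ∑ s ∈ pathSizes m n with ∀ i, s i ≤ k,
          mixedDeriv s (cyclePoly k ^ (n / k)) ^ 2) := by
        rw [sum_sum_framing fun s => (2 ^ m) ^ 2 *
          if ∀ j, s j ≤ k then mixedDeriv s (cyclePoly k ^ (n / k)) ^ 2 else 0,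
          ← mul_sum, ← sum_filter]
    _ ≤ n.factorial * ((2 ^ m) ^ 2 * (A * (m.factorial : ℝ) ^ 2 * #(pathSizes m n))) := by gcongr
    _ = m.factorial * 2 ^ m * (A * ((m.factorial : ℝ) * 2 ^ m) ^ 2 *
          Nat.card {G : SimpleGraph (Fin n) // PathsGraph G m}) := by
        linear_combination (A * (m.factorial * 2 ^ m : ℝ) ^ 2) * card_eq

end DoubleCounting

lemma eventually_log_rpow_le {γ : ℝ} (hγ : 0 < γ) :
    ∀ᶠ n : ℕ in Filter.atTop, Real.log n ^ (-(1 : ℝ) / 3) ≤ γ := by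
  have rate_tendsto := ((tendsto_rpow_neg_atTop (show (0 : ℝ) < 1 / 3 by norm_num)).comp
    Real.tendsto_log_atTop).comp (tendsto_natCast_atTop_atTop (R := ℝ))
  filter_upwards [rate_tendsto.eventually_le_const hγ] with n hn
  rwa [neg_div]

end PathHosting

theorem stmt13_general {ε ε' : ℝ} (hε : 0 < ε) (hε' : 0 < ε') :
    ∃ γ > 0, ∀ᶠ n : ℕ in Filter.atTop, ∀ k : ℕ, k ∣ n → (2 + ε) * Real.logb 2 n ≤ (k : ℝ) →
      ∀ m : ℕ, |(m : ℝ) / n - 1 / 3| ≤ γ →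
        ∑' S : {G : SimpleGraph (Fin n) // PathsGraph G m}, (NS k S.1 : ℝ) ^ 2 ≤
          (9 + ε') * ((m.factorial : ℝ) * 2 ^ m) ^ 2 *
            (Nat.card {G : SimpleGraph (Fin n) // PathsGraph G m} : ℝ) := by
  obtain ⟨γ, γ_pos, hγ⟩ := PathHosting.exists_eventually_sum_sq_mixedDeriv_cyclePoly_le hε hε'
  refine ⟨γ, γ_pos, ?_⟩
  filter_upwards [Filter.eventually_ge_atTop 1, hγ] with n n_pos sum_le k hk hlog m hm
  have k_pos : 0 < k := Nat.pos_of_dvd_of_pos hk n_pos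
  have r_pos : 0 < n / k := Nat.div_pos (Nat.le_of_dvd n_pos hk) k_pos
  exact PathHosting.tsum_sq_NS_le k_pos r_pos (sum_le k hk hlog m hm)

/-- For every `ε, ε′ > 0` and all sufficiently large `n`: for every divisor
`k ≥ (2+ε)·log₂ n` of `n` and every `m` with `|m/n − 1/3| ≤ (log n)^{−1/3}`,
`Σ_{S ∈ I_{0,m}} N(S)² ≤ (9+ε′)·(m!·2^m)²·|I_{0,m}|`. -/
theorem stmt13 (ε ε' : ℝ) (hε : 0 < ε) (hε' : 0 < ε') :
    ∃ N : ℕ, ∀ n : ℕ, N ≤ n → ∀ k : ℕ, k ∣ n → (2 + ε) * Real.logb 2 n ≤ (k : ℝ) →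
      ∀ m : ℕ, |(m : ℝ) / n - 1 / 3| ≤ (Real.log n) ^ (-(1 : ℝ) / 3) →
        ∑' S : {G : SimpleGraph (Fin n) // PathsGraph G m}, (NS k S.1 : ℝ) ^ 2 ≤
          (9 + ε') * ((m.factorial : ℝ) * 2 ^ m) ^ 2 *
            (Nat.card {G : SimpleGraph (Fin n) // PathsGraph G m} : ℝ) := by
  obtain ⟨γ, γ_pos, hγ⟩ := stmt13_general hε hε'
  exact Filter.eventually_atTop.1 <| (hγ.and (PathHosting.eventually_log_rpow_le γ_pos)).mono
    fun n hn k hk hlog m hm => hn.1 k hk hlog m (hm.trans hn.2)
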